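/- arXiv:1609.06970 — 2 statements merged into one kernel-verified Lean document; each statement's English description precedes it below -/
import Mathlib

section
/- Let Θ be an index set and, for each θ ∈ Θ, let ψ_{θ,0}, ψ_θ ∈ 𝒮(ℝⁿ), where each ψ_θ satisfies the moment condition of order M_ψ ≥ −1 (the same for all θ). Let φ_0, φ ∈ 𝒮(ℝⁿ) satisfy the Tauberian conditions for some ε′ > 0. Let 0 < p_i < ∞ (i=1,…,n), 0 < q ≤ ∞, and s < (M_ψ+1)·a_0. Let r = (r_1,…,r_n) with r_l > 0 and let M ≥ −1 be an integer with (M+1)a_0 + s > 2(a_1r_1+…+a_nr_n). Assume the four quantities A := sup_θ max{‖D^α 𝓕ψ_θ‖_{L_∞} : |α| ≤ M_ψ+1 or α ≤ ⌈r+2⌉}, B := sup_θ max{‖(1+|ξ|)^{M+1} D^γ 𝓕ψ_θ(ξ)‖_{L_1} : γ ≤ ⌈r+2⌉}, C := sup_θ max{‖D^α 𝓕ψ_{θ,0}‖_{L_∞} : |α| ≤ M_ψ+1 or α ≤ ⌈r+2⌉}, D := sup_θ max{‖(1+|ξ|)^{M+1} D^γ 𝓕ψ_{θ,0}(ξ)‖_{L_1}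 : γ ≤ ⌈r+2⌉} are all finite. Then there is a constant c > 0 (depending only on M, M_ψ, r, s, p̄, q, φ_0, φ, ε′, a, n) such that for every f ∈ 𝒮′(ℝⁿ): ‖(2^{sj}·sup_{θ∈Θ} ψ_{θ,j}^* f)_{j≥0} | L_{p̄}(ℓ_q)‖ ≤ c·(A+B+C+D)·‖(2^{sj} φ_j^* f)_{j≥0} | L_{p̄}(ℓ_q)‖, where both maximal functions are formed with the same r. -/
open MeasureTheory Complex
open scoped ENNReal NNReal BigOperators

noncomputable section

/-- Points of `ℝⁿ`, written `x = (x 0, …, x (n-1))`. -/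
abbrev RV (n : ℕ) := Fin n → ℝ

/-- Tempered distributions `𝒮′(ℝⁿ)`. -/
abbrev TD (n : ℕ) := SchwartzMap (RV n) ℂ →L[ℂ] ℂ

/-- The Fourier transform `𝓕g(ξ) = ∫ e^{-i x·ξ} g(x) dx`. -/
def FT (n : ℕ) (g : RV n → ℂ) (ξ : RV n) : ℂ :=
  ∫ x : RV n, Complex.exp (-Complex.I * ((∑ i, x i * ξ i : ℝ) : ℂ)) * g x

/-- The partial derivative `∂_i`. -/
def pderiv1 (n : ℕ) (i : Fin n) (g : RV n → ℂ) : RV n → ℂ :=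
  fun x => fderiv ℝ g x (Pi.single i 1)

def pderivIter (n : ℕ) (i : Fin n) : ℕ → (RV n → ℂ) → RV n → ℂ
  | 0, g => g
  | k + 1, g => pderiv1 n i (pderivIter n i k g)

/-- `D^α = (-i ∂_1)^{α_1} ⋯ (-i ∂_n)^{α_n}`. -/
def Dop (n : ℕ) (α : Fin n → ℕ) (g : RV n → ℂ) : RV n → ℂ :=
  fun x => (-Complex.I) ^ (∑ i, α i) *
    ((List.finRange n).foldr (fun i h => pderivIter n i (α i) h) g) x

/-- `anorm` is the anisotropic distance function `|·|_a` :
`anorm 0 = 0`, and for `x ≠ 0`, `anorm x` is the (unique) `t > 0` with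
`x 1 ^ 2 / t ^ (2 a 1) + … + x n ^ 2 / t ^ (2 a n) = 1`. -/
def IsAnorm (n : ℕ) (a : Fin n → ℝ) (anorm : RV n → ℝ) : Prop :=
  anorm 0 = 0 ∧
    ∀ x : RV n, x ≠ 0 → 0 < anorm x ∧ ∑ i, (x i : ℝ) ^ 2 / (anorm x) ^ (2 * a i) = 1

/-- Moment condition of order `M` : `D^α (𝓕ψ)(0) = 0` for all `|α| ≤ M` (void for `M = -1`). -/
def MomentCond (n : ℕ) (M : ℤ) (ψ : RV n → ℂ) : Prop :=
  ∀ α : Fin n → ℕ, (∑ i, (α i : ℤ)) ≤ M → Dop n α (FT n ψ) 0 = 0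

/-- Tauberian conditions for `ε > 0` for the pair `(ψ0, ψ)`. -/
def Tauber (n : ℕ) (anorm : RV n → ℝ) (ψ0 ψ : RV n → ℂ) (ε : ℝ) : Prop :=
  (∀ ξ, anorm ξ < 2 * ε → 0 < ‖FT n ψ0 ξ‖) ∧
    (∀ ξ, ε / 2 < anorm ξ → anorm ξ < 2 * ε → 0 < ‖FT n ψ ξ‖)

/-- The family `φ_j`, `φ_0` at `j = 0` and `φ_j(x) = 2^{j|a|} φ(2^{ja}x)` for `j ≥ 1`. -/
def fam (n : ℕ) (a : Fin n → ℝ) (φ0 φ : RV n → ℂ) : ℕ → RV n → ℂ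
  | 0 => φ0
  | j + 1 => fun x =>
      (((2 : ℝ) ^ (((j : ℝ) + 1) * ∑ i, a i) : ℝ) : ℂ) *
        φ (fun i => (2 : ℝ) ^ (((j : ℝ) + 1) * a i) * x i)

/-- Peetre–Fefferman–Stein maximal function attached to the function `F` (intended: `F = ψ_j * f`). -/
def pfs (n : ℕ) (a r : Fin n → ℝ) (F : RV n → ℂ) (j : ℕ) (x : RV n) : ℝ≥0∞ :=
  ⨆ y : RV n,
    ENNReal.ofReal (‖F y‖ / ∏ l, (1 + (2 : ℝ) ^ ((j : ℝ) * a l) * |x l - y l|) ^ (r l))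

/-- Iterated-integral construction of the mixed Lebesgue norm : integrate out the
coordinates one at a time, first `x 0`, last `x (n-1)`. -/
def mixAux (n : ℕ) (p : Fin n → ℝ≥0∞) : ℕ → ((RV n) → ℝ≥0∞) → (RV n) → ℝ≥0∞
  | 0, F => F
  | l + 1, F => fun x =>
      if h : l < n then
        (if p ⟨l, h⟩ = ∞ then
          essSup (fun t : ℝ => mixAux n p l F (Function.update x ⟨l, h⟩ t)) volume
        else
          (∫⁻ t : ℝ, (mixAux n p l F (Function.update x ⟨l, h⟩ t)) ^ (p ⟨l, h⟩).toReal) ^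
            (1 / (p ⟨l, h⟩).toReal))
      else mixAux n p l F x

/-- The mixed Lebesgue quasi-norm `‖F | L_{p̄}‖` of an extended-nonnegative-valued `F`. -/
def mixedNorm (n : ℕ) (p : Fin n → ℝ≥0∞) (F : RV n → ℝ≥0∞) : ℝ≥0∞ :=
  mixAux n p n F fun _ => 0

/-- `‖(u_k) | L_{p̄}(ℓ_q)‖`. -/
def seqNorm (n : ℕ) (p : Fin n → ℝ≥0∞) (q : ℝ≥0∞) (u : ℕ → RV n → ℝ≥0∞) : ℝ≥0∞ :=
  mixedNorm n p fun x =>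
    if q = ∞ then ⨆ k, u k x else (∑' k, u k x ^ q.toReal) ^ (1 / q.toReal)

/-- Convolution of (Schwartz) functions. -/
def conv2 (n : ℕ) (f g : RV n → ℂ) (x : RV n) : ℂ := ∫ y : RV n, f y * g (x - y)

/-- Schwartz seminorm `p_{α,β}(φ) = sup_x |x^α D^β φ(x)|`, valued in `[0,∞]`. -/
def pSemiE (n : ℕ) (α β : Fin n → ℕ) (g : RV n → ℂ) : ℝ≥0∞ :=
  ⨆ x : RV n, (‖((∏ i, x i ^ α i : ℝ) : ℂ) * Dop n β g x‖₊ : ℝ≥0∞)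

/-- Schwartz seminorm `q_{N,γ}(φ) = ∫ (1+|x|²)^{N/2} |D^γ φ(x)| dx`, valued in `[0,∞]`. -/
def qSemiE (n : ℕ) (N : ℝ) (γ : Fin n → ℕ) (g : RV n → ℂ) : ℝ≥0∞ :=
  ∫⁻ x : RV n, ENNReal.ofReal ((1 + ∑ i, (x i) ^ 2) ^ (N / 2)) * (‖Dop n γ g x‖₊ : ℝ≥0∞)

/-- Iterated Laplacian `Δ^N`. -/
def lapIter (n : ℕ) : ℕ → (RV n → ℂ) → RV n → ℂ
  | 0, g => g
  | N + 1, g => fun x => ∑ i, pderiv1 n i (pderiv1 n i (lapIter n N g)) x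

/-- The box `B_{R,j} = {ξ : |ξ_k| ≤ R 2^{j a_k}}`. -/
def specBox (n : ℕ) (a : Fin n → ℝ) (R : ℝ) (j : ℕ) : Set (RV n) :=
  {ξ | ∀ k, |ξ k| ≤ R * (2 : ℝ) ^ ((j : ℝ) * a k)}

/-- The spectral condition `supp 𝓕u ⊆ B_{R,j}` for a temperate-growth function `u`. -/
def SpecCond (n : ℕ) (a : Fin n → ℝ) (R : ℝ) (j : ℕ) (u : RV n → ℂ) : Prop :=
  ∀ φ : SchwartzMap (RV n) ℂ,
    tsupport (⇑φ) ∩ specBox n a R j = ∅ → (∫ x : RV n, u x * FT n (⇑φ) x) = 0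

/-- The maximal function `u^*` of Section 3. -/
def ustar (n : ℕ) (a r : Fin n → ℝ) (R : ℝ) (j : ℕ) (u : RV n → ℂ) (x : RV n) : ℝ≥0∞ :=
  ⨆ y : RV n,
    ENNReal.ofReal (‖u y‖ / ∏ l, (1 + R * (2 : ℝ) ^ ((j : ℝ) * a l) * |x l - y l|) ^ (r l))



abbrev SS (n : ℕ) := SchwartzMap (RV n) ℂ

abbrev EU (n : ℕ) := EuclideanSpace ℝ (Fin n)

def eqv (n : ℕ) : EU n ≃L[ℝ] RV n := EuclideanSpace.equiv (Fin n) ℝ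

def eqs (n : ℕ) : RV n ≃L[ℝ] EU n :=
  (ContinuousLinearEquiv.smulLeft (Units.mk0 ((2 * Real.pi)⁻¹ : ℝ) (by positivity))).trans
    (eqv n).symm

open FourierTransform LineDeriv

def FS (n : ℕ) : SS n →L[ℂ] SS n :=
  (SchwartzMap.compCLMOfContinuousLinearEquiv ℂ (eqs n)).comp
    ((fourierCLM ℂ (SchwartzMap (EU n) ℂ)).comp
      (SchwartzMap.compCLMOfContinuousLinearEquiv ℂ (eqv n)))

def FI (n : ℕ) : SS n →L[ℂ] SS n :=
  (SchwartzMap.compCLMOfContinuousLinearEquiv ℂ (eqv n).symm).comp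
    ((fourierInvCLM ℂ (SchwartzMap (EU n) ℂ)).comp
      (SchwartzMap.compCLMOfContinuousLinearEquiv ℂ (eqs n).symm))

theorem FS_FI (n : ℕ) (g : SS n) : FS n (FI n g) = g := by
  ext x
  simp only [FS, FI, ContinuousLinearMap.comp_apply, fourierCLM_apply, fourierInvCLM_apply,
    SchwartzMap.compCLMOfContinuousLinearEquiv_apply, Function.comp]
  have : (SchwartzMap.compCLMOfContinuousLinearEquiv ℂ (eqv n))
      ((SchwartzMap.compCLMOfContinuousLinearEquiv ℂ (eqv n).symm)
        (𝓕⁻ ((SchwartzMap.compCLMOfContinuousLinearEquiv ℂ (eqs n).symm) g))) =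
      𝓕⁻ ((SchwartzMap.compCLMOfContinuousLinearEquiv ℂ (eqs n).symm) g) := by
    ext y
    simp [SchwartzMap.compCLMOfContinuousLinearEquiv_apply]
  rw [this]
  simp [SchwartzMap.compCLMOfContinuousLinearEquiv_apply]

theorem FI_FS (n : ℕ) (g : SS n) : FI n (FS n g) = g := by
  ext x
  simp only [FS, FI, ContinuousLinearMap.comp_apply, fourierCLM_apply, fourierInvCLM_apply,
    SchwartzMap.compCLMOfContinuousLinearEquiv_apply, Function.comp]
  have : (SchwartzMap.compCLMOfContinuousLinearEquiv ℂ (eqs n).symm)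
      ((SchwartzMap.compCLMOfContinuousLinearEquiv ℂ (eqs n))
        (𝓕 ((SchwartzMap.compCLMOfContinuousLinearEquiv ℂ (eqv n)) g))) =
      𝓕 ((SchwartzMap.compCLMOfContinuousLinearEquiv ℂ (eqv n)) g) := by
    ext y
    simp [SchwartzMap.compCLMOfContinuousLinearEquiv_apply]
  rw [this]
  simp [SchwartzMap.compCLMOfContinuousLinearEquiv_apply]

theorem eqv_mp (n : ℕ) : MeasurePreserving (eqv n) volume volume :=
  PiLp.volume_preserving_ofLp (Fin n)

theorem eqs_apply (n : ℕ) (ξ : RV n) (i : Fin n) : eqs n ξ i = (2 * Real.pi)⁻¹ * ξ i := by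
  rfl

theorem FS_apply (n : ℕ) (g : SS n) (ξ : RV n) : FS n g ξ = FT n g ξ := by
  simp only [FS, ContinuousLinearMap.comp_apply, fourierCLM_apply,
    SchwartzMap.compCLMOfContinuousLinearEquiv_apply, Function.comp, SchwartzMap.fourier_coe]
  rw [Real.fourier_eq']
  rw [FT, ← (eqv_mp n).integral_comp (eqv n).toHomeomorph.measurableEmbedding]
  refine integral_congr_ae (Filter.Eventually.of_forall fun x => ?_)
  simp only [Function.comp, smul_eq_mul]
  congr 2
  rw [PiLp.inner_apply]
  simp only [eqs_apply, eqv, EuclideanSpace.equiv]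
  have : (∑ i, inner ℝ (x.ofLp i) ((2 * Real.pi)⁻¹ * ξ i)) =
      (2 * Real.pi)⁻¹ * ∑ i, x.ofLp i * ξ i := by
    rw [Finset.mul_sum]; refine Finset.sum_congr rfl fun i _ => ?_
    simp; ring
  rw [this]
  have hpi : (Real.pi : ℂ) ≠ 0 := by exact_mod_cast Real.pi_ne_zero
  push_cast
  simp only [PiLp.coe_continuousLinearEquiv]
  field_simp

def ei (n : ℕ) (i : Fin n) : RV n := Pi.single i 1

theorem FI_deriv (n : ℕ) (i : Fin n) (H : SS n) (x : RV n) :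
    FI n (∂_{ei n i} H) x = -Complex.I * x i * FI n H x := by
  simp only [FI, ContinuousLinearMap.comp_apply, fourierInvCLM_apply,
    SchwartzMap.compCLMOfContinuousLinearEquiv_apply, Function.comp]
  have h1 : (SchwartzMap.compCLMOfContinuousLinearEquiv ℂ (eqs n).symm) (∂_{ei n i} H) =
     ∂_{eqs n (ei n i)} ((SchwartzMap.compCLMOfContinuousLinearEquiv ℂ (eqs n).symm) H) := by
    rw [SchwartzMap.lineDerivOp_compCLMOfContinuousLinearEquiv]
    simp
  rw [h1, SchwartzMap.fourierInv_lineDerivOp_eq]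
  have : (inner ℝ · (eqs n (ei n i)) : EU n → ℝ).HasTemperateGrowth := by fun_prop
  simp only [_root_.smul_apply, SchwartzMap.smulLeftCLM_apply_apply this]
  have h2 : inner ℝ ((eqv n).symm x) (eqs n (ei n i)) = (2 * Real.pi)⁻¹ * x i := by
    rw [PiLp.inner_apply]
    simp only [eqs_apply, ei]
    rw [Finset.sum_eq_single i]
    · simp [eqv]
    · intro b _ hb; simp [hb]
    · simp
  rw [h2]
  have hpi : (Real.pi : ℂ) ≠ 0 := by exact_mod_cast Real.pi_ne_zero
  simp only [smul_eq_mul, real_smul]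
  push_cast
  field_simp

def mulS (n : ℕ) (G H : SS n) : SS n := SchwartzMap.pairing (ContinuousLinearMap.mul ℂ ℂ) G H

theorem mulS_apply (n : ℕ) (G H : SS n) (x : RV n) : mulS n G H x = G x * H x := by
  simp [mulS]

/-- convolution -/
theorem FI_mulS (n : ℕ) (K g : SS n) (x : RV n) :
    FI n (mulS n (FS n K) (FS n g)) x = ∫ z, K z * g (x - z) := by
  simp only [FI, ContinuousLinearMap.comp_apply, fourierInvCLM_apply,
    SchwartzMap.compCLMOfContinuousLinearEquiv_apply, Function.comp]
  have h1 : 𝓕⁻ ((SchwartzMap.compCLMOfContinuousLinearEquiv ℂ (eqs n).symm)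
        (mulS n (FS n K) (FS n g))) =
      SchwartzMap.convolution (ContinuousLinearMap.mul ℂ ℂ)
        ((SchwartzMap.compCLMOfContinuousLinearEquiv ℂ (eqv n)) K)
        ((SchwartzMap.compCLMOfContinuousLinearEquiv ℂ (eqv n)) g) := by
    rw [SchwartzMap.convolution]
    simp only [LinearMap.coe_mk, AddHom.coe_mk, ContinuousLinearMap.comp_apply, fourierCLM_apply,
      fourierInvCLM_apply]
    congr 1
    ext y
    simp [SchwartzMap.compCLMOfContinuousLinearEquiv_apply, mulS_apply, FS]
  rw [h1, SchwartzMap.convolution_apply, convolution_def]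
  rw [← (eqv_mp n).integral_comp (eqv n).toHomeomorph.measurableEmbedding]
  simp [SchwartzMap.compCLMOfContinuousLinearEquiv_apply]

theorem FI_bound (n : ℕ) : ∃ c : ℝ≥0, ∀ (H : SS n) (x : RV n),
    (‖FI n H x‖₊ : ℝ≥0∞) ≤ c * ∫⁻ ξ, (‖H ξ‖₊ : ℝ≥0∞) := by
  -- H = FS (FI H)
  let c0 : ℝ≥0 := Real.toNNReal |(LinearMap.det (((2*Real.pi) : ℝ) • (LinearMap.id : RV n →ₗ[ℝ] RV n)))⁻¹|
  refine ⟨c0, fun H x => ?_⟩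
  simp only [FI, ContinuousLinearMap.comp_apply, fourierInvCLM_apply,
    SchwartzMap.compCLMOfContinuousLinearEquiv_apply, Function.comp, SchwartzMap.fourierInv_coe]
  rw [Real.fourierInv_eq]
  refine (enorm_integral_le_lintegral_enorm _).trans ?_
  have h0 : ∀ (c : Circle) (z : ℂ), ‖c • z‖ₑ = ‖z‖ₑ := by
    intro c z
    rw [← ofReal_norm, ← ofReal_norm, Circle.norm_smul]
  simp only [h0]
  have h1 := (eqv_mp n).symm (eqv n).toHomeomorph.toMeasurableEquiv
  rw [← h1.lintegral_comp_emb
    ((eqv n).toHomeomorph.toMeasurableEquiv.symm.measurableEmbedding)]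
  have h2 : ∀ a : RV n, (⇑H ∘ ⇑(eqs n).symm)
      ((eqv n).toHomeomorph.toMeasurableEquiv.symm a) = H (((2*Real.pi) : ℝ) • a) := by
    intro a
    simp only [Function.comp]
    congr 1
    rw [ContinuousLinearEquiv.symm_apply_eq]
    change (eqv n).symm a = _
    ext i
    rw [eqs_apply]
    have : (2 * Real.pi) ≠ 0 := by positivity
    simp [eqv]
    field_simp
  simp only [h2]
  have h3 := MeasureTheory.Measure.map_linearMap_addHaar_eq_smul_addHaar
    (volume : Measure (RV n)) (f := (((2*Real.pi) : ℝ) • (LinearMap.id : RV n →ₗ[ℝ] RV n))) (by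
      simp [LinearMap.det_smul])
  have hm : Measurable (fun ξ => ‖H ξ‖ₑ) := (H.continuous.enorm).measurable
  calc ∫⁻ a, ‖H (((2*Real.pi) : ℝ) • a)‖ₑ = ∫⁻ ξ, ‖H ξ‖ₑ ∂(Measure.map (((2*Real.pi) : ℝ) • (LinearMap.id : RV n →ₗ[ℝ] RV n)) volume) := by
        rw [lintegral_map hm]
        · rfl
        · exact (LinearMap.continuous_of_finiteDimensional _).measurable
    _ ≤ _ := by
        rw [h3, lintegral_smul_measure]
        exact le_refl _


open LineDeriv

def dilE (n : ℕ) (a : Fin n → ℝ) (u : ℝ) : RV n ≃L[ℝ] RV n :=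
  ContinuousLinearEquiv.piCongrRight (fun i =>
    ContinuousLinearEquiv.smulLeft (Units.mk0 ((2 : ℝ) ^ (u * a i)) (by positivity)))

theorem dilE_apply (n : ℕ) (a : Fin n → ℝ) (u : ℝ) (x : RV n) :
    dilE n a u x = fun i => (2 : ℝ) ^ (u * a i) * x i := rfl

def dil (n : ℕ) (a : Fin n → ℝ) (u : ℝ) : SS n →L[ℂ] SS n :=
  SchwartzMap.compCLMOfContinuousLinearEquiv ℂ (dilE n a u)

theorem dil_apply (n : ℕ) (a : Fin n → ℝ) (u : ℝ) (g : SS n) (x : RV n) :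
    dil n a u g x = g (fun i => (2 : ℝ) ^ (u * a i) * x i) := rfl

theorem dil_dil (n : ℕ) (a : Fin n → ℝ) (u v : ℝ) (g : SS n) :
    dil n a u (dil n a v g) = dil n a (u + v) g := by
  ext x
  simp only [dil_apply]
  congr 1
  ext i
  rw [← mul_assoc, ← Real.rpow_add (by norm_num)]
  ring_nf

theorem dil_zero (n : ℕ) (a : Fin n → ℝ) (g : SS n) : dil n a 0 g = g := by
  ext x
  simp [dil_apply]

theorem dil_mulS (n : ℕ) (a : Fin n → ℝ) (u : ℝ) (g h : SS n) :
    dil n a u (mulS n g h) = mulS n (dil n a u g) (dil n a u h) := by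
  ext x
  simp only [dil_apply, mulS_apply]

theorem map_dilE (n : ℕ) (a : Fin n → ℝ) (u : ℝ) :
    ENNReal.ofReal ((2 : ℝ) ^ (u * ∑ i, a i)) • Measure.map (dilE n a u) volume =
      (volume : Measure (RV n)) := by
  have h := Real.smul_map_diagonal_volume_pi (ι := Fin n) (D := fun i => (2 : ℝ) ^ (u * a i))
    (by
      rw [Matrix.det_diagonal]
      exact Finset.prod_ne_zero_iff.mpr fun i _ => by positivity)
  rw [Matrix.det_diagonal] at h
  have h2 : |∏ i, (2 : ℝ) ^ (u * a i)| = (2 : ℝ) ^ (u * ∑ i, a i) := by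
    rw [abs_of_nonneg (Finset.prod_nonneg fun i _ => by positivity), Finset.mul_sum,
      Real.rpow_sum_of_pos (by norm_num)]
  rw [h2] at h
  have h3 : (⇑(Matrix.toLin' (Matrix.diagonal fun i => (2 : ℝ) ^ (u * a i))) : RV n → RV n) =
      dilE n a u := by
    ext x i
    simp [dilE_apply, Matrix.mulVec_diagonal]
  rw [h3] at h
  exact h

theorem lintegral_dil (n : ℕ) (a : Fin n → ℝ) (u : ℝ) (F : RV n → ℝ≥0∞) :
    ENNReal.ofReal ((2 : ℝ) ^ (u * ∑ i, a i)) * ∫⁻ x, F (dilE n a u x) = ∫⁻ x, F x := by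
  conv_rhs => rw [← map_dilE n a u]
  rw [lintegral_smul_measure,
    MeasurableEmbedding.lintegral_map (g := dilE n a u)
      (dilE n a u).toHomeomorph.measurableEmbedding]
  rfl

theorem integral_dil (n : ℕ) (a : Fin n → ℝ) (u : ℝ) (F : RV n → ℂ) :
    (((2 : ℝ) ^ (u * ∑ i, a i) : ℝ) : ℂ) * ∫ x, F (dilE n a u x) = ∫ x, F x := by
  conv_rhs => rw [← map_dilE n a u]
  rw [integral_smul_measure,
    MeasurableEmbedding.integral_map (f := dilE n a u) (dilE n a u).toHomeomorph.measurableEmbedding,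
    ENNReal.toReal_ofReal (by positivity)]
  simp

theorem FS_dil (n : ℕ) (a : Fin n → ℝ) (u : ℝ) (g : SS n) :
    FS n ((((2 : ℝ) ^ (u * ∑ i, a i) : ℝ) : ℂ) • dil n a u g) = dil n a (-u) (FS n g) := by
  ext ξ
  rw [dil_apply, FS_apply, FS_apply, FT, FT]
  conv_rhs => rw [← integral_dil n a u, ← integral_const_mul]
  refine integral_congr_ae (Filter.Eventually.of_forall fun x => ?_)
  simp only [_root_.smul_apply, dil_apply, dilE_apply, smul_eq_mul]
  have : ∑ i, (2 : ℝ) ^ (u * a i) * x i * ((2 : ℝ) ^ (-u * a i) * ξ i) = ∑ i, x i * ξ i := by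
    refine Finset.sum_congr rfl fun i _ => ?_
    have : (2 : ℝ) ^ (u * a i) * (2 : ℝ) ^ (-u * a i) = 1 := by
      rw [← Real.rpow_add (by norm_num)]; simp
    linear_combination (x i * ξ i) * this
  rw [this]
  ring

def DS (n : ℕ) (α : Fin n → ℕ) (G : SS n) : SS n :=
  (List.finRange n).foldr (fun i h => (fun g => ∂_{ei n i} g)^[α i] h) G

theorem lineDeriv_comm (n : ℕ) (i j : Fin n) (G : SS n) :
    ∂_{ei n i} (∂_{ei n j} G) = ∂_{ei n j} (∂_{ei n i} G) := by
  ext x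
  have h1 : ∀ v w : RV n, ∂_{v} (∂_{w} G) x = iteratedFDeriv ℝ 2 G x ![v, w] := by
    intro v w
    rw [← SchwartzMap.iteratedLineDerivOp_eq_iteratedFDeriv]
    rw [iteratedLineDerivOp_succ_left, iteratedLineDerivOp_one]
    simp
  rw [h1, h1]
  have h2 : IsSymmSndFDerivAt ℝ (⇑G) x := by
    apply ContDiffAt.isSymmSndFDerivAt (n := 2) (G.contDiffAt 2)
    simp
  rw [iteratedFDeriv_two_apply, iteratedFDeriv_two_apply]
  exact h2 _ _

theorem iter_comm (n : ℕ) (i j : Fin n) (k : ℕ) (G : SS n) :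
    (fun g : SS n => ∂_{ei n i} g)^[k] (∂_{ei n j} G) =
      ∂_{ei n j} ((fun g : SS n => ∂_{ei n i} g)^[k] G) := by
  induction k generalizing G with
  | zero => rfl
  | succ k ih =>
    rw [Function.iterate_succ_apply, Function.iterate_succ_apply, lineDeriv_comm, ih]

theorem foldr_comm (n : ℕ) (α : Fin n → ℕ) (j : Fin n) (G : SS n) (L : List (Fin n)) :
    L.foldr (fun i h => (fun g : SS n => ∂_{ei n i} g)^[α i] h) (∂_{ei n j} G) =
      ∂_{ei n j} (L.foldr (fun i h => (fun g : SS n => ∂_{ei n i} g)^[α i] h) G) := by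
  induction L with
  | nil => rfl
  | cons i L ih =>
    simp only [List.foldr_cons]
    rw [ih, iter_comm]

theorem foldr_congr' (n : ℕ) (α β : Fin n → ℕ) (G : SS n) (L : List (Fin n))
    (h : ∀ i ∈ L, α i = β i) :
    L.foldr (fun i h => (fun g : SS n => ∂_{ei n i} g)^[α i] h) G =
      (L.foldr (fun i h => (fun g : SS n => ∂_{ei n i} g)^[β i] h) G) := by
  induction L with
  | nil => rfl
  | cons i L ih =>
    simp only [List.foldr_cons]
    rw [ih (fun k hk => h k (List.mem_cons_of_mem _ hk)), h i (by simp)]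

theorem DS_comm (n : ℕ) (α : Fin n → ℕ) (j : Fin n) (G : SS n) :
    DS n α (∂_{ei n j} G) = ∂_{ei n j} (DS n α G) := foldr_comm n α j G _

theorem DS_succ (n : ℕ) (α : Fin n → ℕ) (j : Fin n) (G : SS n) :
    DS n (α + Pi.single j 1) G = DS n α (∂_{ei n j} G) := by
  rw [DS_comm]
  unfold DS
  have key : ∀ L : List (Fin n), L.Nodup → j ∈ L →
      L.foldr (fun i h => (fun g : SS n => ∂_{ei n i} g)^[(α + Pi.single j 1 : Fin n → ℕ) i] h) G =
      ∂_{ei n j} (L.foldr (fun i h => (fun g : SS n => ∂_{ei n i} g)^[α i] h) G) := by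
    intro L
    induction L with
    | nil => simp
    | cons i L ih =>
      intro hnd hj
      simp only [List.foldr_cons]
      rw [List.nodup_cons] at hnd
      by_cases hij : i = j
      · subst hij
        rw [foldr_congr' n (α + Pi.single i 1) α G L]
        · simp only [Pi.add_apply, Pi.single_eq_same]
          rw [Function.iterate_succ_apply']
        · intro k hk
          have : k ≠ i := fun h => hnd.1 (h ▸ hk)
          simp [this]
      · have hjL : j ∈ L := by
          rcases List.mem_cons.1 hj with h | h
          · exact absurd h.symm hij
          · exact h
        rw [ih hnd.2 hjL]
        simp only [Pi.add_apply, Pi.single_apply, hij, if_false, add_zero]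
        rw [iter_comm]
  exact key _ (List.nodup_finRange n) (List.mem_finRange j)

theorem DS_zero (n : ℕ) (G : SS n) : DS n 0 G = G := by
  unfold DS
  have key : ∀ L : List (Fin n),
      L.foldr (fun i h => (fun g : SS n => ∂_{ei n i} g)^[(0 : Fin n → ℕ) i] h) G = G := by
    intro L
    induction L with
    | nil => simp
    | cons i L ih =>
      rw [List.foldr_cons, ih]
      rfl
  exact key _

theorem mi_induction {n : ℕ} {P : (Fin n → ℕ) → Prop} (h0 : P 0)
    (hs : ∀ α i, P α → P (α + Pi.single i 1)) (α : Fin n → ℕ) : P α := by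
  have : ∀ m : ℕ, ∀ α : Fin n → ℕ, ∑ i, α i = m → P α := by
    intro m
    induction m with
    | zero =>
      intro α hα
      have : α = 0 := by
        ext i
        simpa using (Finset.sum_eq_zero_iff.1 hα) i (Finset.mem_univ i)
      rw [this]; exact h0
    | succ m ih =>
      intro α hα
      have : ∃ i, α i ≠ 0 := by
        by_contra! hc
        simp [hc] at hα
      obtain ⟨i, hi⟩ := this
      have hle : Pi.single i 1 ≤ α := by
        intro k
        by_cases hk : k = i
        · subst hk; simp; omega
        · simp [hk]
      have heq : (α - Pi.single i 1) + Pi.single i 1 = α := tsub_add_cancel_of_le hle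
      rw [← heq]
      apply hs
      apply ih
      have := congrArg (fun β : Fin n → ℕ => ∑ i, β i) heq
      simp only [Pi.add_apply, Finset.sum_add_distrib] at this
      simp at this
      simp
      omega
  exact this _ α rfl

theorem pderivIter_eq (n : ℕ) (i : Fin n) (k : ℕ) (G : SS n) :
    pderivIter n i k G = ((fun g : SS n => ∂_{ei n i} g)^[k] G : SS n) := by
  induction k with
  | zero => rfl
  | succ k ih =>
    rw [Function.iterate_succ_apply']
    simp only [pderivIter, ih]
    rfl

theorem Dop_eq (n : ℕ) (α : Fin n → ℕ) (G : SS n) (x : RV n) :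
    Dop n α G x = (-Complex.I) ^ (∑ i, α i) * DS n α G x := by
  have key : ∀ L : List (Fin n), L.foldr (fun i h => pderivIter n i (α i) h) (⇑G) =
     (L.foldr (fun i h => (fun g : SS n => ∂_{ei n i} g)^[α i] h) G : SS n) := by
    intro L
    induction L with
    | nil => rfl
    | cons i L ih => simp only [List.foldr_cons]; rw [ih, pderivIter_eq]
  unfold Dop DS
  rw [key]

theorem FS_coe (n : ℕ) (g : SS n) : FT n (⇑g) = ⇑(FS n g) := by
  ext ξ; rw [FS_apply]

theorem Dop_nnnorm (n : ℕ) (α : Fin n → ℕ) (g : SS n) (x : RV n) :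
    ‖Dop n α (FT n g) x‖₊ = ‖DS n α (FS n g) x‖₊ := by
  rw [FS_coe, Dop_eq]
  simp

theorem deriv_mulS (n : ℕ) (i : Fin n) (G H : SS n) :
    ∂_{ei n i} (mulS n G H) = mulS n (∂_{ei n i} G) H + mulS n G (∂_{ei n i} H) := by
  ext x
  rw [SchwartzMap.lineDerivOp_apply_eq_fderiv]
  have : (⇑(mulS n G H)) = (⇑G) * ⇑H := by ext y; rw [mulS_apply]; rfl
  rw [this, fderiv_mul G.differentiableAt H.differentiableAt]
  simp [mulS_apply, SchwartzMap.lineDerivOp_apply_eq_fderiv]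
  ring

theorem DS_add (n : ℕ) (α : Fin n → ℕ) (G H : SS n) : DS n α (G + H) = DS n α G + DS n α H := by
  induction α using mi_induction generalizing G H with
  | h0 => simp [DS_zero]
  | hs α i ih => rw [DS_succ, DS_succ, DS_succ, lineDerivOp_add, ih]

theorem DS_smul (n : ℕ) (α : Fin n → ℕ) (c : ℝ) (H : SS n) : DS n α (c • H) = c • DS n α H := by
  induction α using mi_induction generalizing H with
  | h0 => simp [DS_zero]
  | hs α i ih => rw [DS_succ, DS_succ, lineDerivOp_smul, ih]

theorem leibniz (n : ℕ) (α : Fin n → ℕ) (G H : SS n) (x : RV n) (b m : ℝ)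
    (hb : ∀ β ≤ α, ‖DS n β G x‖ ≤ b) (hm : ∀ β ≤ α, ‖DS n β H x‖ ≤ m) :
    ‖DS n α (mulS n G H) x‖ ≤ 2 ^ (∑ i, α i) * (b * m) := by
  induction α using mi_induction generalizing G H with
  | h0 =>
    have h1 := hb 0 le_rfl
    have h2 := hm 0 le_rfl
    rw [DS_zero] at *
    simp only [mulS_apply, norm_mul, Pi.zero_apply, Finset.sum_const_zero, pow_zero, one_mul]
    exact mul_le_mul h1 h2 (norm_nonneg _) ((norm_nonneg _).trans h1)
  | hs α i ih =>
    rw [DS_succ, deriv_mulS, DS_add]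
    have hle : ∀ β ≤ α, β ≤ α + Pi.single i 1 := fun β hβ => hβ.trans le_self_add
    have hle' : ∀ β ≤ α, β + Pi.single i 1 ≤ α + Pi.single i 1 :=
      fun β hβ => add_le_add_left hβ _
    have h1 := ih (∂_{ei n i} G) H (fun β hβ => by
      rw [← DS_succ]; exact hb _ (hle' _ hβ)) (fun β hβ => hm _ (hle _ hβ))
    have h2 := ih G (∂_{ei n i} H) (fun β hβ => hb _ (hle _ hβ)) (fun β hβ => by
      rw [← DS_succ]; exact hm _ (hle' _ hβ))
    have h3 : ∑ k, (α + Pi.single i 1 : Fin n → ℕ) k = (∑ k, α k) + 1 := by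
      simp [Finset.sum_add_distrib]
    rw [h3, pow_succ]
    refine (norm_add_le _ _).trans ?_
    linarith

theorem deriv_dil (n : ℕ) (a : Fin n → ℝ) (u : ℝ) (i : Fin n) (G : SS n) :
    ∂_{ei n i} (dil n a u G) = ((2 : ℝ) ^ (u * a i)) • dil n a u (∂_{ei n i} G) := by
  unfold dil
  rw [SchwartzMap.lineDerivOp_compCLMOfContinuousLinearEquiv]
  have : dilE n a u (ei n i) = ((2 : ℝ) ^ (u * a i)) • ei n i := by
    ext k
    rw [dilE_apply]
    by_cases h : k = i
    · subst h; simp [ei]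
    · simp [ei, h]
  rw [this, lineDerivOp_left_smul]
  ext x
  simp [SchwartzMap.compCLMOfContinuousLinearEquiv_apply]

theorem DS_dil (n : ℕ) (a : Fin n → ℝ) (u : ℝ) (α : Fin n → ℕ) (G : SS n) :
    DS n α (dil n a u G) = ((2 : ℝ) ^ (u * ∑ i, a i * α i)) • dil n a u (DS n α G) := by
  induction α using mi_induction generalizing G with
  | h0 => simp [DS_zero]
  | hs α i ih =>
    rw [DS_succ, deriv_dil, DS_smul, ih, DS_succ, smul_smul, ← Real.rpow_add (by norm_num)]
    congr 2
    have : ∑ x, a x * (((α + Pi.single i 1 : Fin n → ℕ) x : ℕ) : ℝ) = ∑ x, a x * α x + a i := by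
      simp only [Pi.add_apply, Nat.cast_add, mul_add, Finset.sum_add_distrib]
      congr 1
      rw [Finset.sum_eq_single i] <;> simp +contextual
    rw [this]; ring

theorem FI_DS (n : ℕ) (α : Fin n → ℕ) (H : SS n) (x : RV n) :
    ‖FI n (DS n α H) x‖ = (∏ i, |x i| ^ α i) * ‖FI n H x‖ := by
  induction α using mi_induction generalizing H with
  | h0 => simp [DS_zero]
  | hs α i ih =>
    rw [DS_succ, ih, FI_deriv]
    simp only [Pi.add_apply, pow_add, Finset.prod_mul_distrib]
    have : ∏ k, |x k| ^ (Pi.single i 1 : Fin n → ℕ) k = |x i| := by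
      rw [Finset.prod_eq_single i] <;> simp +contextual
    rw [this]
    simp
    ring


open LineDeriv

theorem lint_prod_fin (n : ℕ) :
    ∫⁻ z : RV n, ENNReal.ofReal (∏ l, (1 + |z l|) ^ (-2 : ℝ)) ≠ ∞ := by
  have h1 : Integrable (fun t : ℝ => (1 + |t|) ^ (-2 : ℝ)) := by
    have := integrable_one_add_norm (E := ℝ) (μ := volume) (r := 2) (by simp)
    simpa using this
  have h2 : Integrable (fun z : RV n => ∏ l, (1 + |z l|) ^ (-2 : ℝ)) :=
    Integrable.fintype_prod (f := fun _ t => (1 + |t|) ^ (-2 : ℝ)) (fun _ => h1)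
  exact (hasFiniteIntegral_iff_ofReal (Filter.Eventually.of_forall fun z => Finset.prod_nonneg fun l _ => by positivity)).1 h2.2 |>.ne

theorem kernel_L1 (n : ℕ) (N : Fin n → ℕ) (r : Fin n → ℝ) (hN : ∀ l, r l + 2 ≤ N l) :
    ∃ c : ℝ≥0, ∀ (H : SS n) (Y : ℝ≥0∞),
      (∀ α ≤ N, ∫⁻ ξ, (‖DS n α H ξ‖₊ : ℝ≥0∞) ≤ Y) →
      ∫⁻ z, ENNReal.ofReal (∏ l, (1 + |z l|) ^ (r l)) * (‖FI n H z‖₊ : ℝ≥0∞) ≤ c * Y := by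
  obtain ⟨c0, hc0⟩ := FI_bound n
  set W := ∫⁻ z : RV n, ENNReal.ofReal (∏ l, (1 + |z l|) ^ (-2 : ℝ)) with hW
  have hWf : W ≠ ∞ := lint_prod_fin n
  refine ⟨(2 ^ (∑ l, N l) * c0) * W.toNNReal, fun H Y hY => ?_⟩
  have key : ∀ z : RV n, ENNReal.ofReal (∏ l, (1 + |z l|) ^ (r l)) * (‖FI n H z‖₊ : ℝ≥0∞) ≤
      (2 ^ (∑ l, N l) * c0 * Y) * ENNReal.ofReal (∏ l, (1 + |z l|) ^ (-2 : ℝ)) := by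
    intro z
    set α : Fin n → ℕ := fun l => if |z l| ≤ 1 then 0 else N l with hα
    have hαN : α ≤ N := by
      intro l; simp only [hα]; split_ifs <;> simp
    have e1 : ∏ l, (1 + |z l|) ^ (r l) ≤
        (2 ^ (∑ l, N l)) * (∏ l, (1 + |z l|) ^ (-2 : ℝ)) * ∏ l, |z l| ^ α l := by
      rw [← Finset.prod_pow_eq_pow_sum, ← Finset.prod_mul_distrib, ← Finset.prod_mul_distrib]
      refine Finset.prod_le_prod (fun l _ => by positivity) fun l _ => ?_
      have hz : 0 ≤ |z l| := abs_nonneg _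
      have a1 : (1 + |z l|) ^ (r l) ≤ (1 + |z l|) ^ (-2 : ℝ) * (1 + |z l|) ^ (N l) := by
        rw [← Real.rpow_natCast, ← Real.rpow_add (by positivity)]
        exact Real.rpow_le_rpow_of_exponent_le (by linarith) (by linarith [hN l])
      have a2 : (1 + |z l|) ^ (N l) ≤ 2 ^ N l * |z l| ^ α l := by
        simp only [hα]
        split_ifs with h
        · simp only [pow_zero, mul_one]
          exact pow_le_pow_left₀ (by positivity) (by linarith) _
        · rw [← mul_pow]
          exact pow_le_pow_left₀ (by positivity) (by linarith) _
      calc _ ≤ _ := a1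
        _ ≤ (1 + |z l|) ^ (-2 : ℝ) * (2 ^ N l * |z l| ^ α l) := by gcongr
        _ = _ := by ring
    have e2 : ENNReal.ofReal (∏ l, |z l| ^ α l) * (‖FI n H z‖₊ : ℝ≥0∞) ≤ c0 * Y := by
      have : ENNReal.ofReal (∏ l, |z l| ^ α l) * (‖FI n H z‖₊ : ℝ≥0∞) =
          (‖FI n (DS n α H) z‖₊ : ℝ≥0∞) := by
        rw [← enorm_eq_nnnorm, ← enorm_eq_nnnorm, ← ofReal_norm, ← ofReal_norm,
          FI_DS, ENNReal.ofReal_mul (by positivity)]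
      rw [this]
      exact (hc0 _ _).trans (by gcongr; exact hY α hαN)
    calc _ ≤ ENNReal.ofReal ((2 ^ (∑ l, N l)) * (∏ l, (1 + |z l|) ^ (-2 : ℝ)) * ∏ l, |z l| ^ α l) *
          (‖FI n H z‖₊ : ℝ≥0∞) := by gcongr
      _ = 2 ^ (∑ l, N l) * ENNReal.ofReal (∏ l, (1 + |z l|) ^ (-2 : ℝ)) *
          (ENNReal.ofReal (∏ l, |z l| ^ α l) * (‖FI n H z‖₊ : ℝ≥0∞)) := by
        rw [ENNReal.ofReal_mul (by positivity), ENNReal.ofReal_mul (by positivity),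
          ENNReal.ofReal_pow (by norm_num)]
        simp only [ENNReal.ofReal_ofNat, mul_assoc]
      _ ≤ 2 ^ (∑ l, N l) * ENNReal.ofReal (∏ l, (1 + |z l|) ^ (-2 : ℝ)) * (c0 * Y) := by gcongr
      _ = _ := by ring
  refine (lintegral_mono key).trans ?_
  have hm : Measurable fun z : RV n => ENNReal.ofReal (∏ l, (1 + |z l|) ^ (-2 : ℝ)) := by
    fun_prop
  rw [lintegral_const_mul _ hm, ← hW]
  push_cast
  rw [ENNReal.coe_toNNReal hWf]
  exact le_of_eq (by ring)

/-- Taylor: vanishing derivatives of order `< m`. -/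
theorem taylor0 (n : ℕ) (A : ℝ) (R : ℝ) (hR : 0 ≤ R) (m : ℕ) (hA : 0 ≤ A) : ∀ (G : SS n),
    (∀ γ : Fin n → ℕ, ∑ i, γ i < m → DS n γ G 0 = 0) →
    (∀ γ : Fin n → ℕ, ∑ i, γ i = m → ∀ x, ‖DS n γ G x‖ ≤ A) →
    ∀ x : RV n, ‖x‖ ≤ R → ‖G x‖ ≤ (n * R) ^ m * A := by
  induction m with
  | zero =>
    intro G _ h2 x _
    have := h2 0 (by simp) x
    simpa [DS_zero] using this
  | succ m ih =>
    intro G h1 h2 x hx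
    have h3 : ∀ i, ∀ y : RV n, ‖y‖ ≤ R → ‖(∂_{ei n i} G) y‖ ≤ (n * R) ^ m * A := by
      intro i
      apply ih
      · intro γ hγ
        rw [← DS_succ]
        apply h1
        simp [Finset.sum_add_distrib]; omega
      · intro γ hγ x
        rw [← DS_succ]
        apply h2
        simp [Finset.sum_add_distrib, hγ]
    have h4 : ∀ y ∈ Metric.closedBall (0 : RV n) R, ‖fderiv ℝ G y‖ ≤ n * ((n * R) ^ m * A) := by
      intro y hy
      have hy' : ‖y‖ ≤ R := by simpa using hy
      refine ContinuousLinearMap.opNorm_le_bound _ (by positivity) fun v => ?_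
      have hv : v = ∑ i, v i • ei n i := by
        ext k; simp [ei, Finset.sum_apply, Pi.single_apply]
      conv_lhs => rw [hv]
      rw [map_sum]
      refine (norm_sum_le _ _).trans ?_
      have : ∀ i ∈ Finset.univ, ‖fderiv ℝ G y (v i • ei n i)‖ ≤ ((n * R) ^ m * A) * ‖v‖ := by
        intro i _
        rw [map_smul, norm_smul, mul_comm]
        have := h3 i y hy'
        rw [SchwartzMap.lineDerivOp_apply_eq_fderiv] at this
        gcongr
        exact norm_le_pi_norm v i
      refine (Finset.sum_le_sum this).trans (le_of_eq ?_)
      simp; ring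
    have h5 := (convex_closedBall (0 : RV n) R).norm_image_sub_le_of_norm_fderiv_le (𝕜 := ℝ)
      (fun y _ => G.differentiableAt) h4 (Metric.mem_closedBall_self hR) (by simpa using hx)
    have h6 : G 0 = 0 := by
      have := h1 0 (by simp)
      rwa [DS_zero] at this
    rw [h6, sub_zero, sub_zero] at h5
    calc _ ≤ _ := h5
      _ ≤ n * ((n * R) ^ m * A) * R := by gcongr
      _ = _ := by ring

theorem taylor1 (n : ℕ) (A : ℝ) (m : ℕ) (hA : 0 ≤ A) (G : SS n)
    (h1 : ∀ γ : Fin n → ℕ, ∑ i, γ i < m → DS n γ G 0 = 0)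
    (h2 : ∀ γ : Fin n → ℕ, ∑ i, γ i = m → ∀ x, ‖DS n γ G x‖ ≤ A) (x : RV n) :
    ‖G x‖ ≤ n ^ m * ‖x‖ ^ m * A := by
  have := taylor0 n A ‖x‖ (norm_nonneg _) m hA G h1 h2 x le_rfl
  rwa [mul_pow] at this

theorem DS_DS (n : ℕ) (β γ : Fin n → ℕ) (G : SS n) : DS n γ (DS n β G) = DS n (β + γ) G := by
  induction γ using mi_induction generalizing G with
  | h0 => simp [DS_zero]
  | hs γ i ih => rw [DS_succ, ← DS_comm, ih, ← add_assoc, DS_succ]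

theorem dil_exp_le (n : ℕ) (a : Fin n → ℝ) (a0 : ℝ) (ha : ∀ i, a0 ≤ a i)
    (u : ℝ) (hu : 0 ≤ u) (β : Fin n → ℕ) :
    (2 : ℝ) ^ (-u * ∑ i, a i * β i) ≤ 2 ^ (-u * (a0 * ((∑ i, β i : ℕ) : ℝ))) := by
  refine Real.rpow_le_rpow_of_exponent_le (by norm_num) ?_
  have : a0 * ((∑ i, β i : ℕ) : ℝ) ≤ ∑ i, a i * β i := by
    push_cast
    rw [Finset.mul_sum]
    exact Finset.sum_le_sum fun i _ => mul_le_mul_of_nonneg_right (ha i) (by positivity)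
  nlinarith

theorem dil_norm_le (n : ℕ) (a : Fin n → ℝ) (a0 : ℝ) (ha : ∀ i, a0 ≤ a i)
    (u : ℝ) (hu : 0 ≤ u) (ξ : RV n) :
    ‖(fun i => (2 : ℝ) ^ (-u * a i) * ξ i : RV n)‖ ≤ 2 ^ (-u * a0) * ‖ξ‖ := by
  rw [pi_norm_le_iff_of_nonneg (by positivity)]
  intro i
  rw [norm_mul, Real.norm_of_nonneg (by positivity)]
  have : (2 : ℝ) ^ (-u * a i) ≤ 2 ^ (-u * a0) :=
    Real.rpow_le_rpow_of_exponent_le (by norm_num) (by nlinarith [ha i])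
  gcongr
  exact norm_le_pi_norm ξ i

theorem lowG (n : ℕ) (a : Fin n → ℝ) (a0 : ℝ) (ha0 : 0 ≤ a0) (ha : ∀ i, a0 ≤ a i)
    (N : Fin n → ℕ) (K : ℕ) (G : SS n) (A : ℝ) (hA : 0 ≤ A)
    (h1 : ∀ γ : Fin n → ℕ, ∑ i, γ i < K → DS n γ G 0 = 0)
    (h2 : ∀ γ : Fin n → ℕ, (∑ i, γ i ≤ K ∨ γ ≤ N) → ∀ x, ‖DS n γ G x‖ ≤ A)
    (u : ℝ) (hu : 0 ≤ u) (β : Fin n → ℕ) (hβ : β ≤ N) (ξ : RV n) :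
    ‖DS n β (dil n a (-u) G) ξ‖ ≤ (n + 1) ^ K * (1 + ‖ξ‖) ^ K * (2 ^ (-u * (K * a0)) * A) := by
  rw [DS_dil]
  simp only [_root_.smul_apply]
  rw [norm_smul, dil_apply, Real.norm_of_nonneg (by positivity)]
  have hnK : (1 : ℝ) ≤ (n + 1) ^ K := one_le_pow₀ (by linarith [(Nat.cast_nonneg n : (0:ℝ) ≤ n)])
  have hxK : (1 : ℝ) ≤ (1 + ‖ξ‖) ^ K := one_le_pow₀ (by linarith [norm_nonneg ξ])
  have e1 := dil_exp_le n a a0 ha u hu β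
  by_cases hK : ∑ i, β i ≤ K
  · set m := K - ∑ i, β i with hm
    have t := taylor1 n A m hA (DS n β G)
      (fun γ hγ => by
        rw [DS_DS]; apply h1; simp only [Pi.add_apply, Finset.sum_add_distrib]; omega)
      (fun γ hγ x => by
        rw [DS_DS]; apply h2; left; simp only [Pi.add_apply, Finset.sum_add_distrib]; omega)
      (fun i => (2 : ℝ) ^ (-u * a i) * ξ i)
    have d := dil_norm_le n a a0 ha u hu ξ
    have e2 : (2:ℝ) ^ (-u * (K * a0)) =
        2 ^ (-u * (a0 * ((∑ i, β i : ℕ) : ℝ))) * (2 ^ (-u * a0)) ^ m := by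
      rw [← Real.rpow_natCast (2 ^ (-u * a0)), ← Real.rpow_mul (by norm_num),
        ← Real.rpow_add (by norm_num)]
      congr 1
      have : (K : ℝ) = ((∑ i, β i : ℕ) : ℝ) + m := by
        rw [hm, Nat.cast_sub hK]; ring
      rw [this]; ring
    calc _ ≤ 2 ^ (-u * (a0 * ((∑ i, β i : ℕ) : ℝ))) *
          (n ^ m * (2 ^ (-u * a0) * ‖ξ‖) ^ m * A) := by
          refine mul_le_mul e1 (t.trans ?_) (norm_nonneg _) (by positivity)
          gcongr
      _ = (n ^ m * ‖ξ‖ ^ m) * (2 ^ (-u * (K * a0)) * A) := by rw [e2, mul_pow]; ring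
      _ ≤ _ := by
        gcongr ?_ * ?_ * _
        · calc (n : ℝ) ^ m ≤ (n + 1) ^ m := by gcongr; linarith
            _ ≤ _ := pow_le_pow_right₀ (by linarith [(Nat.cast_nonneg n : (0:ℝ) ≤ n)]) (by omega)
        · calc ‖ξ‖ ^ m ≤ (1 + ‖ξ‖) ^ m := by gcongr; linarith
            _ ≤ _ := pow_le_pow_right₀ (by linarith [norm_nonneg ξ]) (by omega)
  · have t := h2 β (Or.inr hβ) (fun i => (2 : ℝ) ^ (-u * a i) * ξ i)
    have e3 : (2:ℝ) ^ (-u * (a0 * ((∑ i, β i : ℕ) : ℝ))) ≤ 2 ^ (-u * (K * a0)) := by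
      refine Real.rpow_le_rpow_of_exponent_le (by norm_num) ?_
      have : (K : ℝ) ≤ ((∑ i, β i : ℕ) : ℝ) := by exact_mod_cast (not_le.1 hK).le
      have := mul_le_mul_of_nonneg_left this ha0
      nlinarith
    calc _ ≤ 2 ^ (-u * (K * a0)) * A :=
          mul_le_mul (e1.trans e3) t (norm_nonneg _) (by positivity)
      _ ≤ _ := by
        refine le_mul_of_one_le_left (by positivity) ?_
        nlinarith

theorem schwartz_int (n : ℕ) (K : ℕ) (g : SS n) :
    ∫⁻ ξ, ENNReal.ofReal ((1 + ‖ξ‖) ^ K * ‖g ξ‖) ≠ ∞ := by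
  have h : Integrable (fun ξ => (1 + ‖ξ‖) ^ K * ‖g ξ‖) := by
    have : (fun ξ => (1 + ‖ξ‖) ^ K * ‖g ξ‖) =
        fun ξ => ∑ m ∈ Finset.range (K + 1), (K.choose m : ℝ) * (‖ξ‖ ^ m * ‖g ξ‖) := by
      ext ξ
      rw [add_comm, add_pow, Finset.sum_mul]
      refine Finset.sum_congr rfl fun m _ => ?_
      simp; ring
    rw [this]
    exact integrable_finsetSum _ fun m _ => (SchwartzMap.integrable_pow_mul volume g m).const_mul _
  exact ((hasFiniteIntegral_iff_ofReal
    (Filter.Eventually.of_forall fun z => by positivity)).1 h.2).ne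

theorem kern_low (n : ℕ) (a : Fin n → ℝ) (a0 : ℝ) (ha0 : 0 ≤ a0) (ha : ∀ i, a0 ≤ a i)
    (N : Fin n → ℕ) (r : Fin n → ℝ) (hN : ∀ l, r l + 2 ≤ N l) (K : ℕ) (μ : SS n) :
    ∃ c : ℝ≥0, ∀ (G : SS n) (A : ℝ), 0 ≤ A →
      (∀ γ : Fin n → ℕ, ∑ i, γ i < K → DS n γ G 0 = 0) →
      (∀ γ : Fin n → ℕ, (∑ i, γ i ≤ K ∨ γ ≤ N) → ∀ x, ‖DS n γ G x‖ ≤ A) →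
      ∀ u : ℝ, 0 ≤ u →
      ∫⁻ z, ENNReal.ofReal (∏ l, (1 + |z l|) ^ (r l)) *
        (‖FI n (mulS n (dil n a (-u) G) μ) z‖₊ : ℝ≥0∞) ≤
        c * ENNReal.ofReal (2 ^ (-u * (K * a0)) * A) := by
  obtain ⟨c0, hc0⟩ := kernel_L1 n N r hN
  set W := ∑ γ ∈ Finset.Iic N, ∫⁻ ξ, ENNReal.ofReal ((1 + ‖ξ‖) ^ K * ‖DS n γ μ ξ‖) with hW
  have hWf : W ≠ ∞ := ENNReal.sum_ne_top.2 fun γ _ => schwartz_int n K _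
  refine ⟨c0 * (2 ^ (∑ i, N i) * (n + 1) ^ K * W.toNNReal), fun G A hA h1 h2 u hu => ?_⟩
  refine (hc0 _ ((2 ^ (∑ i, N i) * (n + 1) ^ K * W) *
    ENNReal.ofReal (2 ^ (-u * (K * a0)) * A)) ?_).trans ?_
  · intro α hα
    have pt : ∀ ξ, (‖DS n α (mulS n (dil n a (-u) G) μ) ξ‖₊ : ℝ≥0∞) ≤
        (2 ^ (∑ i, N i) * (n + 1) ^ K * ENNReal.ofReal (2 ^ (-u * (K * a0)) * A)) *
          ∑ γ ∈ Finset.Iic N, ENNReal.ofReal ((1 + ‖ξ‖) ^ K * ‖DS n γ μ ξ‖) := by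
      intro ξ
      have hl := leibniz n α (dil n a (-u) G) μ ξ _ (∑ γ ∈ Finset.Iic N, ‖DS n γ μ ξ‖)
        (fun β hβ => lowG n a a0 ha0 ha N K G A hA h1 h2 u hu β (hβ.trans hα) ξ)
        (fun β hβ => Finset.single_le_sum (f := fun γ => ‖DS n γ μ ξ‖)
          (fun _ _ => norm_nonneg _) (Finset.mem_Iic.2 (hβ.trans hα)))
      have e : (2:ℝ) ^ (∑ i, α i) ≤ 2 ^ (∑ i, N i) :=
        pow_le_pow_right₀ (by norm_num) (Finset.sum_le_sum fun i _ => hα i)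
      have hl2 : ‖DS n α (mulS n (dil n a (-u) G) μ) ξ‖ ≤
          (2 ^ (∑ i, N i) * (n + 1) ^ K * (2 ^ (-u * (K * a0)) * A)) *
          ∑ γ ∈ Finset.Iic N, ((1 + ‖ξ‖) ^ K * ‖DS n γ μ ξ‖) := by
        refine hl.trans ?_
        rw [← Finset.mul_sum]
        have h0 : 0 ≤ ∑ γ ∈ Finset.Iic N, ‖DS n γ μ ξ‖ := Finset.sum_nonneg fun _ _ => norm_nonneg _
        calc _ ≤ 2 ^ (∑ i, N i) * ((↑n + 1) ^ K * (1 + ‖ξ‖) ^ K * (2 ^ (-u * (↑K * a0)) * A) *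
              ∑ γ ∈ Finset.Iic N, ‖(DS n γ μ) ξ‖) := by gcongr
          _ = _ := by ring
      rw [← enorm_eq_nnnorm, ← ofReal_norm]
      refine (ENNReal.ofReal_le_ofReal hl2).trans (le_of_eq ?_)
      rw [ENNReal.ofReal_mul (by positivity), ENNReal.ofReal_mul (by positivity),
        ENNReal.ofReal_mul (by positivity), ENNReal.ofReal_sum_of_nonneg (fun _ _ => by positivity)]
      congr 3
      · rw [ENNReal.ofReal_pow (by norm_num)]; simp
      · rw [ENNReal.ofReal_pow (by positivity), ENNReal.ofReal_add (by positivity) (by norm_num)]; simp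
    have hms : ∀ γ, Measurable fun ξ : RV n => ENNReal.ofReal ((1 + ‖ξ‖) ^ K * ‖DS n γ μ ξ‖) := by
      intro γ
      have := (DS n γ μ).continuous
      fun_prop
    refine (lintegral_mono pt).trans ?_
    rw [lintegral_const_mul _ (Finset.measurable_sum _ fun γ _ => hms γ),
      lintegral_finsetSum _ (fun γ _ => hms γ), ← hW]
    exact le_of_eq (by ring)
  · push_cast
    rw [ENNReal.coe_toNNReal hWf]
    exact le_of_eq (by ring)

theorem DS_zero_near (n : ℕ) (δ : ℝ) (μ : SS n) (hμ : ∀ x : RV n, ‖x‖ < δ → μ x = 0)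
    (γ : Fin n → ℕ) : ∀ x : RV n, ‖x‖ < δ → DS n γ μ x = 0 := by
  induction γ using mi_induction generalizing μ with
  | h0 => simpa [DS_zero] using hμ
  | hs γ i ih =>
    rw [DS_succ]
    apply ih
    intro x hx
    rw [SchwartzMap.lineDerivOp_apply_eq_fderiv]
    have : (⇑μ) =ᶠ[nhds x] fun _ => 0 := by
      have : Metric.ball (0 : RV n) δ ∈ nhds x := Metric.isOpen_ball.mem_nhds (by simpa using hx)
      filter_upwards [this] with y hy
      exact hμ y (by simpa using hy)
    rw [this.fderiv_eq]
    simp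

theorem norm_le_sqrt (n : ℕ) (ξ : RV n) : ‖ξ‖ ≤ Real.sqrt (∑ i, ξ i ^ 2) := by
  rw [pi_norm_le_iff_of_nonneg (by positivity)]
  intro i
  rw [Real.norm_eq_abs]
  apply Real.abs_le_sqrt
  exact Finset.single_le_sum (f := fun i => ξ i ^ 2) (fun _ _ => sq_nonneg _) (Finset.mem_univ i)

theorem kern_high (n : ℕ) (a : Fin n → ℝ) (a0 : ℝ) (ha0 : 0 ≤ a0) (ha : ∀ i, a0 ≤ a i)
    (N : Fin n → ℕ) (r : Fin n → ℝ) (hN : ∀ l, r l + 2 ≤ N l) (L : ℝ) (hL : 0 ≤ L) (μ : SS n)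
    (δ : ℝ) (hδ : 0 < δ) (hμ : ∀ x : RV n, ‖x‖ < δ → μ x = 0) :
    ∃ c : ℝ≥0, ∀ (G : SS n) (Y : ℝ≥0∞),
      (∀ γ : Fin n → ℕ, γ ≤ N → ∫⁻ ξ : RV n,
        ENNReal.ofReal ((1 + Real.sqrt (∑ i, ξ i ^ 2)) ^ L) * (‖DS n γ G ξ‖₊ : ℝ≥0∞) ≤ Y) →
      ∀ u : ℝ, 0 ≤ u →
      ∫⁻ z, ENNReal.ofReal (∏ l, (1 + |z l|) ^ (r l)) *
        (‖FI n (mulS n G (dil n a (-u) μ)) z‖₊ : ℝ≥0∞) ≤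
        c * (ENNReal.ofReal (2 ^ (-u * (L * a0))) * Y) := by
  obtain ⟨c0, hc0⟩ := kernel_L1 n N r hN
  set S : ℝ := ∑ γ ∈ Finset.Iic N, SchwartzMap.seminorm ℝ 0 0 (DS n γ μ) with hS
  have hS0 : 0 ≤ S := Finset.sum_nonneg fun γ _ => apply_nonneg _ _
  have hm : ∀ u : ℝ, 0 ≤ u → ∀ γ ≤ N, ∀ ξ : RV n, ‖DS n γ (dil n a (-u) μ) ξ‖ ≤
      S * δ⁻¹ ^ L * 2 ^ (-u * (L * a0)) * (1 + Real.sqrt (∑ i, ξ i ^ 2)) ^ L := by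
    intro u hu γ hγ ξ
    rw [DS_dil]
    simp only [_root_.smul_apply]
    rw [norm_smul, dil_apply, Real.norm_of_nonneg (by positivity)]
    set η : RV n := fun i => (2 : ℝ) ^ (-u * a i) * ξ i with hη
    have e1 : (2 : ℝ) ^ (-u * ∑ i, a i * γ i) ≤ 1 := by
      apply Real.rpow_le_one_of_one_le_of_nonpos (by norm_num)
      have : 0 ≤ ∑ i, a i * γ i := Finset.sum_nonneg fun i _ =>
        mul_nonneg (ha0.trans (ha i)) (by positivity)
      nlinarith
    have e2 : ‖DS n γ μ η‖ ≤ S := by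
      refine (SchwartzMap.norm_le_seminorm ℝ (DS n γ μ) η).trans ?_
      exact Finset.single_le_sum (f := fun γ => SchwartzMap.seminorm ℝ 0 0 (DS n γ μ))
          (fun _ _ => apply_nonneg _ _) (Finset.mem_Iic.2 hγ)
    by_cases hd : ‖η‖ < δ
    · rw [DS_zero_near n δ μ hμ γ η hd]
      simp; positivity
    · push Not at hd
      have d := dil_norm_le n a a0 ha u hu ξ
      have e3 : 1 ≤ δ⁻¹ * (2 ^ (-u * a0) * (1 + Real.sqrt (∑ i, ξ i ^ 2))) := by
        rw [inv_mul_eq_div, le_div_iff₀ hδ, one_mul]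
        refine hd.trans (d.trans ?_)
        gcongr
        linarith [norm_le_sqrt n ξ]
      have e4 := Real.one_le_rpow e3 hL
      rw [Real.mul_rpow (by positivity) (by positivity), Real.mul_rpow (by positivity) (by positivity),
        ← Real.rpow_mul (by norm_num)] at e4
      calc _ ≤ 1 * S := mul_le_mul e1 e2 (norm_nonneg _) (by norm_num)
        _ ≤ S * (δ⁻¹ ^ L * (2 ^ (-u * a0 * L) * (1 + Real.sqrt (∑ i, ξ i ^ 2)) ^ L)) := by
            rw [one_mul]; exact le_mul_of_one_le_right hS0 e4
        _ = _ := by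
          rw [show -u * a0 * L = -u * (L * a0) by ring]; ring
  refine ⟨c0 * (2 ^ (∑ i, N i) * Real.toNNReal (S * δ⁻¹ ^ L) * (Finset.Iic N).card),
    fun G Y hY u hu => ?_⟩
  refine (hc0 _ ((2 ^ (∑ i, N i) * ENNReal.ofReal (S * δ⁻¹ ^ L) * (Finset.Iic N).card) *
    (ENNReal.ofReal (2 ^ (-u * (L * a0))) * Y)) ?_).trans ?_
  · intro α hα
    have pt : ∀ ξ, (‖DS n α (mulS n G (dil n a (-u) μ)) ξ‖₊ : ℝ≥0∞) ≤
        (2 ^ (∑ i, N i) * ENNReal.ofReal (S * δ⁻¹ ^ L) * ENNReal.ofReal (2 ^ (-u * (L * a0)))) *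
          ∑ γ ∈ Finset.Iic N, ENNReal.ofReal ((1 + Real.sqrt (∑ i, ξ i ^ 2)) ^ L) *
            (‖DS n γ G ξ‖₊ : ℝ≥0∞) := by
      intro ξ
      have hl := leibniz n α G (dil n a (-u) μ) ξ (∑ γ ∈ Finset.Iic N, ‖DS n γ G ξ‖) _
        (fun β hβ => Finset.single_le_sum (f := fun γ => ‖DS n γ G ξ‖)
          (fun _ _ => norm_nonneg _) (Finset.mem_Iic.2 (hβ.trans hα)))
        (fun β hβ => hm u hu β (hβ.trans hα) ξ)
      have e : (2:ℝ) ^ (∑ i, α i) ≤ 2 ^ (∑ i, N i) :=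
        pow_le_pow_right₀ (by norm_num) (Finset.sum_le_sum fun i _ => hα i)
      have hl2 : ‖DS n α (mulS n G (dil n a (-u) μ)) ξ‖ ≤
          (2 ^ (∑ i, N i) * (S * δ⁻¹ ^ L) * 2 ^ (-u * (L * a0))) *
          ∑ γ ∈ Finset.Iic N, ((1 + Real.sqrt (∑ i, ξ i ^ 2)) ^ L * ‖DS n γ G ξ‖) := by
        refine hl.trans ?_
        rw [← Finset.mul_sum]
        have h0 : 0 ≤ ∑ γ ∈ Finset.Iic N, ‖DS n γ G ξ‖ := Finset.sum_nonneg fun _ _ => norm_nonneg _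
        calc _ ≤ 2 ^ (∑ i, N i) * ((∑ γ ∈ Finset.Iic N, ‖DS n γ G ξ‖) *
              (S * δ⁻¹ ^ L * 2 ^ (-u * (L * a0)) * (1 + Real.sqrt (∑ i, ξ i ^ 2)) ^ L)) := by gcongr
          _ = _ := by ring
      rw [← enorm_eq_nnnorm, ← ofReal_norm]
      refine (ENNReal.ofReal_le_ofReal hl2).trans (le_of_eq ?_)
      rw [ENNReal.ofReal_mul (by positivity), ENNReal.ofReal_mul (by positivity),
        ENNReal.ofReal_mul (by positivity), ENNReal.ofReal_sum_of_nonneg (fun _ _ => by positivity)]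
      congr 1
      · rw [ENNReal.ofReal_pow (by norm_num)]; simp
      · refine Finset.sum_congr rfl fun γ _ => ?_
        rw [ENNReal.ofReal_mul (by positivity), ofReal_norm, enorm_eq_nnnorm]
    have hms : ∀ γ, Measurable fun ξ : RV n =>
        ENNReal.ofReal ((1 + Real.sqrt (∑ i, ξ i ^ 2)) ^ L) * (‖DS n γ G ξ‖₊ : ℝ≥0∞) := by
      intro γ
      have := (DS n γ G).continuous
      fun_prop
    refine (lintegral_mono pt).trans ?_
    rw [lintegral_const_mul _ (Finset.measurable_sum _ fun γ _ => hms γ),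
      lintegral_finsetSum _ (fun γ _ => hms γ)]
    have : ∑ γ ∈ Finset.Iic N, ∫⁻ ξ : RV n, ENNReal.ofReal ((1 + Real.sqrt (∑ i, ξ i ^ 2)) ^ L) *
        (‖DS n γ G ξ‖₊ : ℝ≥0∞) ≤ (Finset.Iic N).card * Y := by
      refine (Finset.sum_le_card_nsmul _ _ Y fun γ hγ => hY γ (Finset.mem_Iic.1 hγ)).trans ?_
      rw [nsmul_eq_mul]
    refine (mul_le_mul_right this _).trans (le_of_eq (by ring))
  · push_cast
    exact le_of_eq (by rw [ENNReal.ofReal]; ring)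


open LineDeriv

abbrev FM (n m : ℕ) := ContinuousMultilinearMap ℝ (fun _ : Fin m => RV n) ℂ

abbrev BF (n m : ℕ) := BoundedContinuousFunction (RV n) (FM n m)

def TE (n m0 : ℕ) := ∀ m : Fin (m0 + 1), BF n m

instance (n m0 : ℕ) : NormedAddCommGroup (TE n m0) :=
  Pi.normedAddCommGroup (G := fun m : Fin (m0 + 1) => BF n m)

instance (n m0 : ℕ) : NormedSpace ℂ (TE n m0) :=
  Pi.normedSpace (E := fun m : Fin (m0 + 1) => BF n m)

instance (n m0 : ℕ) : CompleteSpace (TE n m0) :=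
  inferInstanceAs (CompleteSpace (∀ m : Fin (m0 + 1), BF n m))

theorem decay (n k m0 : ℕ) (g : SS n) : ∃ C : ℝ, 0 ≤ C ∧ ∀ m ≤ m0, ∀ x : RV n,
    (1 + ‖x‖) ^ k * ‖iteratedFDeriv ℝ m g x‖ ≤ C :=
  ⟨2 ^ k * (Finset.Iic (k, m0)).sup (fun m => SchwartzMap.seminorm ℝ m.1 m.2) g,
    by positivity, fun m hm x =>
    SchwartzMap.one_add_le_sup_seminorm_apply (𝕜 := ℝ) (m := (k, m0)) le_rfl hm g x⟩

def TT (n k m0 : ℕ) : SS n →ₗ[ℂ] TE n m0 where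
  toFun g := fun m => BoundedContinuousFunction.ofNormedAddCommGroup
    (fun x => (1 + ‖x‖) ^ k • iteratedFDeriv ℝ m g x)
    (by
      have := g.smooth'.continuous_iteratedFDeriv (m := m) (by exact_mod_cast le_top)
      fun_prop)
    (decay n k m0 g).choose
    (fun x => by
      have := (decay n k m0 g).choose_spec.2 m (by omega) x
      rw [norm_smul, Real.norm_of_nonneg (by positivity)]
      exact this)
  map_add' g h := by
    refine funext fun m => ?_
    ext x v
    have := iteratedFDeriv_add_apply (𝕜 := ℝ) (i := m) (x := x) (f := g) (g := h)
      ((g.smooth m).contDiffAt) ((h.smooth m).contDiffAt)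
    change ((1 + ‖x‖) ^ k • iteratedFDeriv ℝ m (⇑g + ⇑h) x) v =
      ((1 + ‖x‖) ^ k • iteratedFDeriv ℝ m g x) v + ((1 + ‖x‖) ^ k • iteratedFDeriv ℝ m h x) v
    rw [this]
    simp
  map_smul' c g := by
    refine funext fun m => ?_
    ext x v
    have := iteratedFDeriv_const_smul_apply (𝕜 := ℝ) (i := m) (x := x) (f := g) (a := c)
      ((g.smooth m).contDiffAt)
    change ((1 + ‖x‖) ^ k • iteratedFDeriv ℝ m (c • ⇑g) x) v =
      c • ((1 + ‖x‖) ^ k • iteratedFDeriv ℝ m g x) v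
    rw [this]
    simp
    ring

theorem TT_apply (n k m0 : ℕ) (g : SS n) (m : Fin (m0 + 1)) (x : RV n) :
    TT n k m0 g m x = (1 + ‖x‖) ^ k • iteratedFDeriv ℝ m g x := rfl

theorem TT_norm_le (n k m0 : ℕ) (g : SS n) (b : ℝ) (hb : 0 ≤ b)
    (h : ∀ m ≤ m0, ∀ x : RV n, (1 + ‖x‖) ^ k * ‖iteratedFDeriv ℝ m g x‖ ≤ b) :
    ‖TT n k m0 g‖ ≤ b := by
  refine (pi_norm_le_iff_of_nonneg (G := fun m : Fin (m0 + 1) => BF n m) hb).2 ?_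
  intro m
  rw [BoundedContinuousFunction.norm_le hb]
  intro x
  rw [TT_apply, norm_smul, Real.norm_of_nonneg (by positivity)]
  exact h m (by omega) x

theorem le_TT_norm (n k m0 : ℕ) (g : SS n) (m : ℕ) (hm : m ≤ m0) (x : RV n) :
    (1 + ‖x‖) ^ k * ‖iteratedFDeriv ℝ m g x‖ ≤ ‖TT n k m0 g‖ := by
  have h1 := norm_le_pi_norm (G := fun m : Fin (m0 + 1) => BF n m) (TT n k m0 g) ⟨m, by omega⟩
  have h2 := (TT n k m0 g ⟨m, by omega⟩).norm_coe_le_norm x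
  rw [TT_apply, norm_smul, Real.norm_of_nonneg (by positivity)] at h2
  exact h2.trans h1

theorem TT_inj (n k m0 : ℕ) : Function.Injective (TT n k m0) := by
  rw [injective_iff_map_eq_zero]
  intro g hg
  ext x
  have := le_TT_norm n k m0 g 0 (by omega) x
  rw [hg, norm_zero, norm_iteratedFDeriv_zero] at this
  have h0 : 0 < (1 + ‖x‖) ^ k := by positivity
  have : ‖g x‖ ≤ 0 := by
    by_contra hc
    push Not at hc
    have := mul_pos h0 hc
    linarith
  simpa using this

theorem dist_rep (n : ℕ) (f : TD n) : ∃ k m0 : ℕ, ∃ F : TE n m0 →L[ℂ] ℂ,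
    ∀ g, f g = F (TT n k m0 g) := by
  have hcont : Continuous (Seminorm.comp (normSeminorm ℂ ℂ) f.toLinearMap) := by
    change Continuous fun g => ‖f g‖
    exact f.continuous.norm
  obtain ⟨S, C, -, hC⟩ := Seminorm.bound_of_continuous (schwartz_withSeminorms ℂ (RV n) ℂ) _ hcont
  set k := S.sup Prod.fst with hk
  set m0 := S.sup Prod.snd with hm0
  have hb : ∀ g : SS n, ‖f g‖ ≤ C * ‖TT n k m0 g‖ := by
    intro g
    refine (hC g).trans ?_
    rw [_root_.smul_apply, NNReal.smul_def, smul_eq_mul]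
    gcongr
    refine Seminorm.finset_sup_apply_le (norm_nonneg _) fun i hi => ?_
    refine SchwartzMap.seminorm_le_bound ℂ _ _ _ (norm_nonneg _) fun x => ?_
    refine le_trans ?_ (le_TT_norm n k m0 g i.2 (Finset.le_sup (f := Prod.snd) hi) x)
    gcongr
    calc ‖x‖ ^ i.1 ≤ (1 + ‖x‖) ^ i.1 := by gcongr; linarith
      _ ≤ _ := pow_le_pow_right₀ (by linarith [norm_nonneg x]) (Finset.le_sup (f := Prod.fst) hi)
  let e := LinearEquiv.ofInjective (TT n k m0) (TT_inj n k m0)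
  let F0 : LinearMap.range (TT n k m0) →L[ℂ] ℂ :=
    (f.toLinearMap.comp e.symm.toLinearMap).mkContinuous C (by
      intro y
      obtain ⟨g, rfl⟩ := e.surjective y
      simp only [LinearMap.comp_apply, LinearEquiv.coe_coe, LinearEquiv.symm_apply_apply]
      exact hb g)
  obtain ⟨F, hF, -⟩ := exists_extension_norm_eq (LinearMap.range (TT n k m0)) F0
  refine ⟨k, m0, F, fun g => ?_⟩
  have := hF (e g)
  have h2 : F0 (e g) = f g := by
    change f (e.symm (e g)) = f g
    rw [LinearEquiv.symm_apply_apply]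
  rw [h2] at this
  exact this.symm

abbrev tau (n : ℕ) (z : RV n) : SS n →L[ℂ] SS n := SchwartzMap.compSubConstCLM ℂ z

theorem tau_iter (n : ℕ) (z x : RV n) (m : ℕ) (g : SS n) :
    iteratedFDeriv ℝ m (tau n z g) x = iteratedFDeriv ℝ m g (x - z) := by
  have : (⇑(tau n z g)) = fun y => g (y - z) := rfl
  rw [this, iteratedFDeriv_comp_sub]

theorem one_add_norm_le (n : ℕ) (k : ℕ) (x y : RV n) (R : ℝ) (h : ‖x - y‖ ≤ R) :
    (1 + ‖x‖) ^ k ≤ (1 + R) ^ k * (1 + ‖y‖) ^ k := by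
  rw [← mul_pow]
  have h1 : ‖x‖ ≤ ‖x - y‖ + ‖y‖ := by simpa using norm_add_le (x - y) y
  have hR : 0 ≤ R := (norm_nonneg _).trans h
  gcongr
  nlinarith [norm_nonneg y, mul_nonneg hR (norm_nonneg y)]

theorem TT_tau_growth (n k m0 : ℕ) (g : SS n) : ∃ C : ℝ, 0 ≤ C ∧ ∀ z,
    ‖TT n k m0 (tau n z g)‖ ≤ (1 + ‖z‖) ^ k * C := by
  obtain ⟨C, hC, h⟩ := decay n k m0 g
  refine ⟨C, hC, fun z => TT_norm_le n k m0 _ _ (by positivity) fun m hm x => ?_⟩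
  rw [tau_iter]
  have := one_add_norm_le n k x (x - z) ‖z‖ (by simp)
  calc _ ≤ (1 + ‖z‖) ^ k * (1 + ‖x - z‖) ^ k * ‖iteratedFDeriv ℝ m g (x - z)‖ := by gcongr
    _ ≤ _ := by rw [mul_assoc]; gcongr; exact h m hm _

theorem TT_tau_lip (n k m0 : ℕ) (g : SS n) : ∃ C : ℝ, 0 ≤ C ∧ ∀ R : ℝ, ∀ z w : RV n,
    ‖z‖ ≤ R → ‖w‖ ≤ R →
    ‖TT n k m0 (tau n z g) - TT n k m0 (tau n w g)‖ ≤ (1 + R) ^ k * C * ‖z - w‖ := by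
  obtain ⟨C, hC, h⟩ := decay n k (m0 + 1) g
  refine ⟨C, hC, fun R z w hz hw => ?_⟩
  have hR : 0 ≤ R := (norm_nonneg _).trans hz
  rw [← map_sub]
  refine TT_norm_le n k m0 _ _ (by positivity) fun m hm x => ?_
  have e1 : iteratedFDeriv ℝ m (⇑(tau n z g - tau n w g)) x =
      iteratedFDeriv ℝ m g (x - z) - iteratedFDeriv ℝ m g (x - w) := by
    have : (⇑(tau n z g - tau n w g)) = ⇑(tau n z g) - ⇑(tau n w g) := rfl
    rw [this, iteratedFDeriv_sub_apply ((tau n z g).smooth m).contDiffAt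
      ((tau n w g).smooth m).contDiffAt, tau_iter, tau_iter]
  rw [e1]
  have hx : 0 < (1 + ‖x‖) ^ k := by positivity
  have mv := (convex_closedBall x R).norm_image_sub_le_of_norm_fderiv_le (𝕜 := ℝ)
    (f := iteratedFDeriv ℝ m g) (C := (1 + R) ^ k * C / (1 + ‖x‖) ^ k)
    (fun y _ => (g.smooth (m + 1)).differentiable_iteratedFDeriv
      (by exact_mod_cast Nat.lt_succ_self m) y)
    (fun y hy => by
      rw [norm_fderiv_iteratedFDeriv, le_div_iff₀ hx]
      have h1 := one_add_norm_le n k x y R (by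
        rw [← dist_eq_norm, dist_comm]; simpa using hy)
      have h2 := h (m + 1) (by omega) y
      calc _ ≤ ‖iteratedFDeriv ℝ (m + 1) g y‖ * ((1 + R) ^ k * (1 + ‖y‖) ^ k) := by gcongr
        _ = (1 + R) ^ k * ((1 + ‖y‖) ^ k * ‖iteratedFDeriv ℝ (m + 1) g y‖) := by ring
        _ ≤ _ := by gcongr)
    (x := x - w) (y := x - z) (by simpa using hw) (by simpa using hz)
  have e2 : ‖x - z - (x - w)‖ = ‖z - w‖ := by rw [← norm_neg]; congr 1; abel
  rw [e2] at mv
  calc _ ≤ (1 + ‖x‖) ^ k * ((1 + R) ^ k * C / (1 + ‖x‖) ^ k * ‖z - w‖) := by gcongr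
    _ = _ := by field_simp

theorem TT_tau_cont (n k m0 : ℕ) (g : SS n) : Continuous fun z => TT n k m0 (tau n z g) := by
  obtain ⟨C, hC, h⟩ := TT_tau_lip n k m0 g
  rw [continuous_iff_continuousAt]
  intro z
  rw [ContinuousAt, tendsto_iff_norm_sub_tendsto_zero]
  have h1 : Filter.Tendsto (fun w => (1 + (‖z‖ + 1)) ^ k * C * ‖w - z‖) (nhds z) (nhds 0) := by
    have : Continuous (fun w => (1 + (‖z‖ + 1)) ^ k * C * ‖w - z‖) := by fun_prop
    have := this.tendsto z
    simpa using this
  refine squeeze_zero' (Filter.Eventually.of_forall fun _ => norm_nonneg _) ?_ h1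
  filter_upwards [Metric.ball_mem_nhds z one_pos] with w hw
  apply h
  · have : ‖w - z‖ < 1 := by rwa [← dist_eq_norm]
    have := norm_add_le (w - z) z
    rw [sub_add_cancel] at this
    linarith
  · linarith

theorem schwartz_intble (n : ℕ) (K : ℕ) (g : SS n) :
    Integrable (fun ξ => (1 + ‖ξ‖) ^ K * ‖g ξ‖) := by
  have : (fun ξ => (1 + ‖ξ‖) ^ K * ‖g ξ‖) =
      fun ξ => ∑ m ∈ Finset.range (K + 1), (K.choose m : ℝ) * (‖ξ‖ ^ m * ‖g ξ‖) := by
    ext ξ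
    rw [add_comm, add_pow, Finset.sum_mul]
    refine Finset.sum_congr rfl fun m _ => ?_
    simp; ring
  rw [this]
  exact integrable_finsetSum _ fun m _ => (SchwartzMap.integrable_pow_mul volume g m).const_mul _

theorem TT_int (n k m0 : ℕ) (K g : SS n) :
    Integrable (fun z => K z • TT n k m0 (tau n z g)) := by
  obtain ⟨C, hC, h⟩ := TT_tau_growth n k m0 g
  refine ((schwartz_intble n k K).const_mul C).mono'
    (K.continuous.smul (TT_tau_cont n k m0 g)).aestronglyMeasurable ?_
  refine Filter.Eventually.of_forall fun z => ?_
  rw [norm_smul]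
  calc _ ≤ ‖K z‖ * ((1 + ‖z‖) ^ k * C) := by gcongr; exact h z
    _ = _ := by ring

def cv (n : ℕ) (K g : SS n) : SS n := FI n (mulS n (FS n K) (FS n g))

theorem cv_apply (n : ℕ) (K g : SS n) (x : RV n) : cv n K g x = ∫ z, K z * g (x - z) :=
  FI_mulS n K g x

theorem cv_deriv (n : ℕ) (K g : SS n) (v : RV n) : ∂_{v} (cv n K g) = cv n K (∂_{v} g) := by
  ext x
  rw [SchwartzMap.lineDerivOp_apply_eq_fderiv, cv_apply]
  have e : (⇑(cv n K g)) = fun x => ∫ z, K z * g (x - z) := by ext x; rw [cv_apply]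
  set B := SchwartzMap.seminorm ℝ 0 1 g
  have hB : ∀ x, ‖fderiv ℝ g x‖ ≤ B := by
    intro x
    have := SchwartzMap.le_seminorm ℝ 0 1 g x
    rw [pow_zero, one_mul, ← norm_fderiv_iteratedFDeriv] at this
    rw [norm_fderiv_iteratedFDeriv] at this
    rwa [norm_iteratedFDeriv_one] at this
  have hcd : Continuous (fderiv ℝ g) := (g.smooth 1).continuous_fderiv (by norm_num)
  have hd := hasFDerivAt_integral_of_dominated_of_fderiv_le (𝕜 := ℝ) (μ := volume)
    (F := fun x z => K z * g (x - z)) (F' := fun x z => K z • fderiv ℝ g (x - z))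
    (x₀ := x) (s := Set.univ) (bound := fun z => ‖K z‖ * B) Filter.univ_mem
    (Filter.Eventually.of_forall fun y => by
      have := K.continuous; have := g.continuous
      exact Continuous.aestronglyMeasurable (by fun_prop))
    (by
      have h1 : Integrable (fun z => SchwartzMap.seminorm ℝ 0 0 g * ‖K z‖) :=
        K.integrable.norm.const_mul _
      refine h1.mono' ?_ (Filter.Eventually.of_forall fun z => ?_)
      · have := K.continuous; have := g.continuous
        exact Continuous.aestronglyMeasurable (by fun_prop)
      · rw [norm_mul, mul_comm]
        gcongr
        exact SchwartzMap.norm_le_seminorm ℝ g _)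
    (by
      have := K.continuous
      exact Continuous.aestronglyMeasurable (by fun_prop))
    (Filter.Eventually.of_forall fun z y _ => by
      rw [norm_smul]; gcongr; exact hB _)
    (K.integrable.norm.mul_const _)
    (Filter.Eventually.of_forall fun z y _ => by
      have h1 : HasFDerivAt (fun y => g (y - z)) (fderiv ℝ g (y - z)) y := by
        have := (g.differentiableAt (x := y - z)).hasFDerivAt
        exact (hasFDerivAt_comp_sub z).2 this
      simpa using h1.const_mul (K z))
  rw [e, hd.fderiv]
  rw [ContinuousLinearMap.integral_apply]
  · refine integral_congr_ae (Filter.Eventually.of_forall fun z => ?_)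
    simp [SchwartzMap.lineDerivOp_apply_eq_fderiv]
  · refine (K.integrable.norm.mul_const B).mono' ?_ (Filter.Eventually.of_forall fun z => ?_)
    · have := K.continuous
      exact Continuous.aestronglyMeasurable (by fun_prop)
    · rw [norm_smul]; gcongr; exact hB _

theorem cv_iter (n : ℕ) (K g : SS n) (m : ℕ) (v : Fin m → RV n) :
    ∂^{v} (cv n K g) = cv n K (∂^{v} g) := by
  induction m generalizing g with
  | zero => simp
  | succ m ih =>
    rw [iteratedLineDerivOp_succ_left, iteratedLineDerivOp_succ_left, ih, cv_deriv]

theorem TT_cv (n k m0 : ℕ) (K g : SS n) :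
    TT n k m0 (cv n K g) = ∫ z, K z • TT n k m0 (tau n z g) := by
  have hI := TT_int n k m0 K g
  refine funext fun m => ?_
  ext x v
  let L1 : TE n m0 →L[ℝ] BF n m :=
    ContinuousLinearMap.proj (R := ℝ) (φ := fun m : Fin (m0 + 1) => BF n m) m
  let L2 : BF n m →L[ℝ] FM n m := BoundedContinuousFunction.evalCLM ℝ x
  let L3 : FM n m →L[ℝ] ℂ := ContinuousMultilinearMap.apply ℝ (fun _ : Fin m => RV n) ℂ v
  have h := (L3.comp (L2.comp L1)).integral_comp_comm hI
  change _ = (L3.comp (L2.comp L1)) (∫ z, K z • TT n k m0 (tau n z g))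
  rw [← h]
  have e1 : ∀ z, (L3.comp (L2.comp L1)) (K z • TT n k m0 (tau n z g)) =
      ((1 + ‖x‖) ^ k : ℝ) • (K z * (∂^{v} g) (x - z)) := by
    intro z
    change K z • (((1 + ‖x‖) ^ k : ℝ) • iteratedFDeriv ℝ m (tau n z g) x v) = _
    rw [tau_iter, SchwartzMap.iteratedLineDerivOp_eq_iteratedFDeriv]
    simp; ring
  simp_rw [e1]
  rw [integral_smul, ← cv_apply, ← cv_iter, SchwartzMap.iteratedLineDerivOp_eq_iteratedFDeriv]
  rfl

theorem dist_cv (n : ℕ) (f : TD n) (K g : SS n) :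
    f (cv n K g) = ∫ z, K z * f (tau n z g) := by
  obtain ⟨k, m0, F, hF⟩ := dist_rep n f
  rw [hF, TT_cv, ← F.integral_comp_comm (TT_int n k m0 K g)]
  refine integral_congr_ae (Filter.Eventually.of_forall fun z => ?_)
  simp [hF]

theorem dist_tau_cont (n : ℕ) (f : TD n) (g : SS n) : Continuous fun z => f (tau n z g) := by
  obtain ⟨k, m0, F, hF⟩ := dist_rep n f
  simp_rw [hF]
  exact F.continuous.comp (TT_tau_cont n k m0 g)

def reflS (n : ℕ) (y : RV n) : SS n →L[ℂ] SS n :=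
  (tau n y).comp (SchwartzMap.compCLMOfContinuousLinearEquiv ℂ (ContinuousLinearEquiv.neg ℝ))

theorem rflS_apply (n : ℕ) (y : RV n) (g : SS n) (x : RV n) : reflS n y g x = g (y - x) := by
  change g (-(x - y)) = g (y - x)
  rw [neg_sub]

theorem rflS_tau (n : ℕ) (y z : RV n) (g : SS n) : reflS n y (tau n z g) = reflS n (y - z) g := by
  ext x
  rw [rflS_apply, rflS_apply, SchwartzMap.compSubConstCLM_apply]
  congr 1; abel

theorem dist_conv_cv (n : ℕ) (f : TD n) (K g : SS n) (y : RV n) :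
    f (reflS n y (cv n K g)) = ∫ z, K z * f (reflS n (y - z) g) := by
  have := dist_cv n (f.comp (reflS n y)) K g
  simp only [ContinuousLinearMap.comp_apply, rflS_tau] at this
  exact this

theorem dist_conv_le (n : ℕ) (f : TD n) (K g : SS n) (y : RV n) :
    (‖f (reflS n y (cv n K g))‖₊ : ℝ≥0∞) ≤
      ∫⁻ z, (‖K z‖₊ : ℝ≥0∞) * (‖f (reflS n (y - z) g)‖₊ : ℝ≥0∞) := by
  rw [dist_conv_cv]
  refine (enorm_integral_le_lintegral_enorm _).trans (le_of_eq ?_)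
  refine lintegral_congr fun z => ?_
  rw [enorm_mul]; rfl


theorem dil_iter_le (n : ℕ) (a : Fin n → ℝ) (ha : ∀ i, 0 ≤ a i) (u : ℝ) (hu : 0 ≤ u) (g : SS n)
    (i : ℕ) (x : RV n) :
    ‖iteratedFDeriv ℝ i (dil n a (-u) g) x‖ ≤ ‖iteratedFDeriv ℝ i g (dilE n a (-u) x)‖ := by
  have e : (⇑(dil n a (-u) g)) = g ∘ (dilE n a (-u) : RV n →L[ℝ] RV n) := rfl
  rw [e, ContinuousLinearMap.iteratedFDeriv_comp_right _ (g.smooth ⊤) x (i := i)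
    (by exact_mod_cast le_top)]
  refine (ContinuousMultilinearMap.norm_compContinuousLinearMap_le _ _).trans ?_
  have hL : ‖(dilE n a (-u) : RV n →L[ℝ] RV n)‖ ≤ 1 := by
    refine ContinuousLinearMap.opNorm_le_bound _ zero_le_one fun v => ?_
    have := dil_norm_le n a 0 ha u hu v
    simp only [mul_zero, Real.rpow_zero] at this
    exact this
  refine mul_le_of_le_one_right (norm_nonneg _) ?_
  exact Finset.prod_le_one (fun _ _ => norm_nonneg _) fun _ _ => hL

theorem cutoff_tendsto (n : ℕ) (a : Fin n → ℝ) (ha : ∀ i, 1 ≤ a i) (χ G : SS n) (δ : ℝ) (hδ : 0 < δ)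
    (hχ : ∀ x : RV n, ‖x‖ < δ → χ x = 1) :
    Filter.Tendsto (fun N : ℕ => mulS n G (dil n a (-(N : ℝ)) χ)) Filter.atTop (nhds G) := by
  rw [(schwartz_withSeminorms ℂ (RV n) ℂ).tendsto_nhds (u := fun N : ℕ => mulS n G (dil n a (-(N : ℝ)) χ)) G]
  rintro ⟨k, m⟩ ε hε
  obtain ⟨C1, hC1, h1⟩ := decay n (k + 1) m G
  obtain ⟨S, hS, h2⟩ := decay n 0 m χ
  set C' : ℝ := C1 + ∑ i ∈ Finset.range (m + 1), (m.choose i : ℝ) * C1 * S with hC'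
  have hC'0 : 0 ≤ C' := by positivity
  have key : ∀ N : ℕ, SchwartzMap.seminorm ℂ k m (mulS n G (dil n a (-(N : ℝ)) χ) - G) ≤
      C' / δ * (1 / 2) ^ N := by
    intro N
    refine SchwartzMap.seminorm_le_bound ℂ _ _ _ (by positivity) fun x => ?_
    by_cases hx : ‖x‖ < δ * 2 ^ N
    · have : (⇑(mulS n G (dil n a (-(N : ℝ)) χ) - G)) =ᶠ[nhds x] fun _ => 0 := by
        have hb : Metric.ball (0 : RV n) (δ * 2 ^ N) ∈ nhds x :=
          Metric.isOpen_ball.mem_nhds (by simpa using hx)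
        filter_upwards [hb] with y hy
        have hy' : ‖y‖ < δ * 2 ^ N := by simpa using hy
        have hd := dil_norm_le n a 1 ha N (by positivity) y
        have : χ (fun i => (2 : ℝ) ^ (-(N : ℝ) * a i) * y i) = 1 := by
          apply hχ
          refine hd.trans_lt ?_
          rw [mul_one, Real.rpow_neg (by norm_num), Real.rpow_natCast, inv_mul_lt_iff₀ (by positivity)]
          linarith
        rw [_root_.sub_apply, mulS_apply, dil_apply, this]; ring
      rw [(this.iteratedFDeriv ℝ m).eq_of_nhds]
      have : iteratedFDeriv ℝ m (fun _ : RV n => (0 : ℂ)) x = 0 := by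
        simp
      rw [this]; simp; positivity
    · push Not at hx
      have e1 : ‖iteratedFDeriv ℝ m (⇑(mulS n G (dil n a (-(N : ℝ)) χ) - G)) x‖ ≤
          ‖iteratedFDeriv ℝ m (⇑(mulS n G (dil n a (-(N : ℝ)) χ))) x‖ + ‖iteratedFDeriv ℝ m G x‖ := by
        have : (⇑(mulS n G (dil n a (-(N : ℝ)) χ) - G)) = ⇑(mulS n G (dil n a (-(N : ℝ)) χ)) - ⇑G := rfl
        rw [this, iteratedFDeriv_sub_apply (SchwartzMap.smooth _ m).contDiffAt (G.smooth m).contDiffAt]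
        exact norm_sub_le _ _
      have e2 : ‖iteratedFDeriv ℝ m (⇑(mulS n G (dil n a (-(N : ℝ)) χ))) x‖ ≤
          ∑ i ∈ Finset.range (m + 1), (m.choose i : ℝ) * ‖iteratedFDeriv ℝ i G x‖ * S := by
        have : (⇑(mulS n G (dil n a (-(N : ℝ)) χ))) = fun y => G y * dil n a (-(N : ℝ)) χ y := by
          ext y; rw [mulS_apply]
        rw [this]
        refine (norm_iteratedFDeriv_mul_le (G.smooth m) (SchwartzMap.smooth _ m) x le_rfl).trans ?_
        refine Finset.sum_le_sum fun i hi => ?_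
        gcongr
        refine (dil_iter_le n a (fun i => zero_le_one.trans (ha i)) N (by positivity) χ _ x).trans ?_
        simpa using h2 (m - i) (by omega) (dilE n a (-(N : ℝ)) x)
      have hp : 0 < δ * 2 ^ N := by positivity
      have hx0 : 0 < ‖x‖ := hp.trans_le hx
      have e3 : ‖x‖ ^ k ≤ (1 + ‖x‖) ^ (k + 1) / (δ * 2 ^ N) := by
        rw [le_div_iff₀ hp, pow_succ]
        gcongr <;> linarith
      calc ‖x‖ ^ k * _ ≤ (1 + ‖x‖) ^ (k + 1) / (δ * 2 ^ N) *
            (∑ i ∈ Finset.range (m + 1), (m.choose i : ℝ) * ‖iteratedFDeriv ℝ i G x‖ * S +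
              ‖iteratedFDeriv ℝ m G x‖) := by
            gcongr
            linarith
        _ = ((1 + ‖x‖) ^ (k + 1) * ‖iteratedFDeriv ℝ m G x‖ + ∑ i ∈ Finset.range (m + 1),
              (m.choose i : ℝ) * ((1 + ‖x‖) ^ (k + 1) * ‖iteratedFDeriv ℝ i G x‖) * S) /
              (δ * 2 ^ N) := by
            rw [div_mul_eq_mul_div, mul_add, Finset.mul_sum]
            congr 1
            rw [add_comm]
            congr 1
            refine Finset.sum_congr rfl fun i _ => by ring
        _ ≤ C' / (δ * 2 ^ N) := by
            gcongr
            rw [hC']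
            gcongr with i hi
            · exact h1 m le_rfl x
            · exact h1 i (by simp at hi; omega) x
        _ = _ := by field_simp; rw [mul_assoc, ← mul_pow]; norm_num
  have hlim : Filter.Tendsto (fun N : ℕ => C' / δ * (1 / 2 : ℝ) ^ N) Filter.atTop (nhds 0) := by
    have := (tendsto_pow_atTop_nhds_zero_of_lt_one (r := (1 / 2 : ℝ)) (by norm_num)
      (by norm_num)).const_mul (C' / δ)
    simpa using this
  filter_upwards [hlim.eventually (gt_mem_nhds hε)] with N hN
  exact (key N).trans_lt hN


def mkS (n : ℕ) (u : RV n → ℂ) (h1 : HasCompactSupport u) (h2 : ContDiff ℝ (⊤ : ℕ∞) u) : SS n :=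
  h1.toSchwartzMap h2

theorem mkS_apply (n : ℕ) (u : RV n → ℂ) (h1 : HasCompactSupport u) (h2 : ContDiff ℝ (⊤ : ℕ∞) u)
    (x : RV n) : mkS n u h1 h2 x = u x := rfl

theorem div_lemma (n : ℕ) (u Φ : SS n) (hu : HasCompactSupport u)
    (h : ∀ x, Φ x = 0 → (⇑u) =ᶠ[nhds x] fun _ => 0) :
    ∃ μ : SS n, (∀ x, u x = 0 → μ x = 0) ∧ mulS n μ Φ = u := by
  have hc : HasCompactSupport (fun x => u x / Φ x) := by
    refine hu.mono fun x hx => ?_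
    simp only [Function.mem_support] at hx ⊢
    intro h0; exact hx (by simp [h0])
  have hs : ContDiff ℝ (⊤ : ℕ∞) (fun x => u x / Φ x) := by
    rw [contDiff_iff_contDiffAt]
    intro x
    by_cases hx : Φ x = 0
    · have : (fun x => u x / Φ x) =ᶠ[nhds x] fun _ => 0 := by
        filter_upwards [h x hx] with y hy
        simp [hy]
      exact contDiffAt_const.congr_of_eventuallyEq this
    · have h1 : ContDiffAt ℝ (⊤ : ℕ∞) (⇑u) x := (u.smooth _).contDiffAt
      have h2 : ContDiffAt ℝ (⊤ : ℕ∞) (⇑Φ) x := (Φ.smooth _).contDiffAt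
      simp only [div_eq_mul_inv]
      exact h1.mul (h2.inv hx)
  refine ⟨mkS n _ hc hs, fun x hx => by rw [mkS_apply, hx, zero_div], ?_⟩
  ext x
  rw [mulS_apply, mkS_apply]
  by_cases hx : Φ x = 0
  · have := (h x hx).eq_of_nhds
    simp [hx, this]
  · field_simp

def QQ (n : ℕ) (a : Fin n → ℝ) (ε : ℝ) (ξ : RV n) : ℝ := ∑ i, ξ i ^ 2 / (2 * ε) ^ (2 * a i)

theorem QQ_smooth (n : ℕ) (a : Fin n → ℝ) (ε : ℝ) : ContDiff ℝ (⊤ : ℕ∞) (QQ n a ε) := by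
  unfold QQ
  fun_prop

theorem QQ_dil (n : ℕ) (a : Fin n → ℝ) (ε : ℝ) (ξ : RV n) (u : ℝ) :
    QQ n a ε (dilE n a u ξ) = ∑ i, (2 : ℝ) ^ (2 * (u * a i)) * (ξ i ^ 2 / (2 * ε) ^ (2 * a i)) := by
  unfold QQ
  refine Finset.sum_congr rfl fun i _ => ?_
  rw [dilE_apply, mul_pow, ← Real.rpow_natCast (2 ^ (u * a i)), ← Real.rpow_mul (by norm_num)]
  rw [mul_div_assoc]
  congr 2
  push_cast; ring

theorem QQ_mono (n : ℕ) (a : Fin n → ℝ) (ha : ∀ i, 1 ≤ a i) (ε : ℝ) (hε : 0 < ε) (ξ : RV n) :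
    4 * QQ n a ε ξ ≤ QQ n a ε (dilE n a 1 ξ) := by
  rw [QQ_dil, QQ, Finset.mul_sum]
  refine Finset.sum_le_sum fun i _ => ?_
  refine mul_le_mul_of_nonneg_right ?_ (by positivity)
  have : (4 : ℝ) = 2 ^ (2 : ℝ) := by norm_num
  rw [this]
  exact Real.rpow_le_rpow_of_exponent_le (by norm_num) (by linarith [ha i])

theorem QQ_nonneg (n : ℕ) (a : Fin n → ℝ) (ε : ℝ) (hε : 0 < ε) (ξ : RV n) : 0 ≤ QQ n a ε ξ :=
  Finset.sum_nonneg fun i _ => by positivity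

theorem QQ_lt (n : ℕ) (a : Fin n → ℝ) (ha : ∀ i, 1 ≤ a i) (anorm : RV n → ℝ) (h : IsAnorm n a anorm)
    (ε : ℝ) (hε : 0 < ε) (ξ : RV n) (hQ : QQ n a ε ξ < 1) : anorm ξ < 2 * ε := by
  by_cases h0 : ξ = 0
  · rw [h0, h.1]; positivity
  · obtain ⟨h1, h2⟩ := h.2 ξ h0
    by_contra hc
    push Not at hc
    have : (1 : ℝ) ≤ QQ n a ε ξ := by
      rw [← h2, QQ]
      refine Finset.sum_le_sum fun i _ => ?_
      gcongr
      linarith [ha i]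
    linarith

theorem QQ_gt (n : ℕ) (a : Fin n → ℝ) (ha : ∀ i, 1 ≤ a i) (anorm : RV n → ℝ) (h : IsAnorm n a anorm)
    (ε : ℝ) (hε : 0 < ε) (ξ : RV n) (hQ : 1 / 2 < QQ n a ε (dilE n a 1 ξ)) : ε / 2 < anorm ξ := by
  have h0 : ξ ≠ 0 := by
    rintro rfl
    rw [map_zero] at hQ
    have : QQ n a ε 0 = 0 := by simp [QQ]
    linarith
  obtain ⟨h1, h2⟩ := h.2 ξ h0
  by_contra hc
  push Not at hc
  have e1 : QQ n a ε (dilE n a 1 (dilE n a 1 ξ)) ≤ 1 := by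
    refine le_of_le_of_eq ?_ h2
    rw [QQ_dil]
    refine Finset.sum_le_sum fun i _ => ?_
    rw [dilE_apply]
    have e2 : (2 : ℝ) ^ (2 * (1 * a i)) * ((2 ^ (1 * a i) * ξ i) ^ 2 / (2 * ε) ^ (2 * a i)) =
        ξ i ^ 2 / (ε / 2) ^ (2 * a i) := by
      have e3 : (2 * ε) ^ (2 * a i) = (2 : ℝ) ^ (2 * (1 * a i)) * (2 ^ (1 * a i)) ^ 2 * (ε / 2) ^ (2 * a i) := by
        rw [← Real.rpow_natCast (2 ^ (1 * a i)), ← Real.rpow_mul (by norm_num),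
          show 2 * ε = 2 * 2 * (ε / 2) by ring, Real.mul_rpow (by norm_num) (by positivity),
          Real.mul_rpow (by norm_num) (by norm_num)]
        congr 3 <;> (push_cast; ring)
      rw [e3]
      field_simp
    rw [e2]
    gcongr
    linarith [ha i]
  have e4 := QQ_mono n a ha ε hε (dilE n a 1 ξ)
  linarith

def chiF (n : ℕ) (a : Fin n → ℝ) (ε : ℝ) (ξ : RV n) : ℂ :=
  ((Real.smoothTransition (6 - 8 * QQ n a ε ξ) : ℝ) : ℂ)

theorem chiF_one (n : ℕ) (a : Fin n → ℝ) (ε : ℝ) (ξ : RV n) (h : QQ n a ε ξ ≤ 5 / 8) :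
    chiF n a ε ξ = 1 := by
  rw [chiF, Real.smoothTransition.one_of_one_le (by linarith)]; simp

theorem chiF_zero (n : ℕ) (a : Fin n → ℝ) (ε : ℝ) (ξ : RV n) (h : 3 / 4 ≤ QQ n a ε ξ) :
    chiF n a ε ξ = 0 := by
  rw [chiF, Real.smoothTransition.zero_of_nonpos (by linarith)]; simp

theorem chiF_smooth (n : ℕ) (a : Fin n → ℝ) (ε : ℝ) : ContDiff ℝ (⊤ : ℕ∞) (chiF n a ε) := by
  have h1 : ContDiff ℝ (⊤ : ℕ∞) fun ξ => Real.smoothTransition (6 - 8 * QQ n a ε ξ) :=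
    Real.smoothTransition.contDiff.comp (contDiff_const.sub (contDiff_const.mul (QQ_smooth n a ε)))
  exact Complex.ofRealCLM.contDiff.comp h1

theorem chiF_compact (n : ℕ) (a : Fin n → ℝ) (ε : ℝ) (hε : 0 < ε) :
    HasCompactSupport (chiF n a ε) := by
  refine HasCompactSupport.intro (K := Set.pi Set.univ
    fun i => Set.Icc (-((2 * ε) ^ (a i))) ((2 * ε) ^ (a i)))
    (isCompact_univ_pi fun i => isCompact_Icc) fun x hx => ?_
  apply chiF_zero
  simp only [Set.mem_pi, Set.mem_univ, true_implies, Set.mem_Icc, not_forall] at hx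
  obtain ⟨i, hi⟩ := hx
  rw [← abs_le, not_le] at hi
  have : (1 : ℝ) ≤ x i ^ 2 / (2 * ε) ^ (2 * a i) := by
    rw [le_div_iff₀ (by positivity), one_mul, mul_comm 2 (a i), Real.rpow_mul (by positivity),
      ← sq_abs]
    norm_cast
    gcongr
  have h2 : x i ^ 2 / (2 * ε) ^ (2 * a i) ≤ QQ n a ε x :=
    Finset.single_le_sum (f := fun i => x i ^ 2 / (2 * ε) ^ (2 * a i))
      (fun i _ => by positivity) (Finset.mem_univ i)
  linarith

theorem calderon (n : ℕ) (a : Fin n → ℝ) (ha : ∀ i, 1 ≤ a i)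
    (anorm : RV n → ℝ) (h : IsAnorm n a anorm) (φ0 φ : SS n) (ε : ℝ) (hε : 0 < ε)
    (hT : Tauber n anorm (⇑φ0) (⇑φ) ε) :
    ∃ (χ μ0 μ : SS n) (δ : ℝ), 0 < δ ∧ (∀ x : RV n, ‖x‖ < δ → χ x = 1) ∧
      (∀ x : RV n, ‖x‖ < δ → μ x = 0) ∧ mulS n μ0 (FS n φ0) = χ ∧
      mulS n μ (FS n φ) = χ - dil n a 1 χ := by
  set χ : SS n := mkS n (chiF n a ε) (chiF_compact n a ε hε) (chiF_smooth n a ε) with hχ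
  have hχa : ∀ x, χ x = chiF n a ε x := fun x => rfl
  have hχd : ∀ x, dil n a 1 χ x = chiF n a ε (dilE n a 1 x) := fun x => rfl
  have hQc : Continuous (QQ n a ε) := (QQ_smooth n a ε).continuous
  have hQd : Continuous fun x => QQ n a ε (dilE n a 1 x) := hQc.comp (dilE n a 1).continuous
  have hQle : ∀ x, QQ n a ε x ≤ QQ n a ε (dilE n a 1 x) := fun x => by
    linarith [QQ_mono n a ha ε hε x, QQ_nonneg n a ε hε x]
  obtain ⟨μ0, -, hμ0⟩ := div_lemma n χ (FS n φ0) (chiF_compact n a ε hε) (by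
    intro x hx
    have hQ1 : 1 ≤ QQ n a ε x := by
      by_contra hc
      push Not at hc
      have := hT.1 x (QQ_lt n a ha anorm h ε hε x hc)
      rw [← FS_apply, hx] at this
      simp at this
    have : ∀ᶠ y in nhds x, 3 / 4 < QQ n a ε y :=
      hQc.continuousAt.eventually (lt_mem_nhds (by linarith))
    filter_upwards [this] with y hy
    rw [hχa, chiF_zero n a ε y hy.le])
  have hcs : HasCompactSupport (⇑(χ - dil n a 1 χ)) := by
    refine (chiF_compact n a ε hε).mono fun x hx => ?_
    simp only [Function.mem_support] at hx ⊢
    intro h0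
    apply hx
    rw [_root_.sub_apply, hχa, hχd]
    by_cases h1 : 3 / 4 ≤ QQ n a ε x
    · rw [chiF_zero n a ε x h1, chiF_zero n a ε _ (h1.trans (hQle x))]; simp
    · rw [h0]
      by_cases h2 : QQ n a ε x ≤ 5 / 8
      · rw [chiF_one n a ε x h2] at h0; simp at h0
      · rw [chiF_zero]
        · simp
        · push Not at h2
          linarith [QQ_mono n a ha ε hε x]
  have hz : ∀ y, QQ n a ε (dilE n a 1 y) < 5 / 8 → (χ - dil n a 1 χ) y = 0 := by
    intro y hy
    rw [_root_.sub_apply, hχa, hχd, chiF_one n a ε _ hy.le, chiF_one n a ε _ ((hQle y).trans hy.le)]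
    simp
  obtain ⟨μ, hμ1, hμ⟩ := div_lemma n (χ - dil n a 1 χ) (FS n φ) hcs (by
    intro x hx
    by_cases hQ1 : 1 ≤ QQ n a ε x
    · have : ∀ᶠ y in nhds x, 3 / 4 < QQ n a ε y :=
        hQc.continuousAt.eventually (lt_mem_nhds (by linarith))
      filter_upwards [this] with y hy
      rw [_root_.sub_apply, hχa, hχd, chiF_zero n a ε _ hy.le,
        chiF_zero n a ε _ (hy.le.trans (hQle y))]
      simp
    · push Not at hQ1
      by_cases hQ2 : 1 / 2 < QQ n a ε (dilE n a 1 x)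
      · have := hT.2 x (QQ_gt n a ha anorm h ε hε x hQ2) (QQ_lt n a ha anorm h ε hε x hQ1)
        rw [← FS_apply, hx] at this
        simp at this
      · push Not at hQ2
        have : ∀ᶠ y in nhds x, QQ n a ε (dilE n a 1 y) < 5 / 8 :=
          hQd.continuousAt.eventually (gt_mem_nhds (by linarith))
        filter_upwards [this] with y hy
        exact hz y hy)
  have hnear : ∀ᶠ y in nhds (0 : RV n), QQ n a ε (dilE n a 1 y) < 5 / 8 :=
    hQd.continuousAt.eventually (gt_mem_nhds (by simp [QQ]))
  obtain ⟨δ, hδ, hb⟩ := Metric.eventually_nhds_iff.1 hnear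
  refine ⟨χ, μ0, μ, δ, hδ, fun x hx => ?_, fun x hx => ?_, hμ0, hμ⟩
  · rw [hχa, chiF_one]
    exact (hQle x).trans (hb (by simpa using hx)).le
  · exact hμ1 x (hz x (hb (by simpa using hx)))


theorem mix_le (n : ℕ) (p : Fin n → ℝ≥0∞) (hp : ∀ i, 0 < p i ∧ p i ≠ ∞) (c : ℝ≥0∞) (hc : c ≠ ∞)
    (F G : RV n → ℝ≥0∞) (hFG : ∀ x, F x ≤ c * G x) (l : ℕ) :
    ∀ x, mixAux n p l F x ≤ c * mixAux n p l G x := by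
  induction l with
  | zero => exact hFG
  | succ l ih =>
    intro x
    simp only [mixAux]
    by_cases hl : l < n
    · simp only [dif_pos hl, if_neg (hp ⟨l, hl⟩).2]
      have hP : 0 < (p ⟨l, hl⟩).toReal := ENNReal.toReal_pos (hp _).1.ne' (hp _).2
      set P := (p ⟨l, hl⟩).toReal
      calc _ ≤ (∫⁻ t : ℝ, c ^ P * (mixAux n p l G (Function.update x ⟨l, hl⟩ t)) ^ P) ^ (1 / P) := by
            refine ENNReal.rpow_le_rpow (lintegral_mono fun t => ?_) (by positivity)
            rw [← ENNReal.mul_rpow_of_nonneg _ _ hP.le]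
            exact ENNReal.rpow_le_rpow (ih _) hP.le
        _ = _ := by
            rw [lintegral_const_mul' _ _ (ENNReal.rpow_ne_top_of_nonneg hP.le hc),
              ENNReal.mul_rpow_of_nonneg _ _ (by positivity), ← ENNReal.rpow_mul,
              mul_one_div_cancel hP.ne', ENNReal.rpow_one]
    · simp only [dif_neg hl]
      exact ih x

def gw (β : ℝ) (j k : ℕ) : ℝ≥0∞ := ENNReal.ofReal (2 ^ (-(β * |(j : ℝ) - k|)))

theorem gw_sum (β : ℝ) (hβ : 0 < β) : ∃ W : ℝ≥0∞, W ≠ ∞ ∧ (∀ j, ∑' k, gw β j k ≤ W) ∧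
    ∀ k, ∑' j, gw β j k ≤ W := by
  set g : ℤ → ℝ := fun z => 2 ^ (-(β * |(z : ℝ)|)) with hg
  have hs : Summable g := by
    have h1 : Summable fun m : ℕ => ((2 : ℝ) ^ (-β)) ^ m :=
      summable_geometric_of_lt_one (by positivity)
        (Real.rpow_lt_one_of_one_lt_of_neg (by norm_num) (by linarith))
    have h2 : ∀ m : ℕ, (2 : ℝ) ^ (-(β * (m : ℝ))) = ((2 : ℝ) ^ (-β)) ^ m := fun m => by
      rw [← Real.rpow_natCast, ← Real.rpow_mul (by norm_num)]; ring_nf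
    refine Summable.of_nat_of_neg ?_ ?_
    · refine h1.congr fun m => ?_
      rw [← h2]; simp [hg]
    · refine h1.congr fun m => ?_
      rw [← h2]; simp [hg]
  have hW : ∑' z : ℤ, ENNReal.ofReal (g z) ≠ ∞ := hs.tsum_ofReal_ne_top
  have key : ∀ j, ∑' k, gw β j k ≤ ∑' z : ℤ, ENNReal.ofReal (g z) := by
    intro j
    have hi : Function.Injective fun k : ℕ => (j : ℤ) - k := fun x y hxy => by
      simpa using hxy
    refine le_trans (le_of_eq ?_) (ENNReal.tsum_comp_le_tsum_of_injective hi _)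
    refine tsum_congr fun k => ?_
    simp [gw, hg]
  refine ⟨_, hW, key, fun k => ?_⟩
  refine le_trans (le_of_eq (tsum_congr fun j => ?_)) (key k)
  rw [gw, gw, abs_sub_comm]

def lq (q : ℝ≥0∞) (u : ℕ → ℝ≥0∞) : ℝ≥0∞ :=
  if q = ∞ then ⨆ k, u k else (∑' k, u k ^ q.toReal) ^ (1 / q.toReal)

theorem hardy (q : ℝ≥0∞) (hq : 0 < q) (δ : ℝ) (hδ : 0 < δ) : ∃ c : ℝ≥0∞, c ≠ ∞ ∧
    ∀ (X : ℝ≥0∞) (S R : ℕ → ℝ≥0∞), (∀ j, S j ≤ X * ∑' k, gw δ j k * R k) →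
      lq q S ≤ c * X * lq q R := by
  by_cases hqi : q = ∞
  · obtain ⟨W, hW, h1, -⟩ := gw_sum δ hδ
    refine ⟨W, hW, fun X S R h => ?_⟩
    simp only [lq, if_pos hqi]
    refine iSup_le fun j => (h j).trans ?_
    rw [mul_comm W X, mul_assoc]
    gcongr
    calc _ ≤ ∑' k, gw δ j k * ⨆ k, R k := ENNReal.tsum_le_tsum fun k => by
            gcongr; exact le_iSup R k
      _ = (∑' k, gw δ j k) * ⨆ k, R k := ENNReal.tsum_mul_right
      _ ≤ _ := by gcongr; exact h1 j
  · have hP : 0 < q.toReal := ENNReal.toReal_pos hq.ne' hqi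
    set P := q.toReal
    obtain ⟨W, hW, h1, -⟩ := gw_sum (δ / 2) (by positivity)
    obtain ⟨V, hV, -, h2⟩ := gw_sum (δ / 2 * P) (by positivity)
    have hgP : ∀ j k, gw (δ / 2) j k ^ P = gw (δ / 2 * P) j k := fun j k => by
      rw [gw, gw, ENNReal.ofReal_rpow_of_nonneg (by positivity) hP.le, ← Real.rpow_mul (by norm_num)]
      ring_nf
    have hg2 : ∀ j k, gw δ j k = gw (δ / 2) j k * gw (δ / 2) j k := fun j k => by
      rw [gw, gw, ← ENNReal.ofReal_mul (by positivity), ← Real.rpow_add (by norm_num)]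
      ring_nf
    refine ⟨W * V ^ (1 / P), ENNReal.mul_ne_top hW (ENNReal.rpow_ne_top_of_nonneg (by positivity) hV),
      fun X S R h => ?_⟩
    simp only [lq, if_neg hqi]
    have hS : ∀ j, S j ^ P ≤ (X * W) ^ P * ∑' k, gw (δ / 2 * P) j k * R k ^ P := fun j => by
      have e1 : ∀ k, gw (δ / 2) j k * R k ≤ (∑' k, gw (δ / 2 * P) j k * R k ^ P) ^ (1 / P) := fun k => by
        rw [one_div, ENNReal.le_rpow_inv_iff hP, ENNReal.mul_rpow_of_nonneg _ _ hP.le, hgP]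
        exact ENNReal.le_tsum (f := fun k => gw (δ / 2 * P) j k * R k ^ P) k
      have e2 : S j ≤ X * W * (∑' k, gw (δ / 2 * P) j k * R k ^ P) ^ (1 / P) := by
        refine (h j).trans ?_
        rw [mul_assoc]
        gcongr
        calc _ ≤ ∑' k, gw (δ / 2) j k * (∑' k, gw (δ / 2 * P) j k * R k ^ P) ^ (1 / P) :=
              ENNReal.tsum_le_tsum fun k => by
                rw [hg2, mul_assoc]; gcongr; exact e1 k
          _ = (∑' k, gw (δ / 2) j k) * (∑' k, gw (δ / 2 * P) j k * R k ^ P) ^ (1 / P) :=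
              ENNReal.tsum_mul_right
          _ ≤ _ := by gcongr; exact h1 j
      refine (ENNReal.rpow_le_rpow e2 hP.le).trans (le_of_eq ?_)
      rw [ENNReal.mul_rpow_of_nonneg _ _ hP.le, ← ENNReal.rpow_mul, one_div_mul_cancel hP.ne',
        ENNReal.rpow_one]
    have hT : ∑' j, S j ^ P ≤ (X * W) ^ P * (V * ∑' k, R k ^ P) := by
      calc _ ≤ ∑' j, (X * W) ^ P * ∑' k, gw (δ / 2 * P) j k * R k ^ P := ENNReal.tsum_le_tsum hS
        _ = (X * W) ^ P * ∑' k, ∑' j, gw (δ / 2 * P) j k * R k ^ P := by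
            rw [ENNReal.tsum_mul_left, ENNReal.tsum_comm]
        _ ≤ _ := by
            gcongr
            rw [← ENNReal.tsum_mul_left]
            refine ENNReal.tsum_le_tsum fun k => ?_
            rw [ENNReal.tsum_mul_right]
            gcongr; exact h2 k
    refine (ENNReal.rpow_le_rpow hT (by positivity : 0 ≤ 1 / P)).trans (le_of_eq ?_)
    rw [ENNReal.mul_rpow_of_nonneg _ _ (by positivity), ENNReal.mul_rpow_of_nonneg V _ (by positivity),
      ← ENNReal.rpow_mul, mul_one_div_cancel hP.ne', ENNReal.rpow_one]
    ring

theorem seq_le (n : ℕ) (p : Fin n → ℝ≥0∞) (hp : ∀ i, 0 < p i ∧ p i ≠ ∞) (q : ℝ≥0∞) (hq : 0 < q)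
    (δ : ℝ) (hδ : 0 < δ) : ∃ c : ℝ≥0∞, c ≠ ∞ ∧
    ∀ (X : ℝ≥0∞), X ≠ ∞ → ∀ (S R : ℕ → RV n → ℝ≥0∞),
      (∀ j x, S j x ≤ X * ∑' k, gw δ j k * R k x) →
      seqNorm n p q S ≤ c * X * seqNorm n p q R := by
  obtain ⟨c, hc, h⟩ := hardy q hq δ hδ
  refine ⟨c, hc, fun X hX S R hSR => ?_⟩
  exact mix_le n p hp (c * X) (ENNReal.mul_ne_top hc hX) _ _
    (fun x => h X (fun j => S j x) (fun k => R k x) fun j => hSR j x) n _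


def genS (n : ℕ) (a : Fin n → ℝ) (G0 G : SS n) : ℕ → SS n
  | 0 => G0
  | k + 1 => dil n a (-((k : ℝ) + 1)) G

def famS (n : ℕ) (a : Fin n → ℝ) (φ0 φ : SS n) : ℕ → SS n
  | 0 => φ0
  | k + 1 => (((2 : ℝ) ^ (((k : ℝ) + 1) * ∑ i, a i) : ℝ) : ℂ) • dil n a ((k : ℝ) + 1) φ

theorem famS_coe (n : ℕ) (a : Fin n → ℝ) (φ0 φ : SS n) (k : ℕ) (x : RV n) :
    famS n a φ0 φ k x = fam n a (⇑φ0) (⇑φ) k x := by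
  cases k with
  | zero => rfl
  | succ k => rfl

theorem FS_famS (n : ℕ) (a : Fin n → ℝ) (φ0 φ : SS n) (k : ℕ) :
    FS n (famS n a φ0 φ k) = genS n a (FS n φ0) (FS n φ) k := by
  cases k with
  | zero => rfl
  | succ k => exact FS_dil n a _ φ

theorem telescope (n : ℕ) (a : Fin n → ℝ) (χ μ0 μ Φ0 Φ : SS n) (h0 : mulS n μ0 Φ0 = χ)
    (h1 : mulS n μ Φ = χ - dil n a 1 χ) (N : ℕ) :
    ∑ k ∈ Finset.range (N + 1), mulS n (genS n a μ0 μ k) (genS n a Φ0 Φ k) =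
      dil n a (-(N : ℝ)) χ := by
  induction N with
  | zero => simp [genS, h0, dil_zero]
  | succ N ih =>
    rw [Finset.sum_range_succ, ih]
    simp only [genS]
    rw [← dil_mulS, h1, map_sub, dil_dil]
    rw [show -((N : ℝ) + 1) + 1 = -(N : ℝ) by ring]
    push_cast
    abel

theorem conv_series (n : ℕ) (a : Fin n → ℝ) (ha : ∀ i, 1 ≤ a i) (φ0 φ χ μ0 μ : SS n) (δ : ℝ)
    (hδ : 0 < δ) (hχ : ∀ x : RV n, ‖x‖ < δ → χ x = 1) (h0 : mulS n μ0 (FS n φ0) = χ)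
    (h1 : mulS n μ (FS n φ) = χ - dil n a 1 χ) (f : TD n) (ψ : SS n) (y : RV n) :
    (‖f (reflS n y ψ)‖₊ : ℝ≥0∞) ≤ ∑' k, ∫⁻ z, (‖FI n (mulS n (FS n ψ) (genS n a μ0 μ k)) z‖₊ : ℝ≥0∞) *
      (‖f (reflS n (y - z) (famS n a φ0 φ k))‖₊ : ℝ≥0∞) := by
  set T : SS n → ℂ := fun g => f (reflS n y (FI n g)) with hT
  have hTc : Continuous T := f.continuous.comp ((reflS n y).continuous.comp (FI n).continuous)
  have t1 := (hTc.tendsto _).comp (cutoff_tendsto n a ha χ (FS n ψ) δ hδ hχ)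
  have t2 : Filter.Tendsto (fun N : ℕ => (‖T (mulS n (FS n ψ) (dil n a (-(N : ℝ)) χ))‖₊ : ℝ≥0∞))
      Filter.atTop (nhds (‖T (FS n ψ)‖₊ : ℝ≥0∞)) :=
    ENNReal.tendsto_coe.2 (t1.nnnorm)
  have e0 : T (FS n ψ) = f (reflS n y ψ) := by simp only [hT, FI_FS]
  rw [e0] at t2
  refine le_of_tendsto' t2 fun N => ?_
  have e1 : mulS n (FS n ψ) (dil n a (-(N : ℝ)) χ) = ∑ k ∈ Finset.range (N + 1),
      mulS n (mulS n (FS n ψ) (genS n a μ0 μ k)) (FS n (famS n a φ0 φ k)) := by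
    rw [← telescope n a χ μ0 μ _ _ h0 h1 N]
    ext x
    simp only [mulS_apply, sum_apply, Finset.mul_sum, FS_famS, mul_assoc]
  have e2 : T (mulS n (FS n ψ) (dil n a (-(N : ℝ)) χ)) = ∑ k ∈ Finset.range (N + 1),
      f (reflS n y (cv n (FI n (mulS n (FS n ψ) (genS n a μ0 μ k))) (famS n a φ0 φ k))) := by
    simp only [hT, cv, FS_FI, e1, map_sum]
  rw [e2]
  calc _ ≤ ∑ k ∈ Finset.range (N + 1),
      (‖f (reflS n y (cv n (FI n (mulS n (FS n ψ) (genS n a μ0 μ k))) (famS n a φ0 φ k)))‖₊ : ℝ≥0∞) := by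
        exact_mod_cast nnnorm_sum_le _ _
    _ ≤ ∑ k ∈ Finset.range (N + 1), _ := Finset.sum_le_sum fun k _ => dist_conv_le n f _ _ y
    _ ≤ _ := ENNReal.sum_le_tsum _

def WW (n : ℕ) (a r : Fin n → ℝ) (u : ℝ) (z : RV n) : ℝ := ∏ l, (1 + (2 : ℝ) ^ (u * a l) * |z l|) ^ (r l)

theorem WW_pos (n : ℕ) (a r : Fin n → ℝ) (u : ℝ) (z : RV n) : 0 < WW n a r u z := by
  unfold WW; positivity

theorem WW_cont (n : ℕ) (a r : Fin n → ℝ) (u : ℝ) : Continuous (WW n a r u) := by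
  unfold WW
  refine continuous_finsetProd _ fun l _ => ?_
  refine Continuous.rpow_const (by fun_prop) fun z => Or.inl ?_
  positivity

theorem WW_add (n : ℕ) (a r : Fin n → ℝ) (hr : ∀ l, 0 < r l) (u : ℝ) (x z : RV n) :
    WW n a r u (x + z) ≤ WW n a r u x * WW n a r u z := by
  unfold WW
  rw [← Finset.prod_mul_distrib]
  refine Finset.prod_le_prod (fun l _ => by positivity) fun l _ => ?_
  rw [← Real.mul_rpow (by positivity) (by positivity)]
  refine Real.rpow_le_rpow (by positivity) ?_ (hr l).le
  have h1 : |(x + z) l| ≤ |x l| + |z l| := abs_add_le _ _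
  have h2 : (0 : ℝ) < 2 ^ (u * a l) := by positivity
  nlinarith [mul_le_mul_of_nonneg_left h1 h2.le, mul_nonneg (mul_nonneg h2.le (abs_nonneg (x l))) (mul_nonneg h2.le (abs_nonneg (z l)))]

theorem WW_dil (n : ℕ) (a r : Fin n → ℝ) (u v : ℝ) (z : RV n) :
    WW n a r u (dilE n a v z) = WW n a r (u + v) z := by
  unfold WW
  refine Finset.prod_congr rfl fun l _ => ?_
  rw [dilE_apply, abs_mul, abs_of_pos (by positivity), ← mul_assoc, ← Real.rpow_add (by norm_num)]
  ring_nf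

theorem WW_scale (n : ℕ) (a r : Fin n → ℝ) (ha : ∀ l, 1 ≤ a l) (hr : ∀ l, 0 < r l) (u d : ℝ)
    (hd : 0 ≤ d) (z : RV n) :
    WW n a r (u + d) z ≤ 2 ^ (d * ∑ l, a l * r l) * WW n a r u z := by
  unfold WW
  rw [Finset.mul_sum, Real.rpow_sum_of_pos (by norm_num), ← Finset.prod_mul_distrib]
  refine Finset.prod_le_prod (fun l _ => by positivity) fun l _ => ?_
  rw [← mul_assoc, Real.rpow_mul (by norm_num) (d * a l) (r l), ← Real.mul_rpow (by positivity) (by positivity)]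
  refine Real.rpow_le_rpow (by positivity) ?_ (hr l).le
  rw [add_mul, Real.rpow_add (by norm_num)]
  have : (1 : ℝ) ≤ 2 ^ (d * a l) :=
    Real.one_le_rpow (by norm_num) (mul_nonneg hd (by linarith [ha l]))
  nlinarith

theorem WW_mono (n : ℕ) (a r : Fin n → ℝ) (ha : ∀ l, 1 ≤ a l) (hr : ∀ l, 0 < r l) (u v : ℝ)
    (h : u ≤ v) (z : RV n) : WW n a r u z ≤ WW n a r v z := by
  unfold WW
  refine Finset.prod_le_prod (fun l _ => by positivity) fun l _ => ?_
  refine Real.rpow_le_rpow (by positivity) ?_ (hr l).le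
  have := ha l
  gcongr
  norm_num

theorem WW_max (n : ℕ) (a r : Fin n → ℝ) (ha : ∀ l, 1 ≤ a l) (hr : ∀ l, 0 < r l) (u v : ℝ) (z : RV n) :
    WW n a r v z ≤ 2 ^ (max (v - u) 0 * ∑ l, a l * r l) * WW n a r u z := by
  refine (WW_mono n a r ha hr v (u + max (v - u) 0) ?_ z).trans
    (WW_scale n a r ha hr u _ (le_max_right _ _) z)
  linarith [le_max_left (v - u) 0]

theorem FI_dil (n : ℕ) (a : Fin n → ℝ) (u : ℝ) (H : SS n) :
    FI n (dil n a (-u) H) = (((2 : ℝ) ^ (u * ∑ i, a i) : ℝ) : ℂ) • dil n a u (FI n H) := by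
  have := FS_dil n a u (FI n H)
  rw [FS_FI] at this
  rw [← this, FI_FS]

theorem kern_scale (n : ℕ) (a r : Fin n → ℝ) (ha : ∀ l, 1 ≤ a l) (hr : ∀ l, 0 < r l) (k l : ℝ)
    (hkl : l ≤ k) (H : SS n) :
    ∫⁻ z, ENNReal.ofReal (WW n a r k z) * (‖FI n (dil n a (-l) H) z‖₊ : ℝ≥0∞) ≤
      ENNReal.ofReal (2 ^ ((k - l) * ∑ i, a i * r i)) *
        ∫⁻ z, ENNReal.ofReal (∏ l, (1 + |z l|) ^ (r l)) * (‖FI n H z‖₊ : ℝ≥0∞) := by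
  rw [← lintegral_dil n a l (fun z => ENNReal.ofReal (∏ l, (1 + |z l|) ^ (r l)) * (‖FI n H z‖₊ : ℝ≥0∞)),
    ← lintegral_const_mul' _ _ ENNReal.ofReal_ne_top, ← lintegral_const_mul' _ _ ENNReal.ofReal_ne_top]
  refine lintegral_mono fun z => ?_
  have e1 : (‖FI n (dil n a (-l) H) z‖₊ : ℝ≥0∞) =
      ENNReal.ofReal (2 ^ (l * ∑ i, a i)) * (‖FI n H (dilE n a l z)‖₊ : ℝ≥0∞) := by
    rw [FI_dil]
    have : ((((2 : ℝ) ^ (l * ∑ i, a i) : ℝ) : ℂ) • dil n a l (FI n H)) z =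
      (((2 : ℝ) ^ (l * ∑ i, a i) : ℝ) : ℂ) * FI n H (dilE n a l z) := rfl
    rw [this, nnnorm_mul, ENNReal.coe_mul]
    congr 1
    rw [← enorm_eq_nnnorm, ← ofReal_norm, Complex.norm_real, Real.norm_of_nonneg (by positivity)]
  have e2 : ∏ i, (1 + |dilE n a l z i|) ^ (r i) = WW n a r l z := by
    have := WW_dil n a r 0 l z
    rw [zero_add] at this
    rw [← this, WW]
    simp
  have e3 : ENNReal.ofReal (WW n a r k z) ≤
      ENNReal.ofReal (2 ^ ((k - l) * ∑ i, a i * r i)) * ENNReal.ofReal (WW n a r l z) := by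
    rw [← ENNReal.ofReal_mul (by positivity)]
    refine ENNReal.ofReal_le_ofReal ?_
    have := WW_scale n a r ha hr l (k - l) (by linarith) z
    rwa [add_sub_cancel] at this
  rw [e1]
  simp only []
  rw [e2]
  refine (mul_le_mul_left e3 _).trans (le_of_eq ?_)
  ring

theorem pfs_point (n : ℕ) (a r : Fin n → ℝ) (hr : ∀ l, 0 < r l) (F : RV n → ℂ) (k : ℕ)
    (x y z : RV n) : (‖F (y - z)‖₊ : ℝ≥0∞) ≤
      pfs n a r F k x * (ENNReal.ofReal (WW n a r k (x - y)) * ENNReal.ofReal (WW n a r k z)) := by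
  have h1 : ENNReal.ofReal (‖F (y - z)‖ / WW n a r k (x - (y - z))) ≤ pfs n a r F k x :=
    le_iSup (fun y : RV n => ENNReal.ofReal (‖F y‖ / ∏ l, (1 + (2 : ℝ) ^ ((k : ℝ) * a l) * |x l - y l|) ^ (r l)))
      (y - z)
  have h2 : WW n a r k (x - (y - z)) ≤ WW n a r k (x - y) * WW n a r k z := by
    rw [show x - (y - z) = (x - y) + z by abel]
    exact WW_add n a r hr k _ _
  rw [← ENNReal.ofReal_mul (WW_pos _ _ _ _ _).le]
  calc (‖F (y - z)‖₊ : ℝ≥0∞) = ENNReal.ofReal (‖F (y - z)‖ / WW n a r k (x - (y - z))) *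
        ENNReal.ofReal (WW n a r k (x - (y - z))) := by
        rw [← ENNReal.ofReal_mul (div_nonneg (norm_nonneg _) (WW_pos _ _ _ _ _).le),
          div_mul_cancel₀ _ (WW_pos _ _ _ _ _).ne', ofReal_norm]; rfl
    _ ≤ _ := by gcongr

theorem main_point (n : ℕ) (a r : Fin n → ℝ) (ha : ∀ l, 1 ≤ a l) (hr : ∀ l, 0 < r l)
    (F : ℕ → RV n → ℂ) (Q : RV n → ℂ) (Kk : ℕ → RV n → ℂ) (E : ℕ → ℝ≥0∞) (j : ℕ)
    (hE : ∀ k : ℕ, ∫⁻ z, ENNReal.ofReal (WW n a r k z) * (‖Kk k z‖₊ : ℝ≥0∞) ≤ E k)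
    (hQ : ∀ y, (‖Q y‖₊ : ℝ≥0∞) ≤ ∑' k, ∫⁻ z, (‖Kk k z‖₊ : ℝ≥0∞) * (‖F k (y - z)‖₊ : ℝ≥0∞)) (x : RV n)
    (hKm : ∀ k, Continuous (Kk k)) :
    pfs n a r Q j x ≤ ∑' k : ℕ, ENNReal.ofReal (2 ^ (max ((k : ℝ) - j) 0 * ∑ l, a l * r l)) * E k *
      pfs n a r (F k) k x := by
  refine iSup_le fun y => ?_
  change ENNReal.ofReal (‖Q y‖ / WW n a r j (x - y)) ≤ _
  rw [ENNReal.ofReal_div_of_pos (WW_pos _ _ _ _ _)]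
  refine ENNReal.div_le_of_le_mul ?_
  rw [ofReal_norm]
  refine (hQ y).trans ?_
  rw [← ENNReal.tsum_mul_right]
  refine ENNReal.tsum_le_tsum fun k => ?_
  have hW : ENNReal.ofReal (WW n a r k (x - y)) ≤
      ENNReal.ofReal (2 ^ (max ((k : ℝ) - j) 0 * ∑ l, a l * r l)) * ENNReal.ofReal (WW n a r j (x - y)) := by
    rw [← ENNReal.ofReal_mul (by positivity)]
    exact ENNReal.ofReal_le_ofReal (WW_max n a r ha hr j k _)
  calc _ ≤ ∫⁻ z, (pfs n a r (F k) k x * ENNReal.ofReal (WW n a r k (x - y))) *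
        (ENNReal.ofReal (WW n a r k z) * (‖Kk k z‖₊ : ℝ≥0∞)) := by
        refine lintegral_mono fun z => ?_
        refine (mul_le_mul_right (pfs_point n a r hr (F k) k x y z) _).trans (le_of_eq ?_)
        ring
    _ = (pfs n a r (F k) k x * ENNReal.ofReal (WW n a r k (x - y))) *
        ∫⁻ z, (ENNReal.ofReal (WW n a r k z) * (‖Kk k z‖₊ : ℝ≥0∞)) :=
        lintegral_const_mul _ ((WW_cont n a r k).measurable.ennreal_ofReal.mul
          (hKm k).nnnorm.measurable.coe_nnreal_ennreal)
    _ ≤ (pfs n a r (F k) k x * (ENNReal.ofReal (2 ^ (max ((k : ℝ) - j) 0 * ∑ l, a l * r l)) *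
          ENNReal.ofReal (WW n a r j (x - y)))) * E k := by
        gcongr
        exact hE k
    _ = _ := by ring


theorem low_est (n : ℕ) (a : Fin n → ℝ) (ha1 : ∀ i, 1 ≤ a i) (a0 : ℝ) (ha0 : 0 ≤ a0) (ha : ∀ i, a0 ≤ a i)
    (N : Fin n → ℕ) (r : Fin n → ℝ) (hr : ∀ l, 0 < r l) (hN : ∀ l, r l + 2 ≤ N l) (K : ℕ) (μ : SS n) :
    ∃ c : ℝ≥0, ∀ (G : SS n) (X : ℝ≥0∞), X ≠ ∞ →
      (∀ γ : Fin n → ℕ, ∑ i, γ i < K → DS n γ G 0 = 0) →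
      (∀ γ : Fin n → ℕ, (∑ i, γ i ≤ K ∨ γ ≤ N) → ∀ x, ‖DS n γ G x‖ ≤ X.toReal) →
      ∀ j k : ℝ, k ≤ j →
      ∫⁻ z, ENNReal.ofReal (WW n a r k z) *
        (‖FI n (mulS n (dil n a (-j) G) (dil n a (-k) μ)) z‖₊ : ℝ≥0∞) ≤
        c * (ENNReal.ofReal (2 ^ (-(j - k) * (K * a0))) * X) := by
  obtain ⟨c, hc⟩ := kern_low n a a0 ha0 ha N r hN K μ
  refine ⟨c, fun G X hX hm hb j k hjk => ?_⟩
  have e : mulS n (dil n a (-j) G) (dil n a (-k) μ) =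
      dil n a (-k) (mulS n (dil n a (-(j - k)) G) μ) := by
    rw [dil_mulS, dil_dil]
    congr 2
    ring_nf
  rw [e]
  refine (kern_scale n a r ha1 hr k k le_rfl _).trans ?_
  rw [sub_self, zero_mul, Real.rpow_zero, ENNReal.ofReal_one, one_mul]
  refine (hc G X.toReal ENNReal.toReal_nonneg hm hb (j - k) (by linarith)).trans (le_of_eq ?_)
  rw [ENNReal.ofReal_mul (by positivity), ENNReal.ofReal_toReal hX]

theorem high_est (n : ℕ) (a : Fin n → ℝ) (ha1 : ∀ i, 1 ≤ a i) (a0 : ℝ) (ha0 : 0 ≤ a0) (ha : ∀ i, a0 ≤ a i)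
    (N : Fin n → ℕ) (r : Fin n → ℝ) (hr : ∀ l, 0 < r l) (hN : ∀ l, r l + 2 ≤ N l) (L : ℝ) (hL : 0 ≤ L)
    (μ : SS n) (δ : ℝ) (hδ : 0 < δ) (hμ : ∀ x : RV n, ‖x‖ < δ → μ x = 0) :
    ∃ c : ℝ≥0, ∀ (G : SS n) (X : ℝ≥0∞),
      (∀ γ : Fin n → ℕ, γ ≤ N → ∫⁻ ξ : RV n,
        ENNReal.ofReal ((1 + Real.sqrt (∑ i, ξ i ^ 2)) ^ L) * (‖DS n γ G ξ‖₊ : ℝ≥0∞) ≤ X) →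
      ∀ j k : ℝ, j ≤ k →
      ∫⁻ z, ENNReal.ofReal (WW n a r k z) *
        (‖FI n (mulS n (dil n a (-j) G) (dil n a (-k) μ)) z‖₊ : ℝ≥0∞) ≤
        c * (ENNReal.ofReal (2 ^ ((k - j) * (∑ i, a i * r i - L * a0))) * X) := by
  obtain ⟨c, hc⟩ := kern_high n a a0 ha0 ha N r hN L hL μ δ hδ hμ
  refine ⟨c, fun G X hb j k hjk => ?_⟩
  have e : mulS n (dil n a (-j) G) (dil n a (-k) μ) =
      dil n a (-j) (mulS n G (dil n a (-(k - j)) μ)) := by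
    rw [dil_mulS, dil_dil]
    congr 2
    ring_nf
  rw [e]
  refine (kern_scale n a r ha1 hr k j hjk _).trans ?_
  refine (mul_le_mul_right (hc G X hb (k - j) (by linarith)) _).trans (le_of_eq ?_)
  have : (2 : ℝ) ^ ((k - j) * (∑ i, a i * r i - L * a0)) =
      2 ^ ((k - j) * ∑ i, a i * r i) * 2 ^ (-(k - j) * (L * a0)) := by
    rw [← Real.rpow_add (by norm_num)]; ring_nf
  rw [this, ENNReal.ofReal_mul (by positivity)]
  ring

theorem all_est (n : ℕ) (a : Fin n → ℝ) (ha1 : ∀ i, 1 ≤ a i) (a0 : ℝ) (ha0 : 0 ≤ a0) (ha : ∀ i, a0 ≤ a i)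
    (N : Fin n → ℕ) (r : Fin n → ℝ) (hr : ∀ l, 0 < r l) (hN : ∀ l, r l + 2 ≤ N l) (L : ℝ) (hL : 0 ≤ L)
    (K : ℕ) (s : ℝ) (δ' : ℝ) (hd1 : δ' ≤ K * a0 - s) (hd2 : δ' ≤ L * a0 + s - 2 * ∑ i, a i * r i)
    (μ0 μ : SS n) (δ : ℝ) (hδ : 0 < δ) (hμ : ∀ x : RV n, ‖x‖ < δ → μ x = 0) :
    ∃ c : ℝ≥0, ∀ (G0 G : SS n) (X : ℝ≥0∞), X ≠ ∞ →
      (∀ γ : Fin n → ℕ, ∑ i, γ i < K → DS n γ G 0 = 0) →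
      (∀ γ : Fin n → ℕ, (∑ i, γ i ≤ K ∨ γ ≤ N) → ∀ x, ‖DS n γ G x‖ ≤ X.toReal) →
      (∀ γ : Fin n → ℕ, (∑ i, γ i ≤ K ∨ γ ≤ N) → ∀ x, ‖DS n γ G0 x‖ ≤ X.toReal) →
      (∀ γ : Fin n → ℕ, γ ≤ N → ∫⁻ ξ : RV n,
        ENNReal.ofReal ((1 + Real.sqrt (∑ i, ξ i ^ 2)) ^ L) * (‖DS n γ G ξ‖₊ : ℝ≥0∞) ≤ X) →
      (∀ γ : Fin n → ℕ, γ ≤ N → ∫⁻ ξ : RV n,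
        ENNReal.ofReal ((1 + Real.sqrt (∑ i, ξ i ^ 2)) ^ L) * (‖DS n γ G0 ξ‖₊ : ℝ≥0∞) ≤ X) →
      ∀ j k : ℕ, ∃ E : ℝ≥0∞, (∫⁻ z, ENNReal.ofReal (WW n a r k z) *
        (‖FI n (mulS n (genS n a G0 G j) (genS n a μ0 μ k)) z‖₊ : ℝ≥0∞) ≤ E) ∧
        ENNReal.ofReal (2 ^ ((j : ℝ) * s)) *
          (ENNReal.ofReal (2 ^ (max ((k : ℝ) - j) 0 * ∑ l, a l * r l)) * E) ≤
        c * X * gw δ' j k * ENNReal.ofReal (2 ^ ((k : ℝ) * s)) := by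
  obtain ⟨c1, h1⟩ := low_est n a ha1 a0 ha0 ha N r hr hN K μ
  obtain ⟨c2, h2⟩ := low_est n a ha1 a0 ha0 ha N r hr hN K μ0
  obtain ⟨c3, h3⟩ := low_est n a ha1 a0 ha0 ha N r hr hN 0 μ0
  obtain ⟨c4, h4⟩ := high_est n a ha1 a0 ha0 ha N r hr hN L hL μ δ hδ hμ
  refine ⟨c1 + c2 + c3 + c4, fun G0 G X hX hm hb hb0 hi hi0 j k => ?_⟩
  set S := ∑ l, a l * r l with hS
  have low : ∀ b : ℝ≥0, b ≤ c1 + c2 + c3 + c4 → k ≤ j → 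
      ENNReal.ofReal (2 ^ ((j : ℝ) * s)) * (ENNReal.ofReal (2 ^ (max ((k : ℝ) - j) 0 * S)) *
        (b * (ENNReal.ofReal (2 ^ (-((j : ℝ) - k) * (K * a0))) * X))) ≤
      ((c1 + c2 + c3 + c4 : ℝ≥0) : ℝ≥0∞) * X * gw δ' j k * ENNReal.ofReal (2 ^ ((k : ℝ) * s)) := by
    intro b hbc hkj
    have hkj' : (k : ℝ) ≤ j := by exact_mod_cast hkj
    have e : ENNReal.ofReal (2 ^ ((j : ℝ) * s)) * ENNReal.ofReal (2 ^ (max ((k : ℝ) - j) 0 * S)) *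
        ENNReal.ofReal (2 ^ (-((j : ℝ) - k) * (K * a0))) ≤
        gw δ' j k * ENNReal.ofReal (2 ^ ((k : ℝ) * s)) := by
      rw [gw, ← ENNReal.ofReal_mul (by positivity), ← ENNReal.ofReal_mul (by positivity),
        ← ENNReal.ofReal_mul (by positivity)]
      refine ENNReal.ofReal_le_ofReal ?_
      rw [← Real.rpow_add (by norm_num), ← Real.rpow_add (by norm_num), ← Real.rpow_add (by norm_num)]
      refine Real.rpow_le_rpow_of_exponent_le (by norm_num) ?_
      rw [max_eq_right (by linarith), abs_of_nonneg (by linarith)]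
      nlinarith
    calc _ = (b : ℝ≥0∞) * X * (ENNReal.ofReal (2 ^ ((j : ℝ) * s)) * ENNReal.ofReal (2 ^ (max ((k : ℝ) - j) 0 * S)) *
        ENNReal.ofReal (2 ^ (-((j : ℝ) - k) * (K * a0)))) := by ring
      _ ≤ ((c1 + c2 + c3 + c4 : ℝ≥0) : ℝ≥0∞) * X * (gw δ' j k * ENNReal.ofReal (2 ^ ((k : ℝ) * s))) := by
          gcongr
      _ = _ := by ring
  have high : j ≤ k → 
      ENNReal.ofReal (2 ^ ((j : ℝ) * s)) * (ENNReal.ofReal (2 ^ (max ((k : ℝ) - j) 0 * S)) *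
        (c4 * (ENNReal.ofReal (2 ^ (((k : ℝ) - j) * (S - L * a0))) * X))) ≤
      ((c1 + c2 + c3 + c4 : ℝ≥0) : ℝ≥0∞) * X * gw δ' j k * ENNReal.ofReal (2 ^ ((k : ℝ) * s)) := by
    intro hkj
    have hkj' : (j : ℝ) ≤ k := by exact_mod_cast hkj
    have e : ENNReal.ofReal (2 ^ ((j : ℝ) * s)) * ENNReal.ofReal (2 ^ (max ((k : ℝ) - j) 0 * S)) *
        ENNReal.ofReal (2 ^ (((k : ℝ) - j) * (S - L * a0))) ≤
        gw δ' j k * ENNReal.ofReal (2 ^ ((k : ℝ) * s)) := by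
      rw [gw, ← ENNReal.ofReal_mul (by positivity), ← ENNReal.ofReal_mul (by positivity),
        ← ENNReal.ofReal_mul (by positivity)]
      refine ENNReal.ofReal_le_ofReal ?_
      rw [← Real.rpow_add (by norm_num), ← Real.rpow_add (by norm_num), ← Real.rpow_add (by norm_num)]
      refine Real.rpow_le_rpow_of_exponent_le (by norm_num) ?_
      rw [max_eq_left (by linarith), abs_sub_comm, abs_of_nonneg (by linarith)]
      nlinarith
    have hc4 : c4 ≤ c1 + c2 + c3 + c4 := le_add_self
    calc _ = (c4 : ℝ≥0∞) * X * (ENNReal.ofReal (2 ^ ((j : ℝ) * s)) * ENNReal.ofReal (2 ^ (max ((k : ℝ) - j) 0 * S)) *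
        ENNReal.ofReal (2 ^ (((k : ℝ) - j) * (S - L * a0)))) := by ring
      _ ≤ ((c1 + c2 + c3 + c4 : ℝ≥0) : ℝ≥0∞) * X * (gw δ' j k * ENNReal.ofReal (2 ^ ((k : ℝ) * s))) := by
          gcongr
      _ = _ := by ring
  have z0 : ∀ g : SS n, dil n a (-0) g = g := fun g => by rw [neg_zero, dil_zero]
  rcases j with _ | j <;> rcases k with _ | k
  · refine ⟨_, ?_, low c3 (le_trans le_add_self le_self_add) le_rfl⟩
    have := h3 G0 X hX (by simp) (fun γ hγ => hb0 γ (hγ.imp_left fun h => h.trans (Nat.zero_le _))) 0 0 le_rfl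
    rw [z0, z0] at this
    simpa [genS] using this
  · refine ⟨_, ?_, high (Nat.zero_le _)⟩
    have := h4 G0 X hi0 0 ((k : ℝ) + 1) (by positivity)
    rw [z0] at this
    simpa [genS] using this
  · refine ⟨_, ?_, low c2 ((le_add_self.trans le_self_add).trans le_self_add) (Nat.zero_le _)⟩
    have := h2 G X hX hm hb ((j : ℝ) + 1) 0 (by positivity)
    rw [z0] at this
    simpa [genS] using this
  · rcases le_total k j with hkj | hkj
    · refine ⟨_, ?_, low c1 ((le_self_add.trans le_self_add).trans le_self_add) (by omega)⟩
      have := h1 G X hX hm hb ((j : ℝ) + 1) ((k : ℝ) + 1) (by simpa using hkj)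
      simpa [genS] using this
    · refine ⟨_, ?_, high (by omega)⟩
      have := h4 G X hi ((j : ℝ) + 1) ((k : ℝ) + 1) (by simpa using hkj)
      simpa [genS] using this


/-- Theorem 3.6 (`maxmod`), the parameter-dependent maximal inequality. -/
theorem stmt11 (n : ℕ) (hn : 1 ≤ n) (a : Fin n → ℝ) (ha : ∀ i, 1 ≤ a i)
    (anorm : RV n → ℝ) (h : IsAnorm n a anorm)
    (conv : TD n → (RV n → ℂ) → RV n → ℂ)
    (hconv : ∀ (f : TD n) (g : RV n → ℂ) (x : RV n) (Ψ : SchwartzMap (RV n) ℂ),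
      (∀ y, Ψ y = g (x - y)) → conv f g x = f Ψ)
    (Mψ : ℤ) (hMψ : -1 ≤ Mψ)
    (φ0 φ : SchwartzMap (RV n) ℂ) (ε' : ℝ) (hε' : 0 < ε')
    (hT : Tauber n anorm (⇑φ0) (⇑φ) ε')
    (p : Fin n → ℝ≥0∞) (hp : ∀ i, 0 < p i ∧ p i ≠ ∞) (q : ℝ≥0∞) (hq : 0 < q)
    (s : ℝ) (hs : s < ((Mψ:ℝ) + 1) * ⨅ i, a i)
    (r : Fin n → ℝ) (hr : ∀ l, 0 < r l)
    (M : ℤ) (hM : -1 ≤ M)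
    (hMs : 2 * ∑ l, a l * r l < ((M:ℝ) + 1) * (⨅ i, a i) + s) :
    ∃ c : ℝ, 0 < c ∧
      ∀ (Θ : Type) (ψθ0 ψθ : Θ → SchwartzMap (RV n) ℂ),
        (∀ θ, MomentCond n Mψ (⇑(ψθ θ))) →
        ∀ A B C D : ℝ≥0∞,
          A = (⨆ θ : Θ,
                ⨆ α : {α : Fin n → ℕ // (∑ i, (α i : ℤ)) ≤ Mψ + 1 ∨ ∀ l, α l ≤ ⌈r l + 2⌉₊},
                  ⨆ ξ : RV n, (‖Dop n α.1 (FT n ⇑(ψθ θ)) ξ‖₊ : ℝ≥0∞)) →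
          B = (⨆ θ : Θ, ⨆ γ : {γ : Fin n → ℕ // ∀ l, γ l ≤ ⌈r l + 2⌉₊},
                ∫⁻ ξ : RV n,
                  ENNReal.ofReal ((1 + Real.sqrt (∑ i, ξ i ^ 2)) ^ ((M:ℝ) + 1)) *
                    (‖Dop n γ.1 (FT n ⇑(ψθ θ)) ξ‖₊ : ℝ≥0∞)) →
          C = (⨆ θ : Θ,
                ⨆ α : {α : Fin n → ℕ // (∑ i, (α i : ℤ)) ≤ Mψ + 1 ∨ ∀ l, α l ≤ ⌈r l + 2⌉₊},
                  ⨆ ξ : RV n, (‖Dop n α.1 (FT n ⇑(ψθ0 θ)) ξ‖₊ : ℝ≥0∞)) →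
          D = (⨆ θ : Θ, ⨆ γ : {γ : Fin n → ℕ // ∀ l, γ l ≤ ⌈r l + 2⌉₊},
                ∫⁻ ξ : RV n,
                  ENNReal.ofReal ((1 + Real.sqrt (∑ i, ξ i ^ 2)) ^ ((M:ℝ) + 1)) *
                    (‖Dop n γ.1 (FT n ⇑(ψθ0 θ)) ξ‖₊ : ℝ≥0∞)) →
          A ≠ ∞ → B ≠ ∞ → C ≠ ∞ → D ≠ ∞ →
          ∀ f : TD n,
            seqNorm n p q
                (fun j x => ENNReal.ofReal ((2:ℝ) ^ ((j:ℝ) * s)) *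
                  ⨆ θ : Θ, pfs n a r (conv f (fam n a (⇑(ψθ0 θ)) (⇑(ψθ θ)) j)) j x)
              ≤ ENNReal.ofReal c * (A + B + C + D) *
                seqNorm n p q
                  (fun j x => ENNReal.ofReal ((2:ℝ) ^ ((j:ℝ) * s)) *
                    pfs n a r (conv f (fam n a (⇑φ0) (⇑φ) j)) j x) := by
  have : Nonempty (Fin n) := ⟨⟨0, hn⟩⟩
  set a0 : ℝ := ⨅ i, a i with ha0d
  have hale : ∀ i, a0 ≤ a i := fun i => ciInf_le (Set.finite_range a).bddBelow i
  have ha0 : 0 ≤ a0 := le_trans zero_le_one (le_ciInf ha)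
  obtain ⟨χ, μ0, μ, δ, hδ, hχ, hμ, hm0, hm1⟩ := calderon n a ha anorm h φ0 φ ε' hε' hT
  set N : Fin n → ℕ := fun l => ⌈r l + 2⌉₊ with hNd
  have hN : ∀ l, r l + 2 ≤ N l := fun l => Nat.le_ceil _
  have hL : (0 : ℝ) ≤ (M : ℝ) + 1 := by
    have : ((-1 : ℤ) : ℝ) ≤ (M : ℝ) := by exact_mod_cast hM
    push_cast at this; linarith
  set K : ℕ := (Mψ + 1).toNat with hKd
  have hK : (K : ℤ) = Mψ + 1 := Int.toNat_of_nonneg (by omega)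
  have hKr : (K : ℝ) = (Mψ : ℝ) + 1 := by exact_mod_cast congrArg (Int.cast : ℤ → ℝ) hK
  set δ' : ℝ := min (K * a0 - s) (((M : ℝ) + 1) * a0 + s - 2 * ∑ i, a i * r i) with hδ'
  have hδ'pos : 0 < δ' := lt_min (by rw [hKr]; linarith) (by linarith)
  obtain ⟨c1, h1⟩ := all_est n a ha a0 ha0 hale N r hr hN ((M : ℝ) + 1) hL K s δ'
    (min_le_left _ _) (min_le_right _ _) μ0 μ δ hδ hμ
  obtain ⟨c2, hc2, h2⟩ := seq_le n p hp q hq δ' hδ'pos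
  refine ⟨(c2 * c1).toReal + 1, by positivity, ?_⟩
  intro Θ ψθ0 ψθ hmom A B C D hA hB hC hD hA' hB' hC' hD' f
  set X : ℝ≥0∞ := A + B + C + D with hXd
  have hX : X ≠ ∞ := by simp [hXd, hA', hB', hC', hD']
  have hAX : A ≤ X := (le_self_add.trans le_self_add).trans le_self_add
  have hBX : B ≤ X := (le_add_self.trans le_self_add).trans le_self_add
  have hCX : C ≤ X := le_add_self.trans le_self_add
  have hDX : D ≤ X := le_add_self
  have hsum : ∀ γ : Fin n → ℕ, (∑ i, (γ i : ℤ)) = ((∑ i, γ i : ℕ) : ℤ) := fun γ => by push_cast; rfl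
  have hcv : ∀ (g0 g : SS n) (j : ℕ) (y : RV n),
      conv f (fam n a (⇑g0) (⇑g) j) y = f (reflS n y (famS n a g0 g j)) := fun g0 g j y =>
    hconv f _ y _ fun z => by rw [rflS_apply, famS_coe]
  have toR : ∀ v : ℂ, (‖v‖₊ : ℝ≥0∞) ≤ X → ‖v‖ ≤ X.toReal := fun v hv => by
    have := ENNReal.toReal_mono hX hv
    simpa using this
  have est : ∀ (j : ℕ) (x : RV n), ENNReal.ofReal ((2:ℝ) ^ ((j:ℝ) * s)) *
      ⨆ θ : Θ, pfs n a r (conv f (fam n a (⇑(ψθ0 θ)) (⇑(ψθ θ)) j)) j x ≤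
      (c1 * X) * ∑' k, gw δ' j k * (ENNReal.ofReal ((2:ℝ) ^ ((k:ℝ) * s)) *
        pfs n a r (conv f (fam n a (⇑φ0) (⇑φ) k)) k x) := by
    intro j x
    rw [ENNReal.mul_iSup]
    refine iSup_le fun θ => ?_
    have hE := h1 (FS n (ψθ0 θ)) (FS n (ψθ θ)) X hX ?_ ?_ ?_ ?_ ?_ j
    · choose E hE1 hE2 using hE
      have hp := main_point n a r ha hr (fun k => conv f (fam n a (⇑φ0) (⇑φ) k))
        (conv f (fam n a (⇑(ψθ0 θ)) (⇑(ψθ θ)) j))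
        (fun k => ⇑(FI n (mulS n (genS n a (FS n (ψθ0 θ)) (FS n (ψθ θ)) j) (genS n a μ0 μ k)))) E j hE1
        (fun y => by
          rw [hcv, ← FS_famS]
          refine (conv_series n a ha φ0 φ χ μ0 μ δ hδ hχ hm0 hm1 f _ y).trans (le_of_eq ?_)
          refine tsum_congr fun k => lintegral_congr fun z => ?_
          rw [hcv]) x (fun k => SchwartzMap.continuous _)
      refine (mul_le_mul_right hp _).trans ?_
      rw [← ENNReal.tsum_mul_left, ← ENNReal.tsum_mul_left]
      refine ENNReal.tsum_le_tsum fun k => ?_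
      calc _ = (ENNReal.ofReal (2 ^ ((j : ℝ) * s)) *
          (ENNReal.ofReal (2 ^ (max ((k : ℝ) - j) 0 * ∑ l, a l * r l)) * E k)) *
            pfs n a r (conv f (fam n a (⇑φ0) (⇑φ) k)) k x := by ring
        _ ≤ (c1 * X * gw δ' j k * ENNReal.ofReal (2 ^ ((k : ℝ) * s))) *
            pfs n a r (conv f (fam n a (⇑φ0) (⇑φ) k)) k x := mul_le_mul_left (hE2 k) _
        _ = _ := by ring
    · intro γ hγ
      have h0 := hmom θ γ (by rw [hsum]; omega)
      rw [← nnnorm_eq_zero, ← Dop_nnnorm, h0, nnnorm_zero]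
    · intro γ hγ ξ
      refine toR _ (le_trans ?_ hAX)
      rw [← Dop_nnnorm, hA]
      exact (le_iSup (fun ξ : RV n => (‖Dop n γ (FT n ⇑(ψθ θ)) ξ‖₊ : ℝ≥0∞)) ξ).trans
        ((le_iSup (fun α : {α : Fin n → ℕ // (∑ i, (α i : ℤ)) ≤ Mψ + 1 ∨ ∀ l, α l ≤ ⌈r l + 2⌉₊} =>
          ⨆ ξ : RV n, (‖Dop n α.1 (FT n ⇑(ψθ θ)) ξ‖₊ : ℝ≥0∞))
          ⟨γ, hγ.imp (fun h => by rw [hsum]; omega) (fun h => h)⟩).trans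
        (le_iSup (fun θ : Θ =>
          ⨆ α : {α : Fin n → ℕ // (∑ i, (α i : ℤ)) ≤ Mψ + 1 ∨ ∀ l, α l ≤ ⌈r l + 2⌉₊},
          ⨆ ξ : RV n, (‖Dop n α.1 (FT n ⇑(ψθ θ)) ξ‖₊ : ℝ≥0∞)) θ))
    · intro γ hγ ξ
      refine toR _ (le_trans ?_ hCX)
      rw [← Dop_nnnorm, hC]
      exact (le_iSup (fun ξ : RV n => (‖Dop n γ (FT n ⇑(ψθ0 θ)) ξ‖₊ : ℝ≥0∞)) ξ).trans
        ((le_iSup (fun α : {α : Fin n → ℕ // (∑ i, (α i : ℤ)) ≤ Mψ + 1 ∨ ∀ l, α l ≤ ⌈r l + 2⌉₊} =>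
          ⨆ ξ : RV n, (‖Dop n α.1 (FT n ⇑(ψθ0 θ)) ξ‖₊ : ℝ≥0∞))
          ⟨γ, hγ.imp (fun h => by rw [hsum]; omega) (fun h => h)⟩).trans
        (le_iSup (fun θ : Θ =>
          ⨆ α : {α : Fin n → ℕ // (∑ i, (α i : ℤ)) ≤ Mψ + 1 ∨ ∀ l, α l ≤ ⌈r l + 2⌉₊},
          ⨆ ξ : RV n, (‖Dop n α.1 (FT n ⇑(ψθ0 θ)) ξ‖₊ : ℝ≥0∞)) θ))
    · intro γ hγ
      refine le_trans ?_ hBX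
      simp only [← Dop_nnnorm]
      rw [hB]
      exact (le_iSup (fun γ : {γ : Fin n → ℕ // ∀ l, γ l ≤ ⌈r l + 2⌉₊} => ∫⁻ ξ : RV n,
          ENNReal.ofReal ((1 + Real.sqrt (∑ i, ξ i ^ 2)) ^ ((M:ℝ) + 1)) *
            (‖Dop n γ.1 (FT n ⇑(ψθ θ)) ξ‖₊ : ℝ≥0∞)) ⟨γ, hγ⟩).trans
        (le_iSup (fun θ : Θ => ⨆ γ : {γ : Fin n → ℕ // ∀ l, γ l ≤ ⌈r l + 2⌉₊}, ∫⁻ ξ : RV n,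
          ENNReal.ofReal ((1 + Real.sqrt (∑ i, ξ i ^ 2)) ^ ((M:ℝ) + 1)) *
            (‖Dop n γ.1 (FT n ⇑(ψθ θ)) ξ‖₊ : ℝ≥0∞)) θ)
    · intro γ hγ
      refine le_trans ?_ hDX
      simp only [← Dop_nnnorm]
      rw [hD]
      exact (le_iSup (fun γ : {γ : Fin n → ℕ // ∀ l, γ l ≤ ⌈r l + 2⌉₊} => ∫⁻ ξ : RV n,
          ENNReal.ofReal ((1 + Real.sqrt (∑ i, ξ i ^ 2)) ^ ((M:ℝ) + 1)) *
            (‖Dop n γ.1 (FT n ⇑(ψθ0 θ)) ξ‖₊ : ℝ≥0∞)) ⟨γ, hγ⟩).trans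
        (le_iSup (fun θ : Θ => ⨆ γ : {γ : Fin n → ℕ // ∀ l, γ l ≤ ⌈r l + 2⌉₊}, ∫⁻ ξ : RV n,
          ENNReal.ofReal ((1 + Real.sqrt (∑ i, ξ i ^ 2)) ^ ((M:ℝ) + 1)) *
            (‖Dop n γ.1 (FT n ⇑(ψθ0 θ)) ξ‖₊ : ℝ≥0∞)) θ)
  refine (h2 (c1 * X) (ENNReal.mul_ne_top ENNReal.coe_ne_top hX) _ _ est).trans ?_
  rw [← mul_assoc c2]
  gcongr
  rw [ENNReal.le_ofReal_iff_toReal_le (ENNReal.mul_ne_top hc2 ENNReal.coe_ne_top) (by positivity)]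
  linarith
end
end

section
/- Let 0 < q_i ≤ ∞ (i = 1,…,n) and r = (r_1,…,r_n) with r_l > 0. Then there is a constant c (depending only on n, q̄ and r̄) such that: for every R > 0, every j ∈ ℕ, every smooth function u : ℝⁿ → ℂ whose derivatives all have at most polynomial growth and which satisfies supp 𝓕u ⊆ B_{R,j}, and every x ∈ ℝⁿ, one has u^*(x) ≤ c · ‖ z ↦ u(x − R^{−1}2^{−ja}z) / ∏_{l=1}^n (1+|z_l|)^{r_l} | L_{q̄}(ℝⁿ) ‖, where u^*(x) := sup_{y∈ℝⁿ} |u(y)| / ∏_{l=1}^n (1+R·2^{ja_l}|x_l−y_l|)^{r_l}. -/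
open MeasureTheory Complex
open scoped ENNReal NNReal BigOperators

noncomputable section

lemma aux_decay {V : Type*} [NormedAddCommGroup V] [NormedSpace ℝ V] (f : SchwartzMap V ℂ) (m : ℕ) :
    ∃ D : ℝ, 0 < D ∧ ∀ x, (1 + ‖x‖) ^ m * ‖f x‖ ≤ D := by
  refine ⟨2 ^ m * (Finset.Iic (m, 0)).sup (fun m => SchwartzMap.seminorm ℝ m.1 m.2) f + 1, ?_, ?_⟩
  · have : 0 ≤ (Finset.Iic (m, 0)).sup (fun m => SchwartzMap.seminorm ℝ m.1 m.2) f := apply_nonneg _ _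
    positivity
  · intro x
    have := SchwartzMap.one_add_le_sup_seminorm_apply (𝕜 := ℝ) (m := (m, 0)) (k := m) (n := 0)
      le_rfl le_rfl f x
    simp only [norm_iteratedFDeriv_zero] at this
    linarith

lemma aux_step (f ψ : ℝ → ℂ) (w : ℝ → ℝ) (hw : ∀ t, 0 < w t) (D : ℝ) (hD : 0 < D)
    (hψ : ∀ y t, w (y - t) * ‖ψ t‖ ≤ w y * D * (1 + t ^ 2)⁻¹)
    (hrep : ∀ y, f y = ∫ t, f (y - t) * ψ t) (q : ℝ) (hq : 0 < q)
    (I : ℝ) (hI0 : 0 ≤ I) (hI : ∫⁻ t, ENNReal.ofReal ((‖f t‖ / w t) ^ q) ≤ ENNReal.ofReal I)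
    (K : ℝ) (hK : 0 < K) (hKI : 2 * D * I ≤ K ^ q)
    (G : ℝ) (hG : 0 ≤ G) (hfG : ∀ t, ‖f t‖ ≤ G * w t) (y : ℝ) :
    ‖f y‖ ≤ (D * Real.pi * K + G / 2) * w y := by
  have hKq : 0 < K ^ q := Real.rpow_pos_of_pos hK q
  have hpt : ∀ t, ‖f (y - t) * ψ t‖ₑ ≤ ENNReal.ofReal (w y * D * K) * ENNReal.ofReal ((1 + t ^ 2)⁻¹)
      + ENNReal.ofReal (w y * D * G / K ^ q) *
        ENNReal.ofReal ((‖f (y - t)‖ / w (y - t)) ^ q) := by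
    intro t
    set F := ‖f (y - t)‖ / w (y - t) with hF
    have hF0 : 0 ≤ F := div_nonneg (norm_nonneg _) (hw _).le
    have hFq : 0 ≤ F ^ q := Real.rpow_nonneg hF0 q
    have hy := hw y
    have h1 : F ≤ K + G * F ^ q / K ^ q := by
      rcases le_or_gt F K with h | h
      · have : 0 ≤ G * F ^ q / K ^ q := by positivity
        linarith
      · have h2 : K ^ q ≤ F ^ q := Real.rpow_le_rpow hK.le h.le hq.le
        have h3 : F ≤ G := by
          rw [hF, div_le_iff₀ (hw _)]; exact hfG _
        have h4 : G ≤ G * F ^ q / K ^ q := by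
          rw [le_div_iff₀ hKq]; gcongr
        linarith
    have h5 : (1 + t ^ 2 : ℝ)⁻¹ ≤ 1 := inv_le_one_of_one_le₀ (by nlinarith [sq_nonneg t])
    have h6 : 0 < (1 + t ^ 2 : ℝ)⁻¹ := by positivity
    rw [← ENNReal.ofReal_mul (by positivity), ← ENNReal.ofReal_mul (by positivity),
      ← ENNReal.ofReal_add (by positivity) (by positivity), ← ofReal_norm]
    apply ENNReal.ofReal_le_ofReal
    rw [norm_mul]
    have h7 : ‖f (y - t)‖ = F * w (y - t) := by rw [hF, div_mul_cancel₀ _ (hw _).ne']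
    rw [h7, mul_assoc]
    calc F * (w (y - t) * ‖ψ t‖) ≤ (K + G * F ^ q / K ^ q) * (w y * D * (1 + t ^ 2)⁻¹) := by
          have := hw (y - t)
          exact mul_le_mul h1 (hψ y t) (by positivity) (by positivity)
      _ = w y * D * K * (1 + t ^ 2)⁻¹ + w y * D * G / K ^ q * F ^ q * (1 + t ^ 2)⁻¹ := by ring
      _ ≤ w y * D * K * (1 + t ^ 2)⁻¹ + w y * D * G / K ^ q * F ^ q * 1 := by gcongr
      _ = _ := by ring
  have hy := hw y
  have hpi : ∫⁻ t : ℝ, ENNReal.ofReal ((1 + t ^ 2)⁻¹) = ENNReal.ofReal Real.pi := by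
    rw [← ofReal_integral_eq_lintegral_ofReal integrable_inv_one_add_sq
      (Filter.Eventually.of_forall fun t => by positivity), integral_univ_inv_one_add_sq]
  have h : ‖f y‖ₑ ≤ ENNReal.ofReal (w y * D * K) * ENNReal.ofReal Real.pi
      + ENNReal.ofReal (w y * D * G / K ^ q) * ENNReal.ofReal I := by
    calc ‖f y‖ₑ ≤ ∫⁻ t, ‖f (y - t) * ψ t‖ₑ := by
          rw [hrep y]; exact enorm_integral_le_lintegral_enorm _
      _ ≤ ∫⁻ t, (ENNReal.ofReal (w y * D * K) * ENNReal.ofReal ((1 + t ^ 2)⁻¹)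
      + ENNReal.ofReal (w y * D * G / K ^ q) *
        ENNReal.ofReal ((‖f (y - t)‖ / w (y - t)) ^ q)) := lintegral_mono hpt
      _ = ENNReal.ofReal (w y * D * K) * ENNReal.ofReal Real.pi +
          ENNReal.ofReal (w y * D * G / K ^ q) *
            ∫⁻ t, ENNReal.ofReal ((‖f t‖ / w t) ^ q) := by
          rw [lintegral_add_left (by fun_prop), lintegral_const_mul' _ _ ENNReal.ofReal_ne_top,
            lintegral_const_mul' _ _ ENNReal.ofReal_ne_top, hpi,
            lintegral_sub_left_eq_self (fun t => ENNReal.ofReal ((‖f t‖ / w t) ^ q)) y]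
      _ ≤ _ := by gcongr
  rw [← ENNReal.ofReal_mul (by positivity), ← ENNReal.ofReal_mul (by positivity),
      ← ENNReal.ofReal_add (by positivity) (by positivity), ← ofReal_norm,
      ENNReal.ofReal_le_ofReal_iff (by positivity)] at h
  have h8 : D * I / K ^ q ≤ 1 / 2 := by
    rw [div_le_iff₀ hKq]; linarith
  calc ‖f y‖ ≤ w y * D * K * Real.pi + w y * D * G / K ^ q * I := h
    _ = w y * D * K * Real.pi + w y * G * (D * I / K ^ q) := by ring
    _ ≤ w y * D * K * Real.pi + w y * G * (1 / 2) := by gcongr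
    _ = _ := by ring

lemma aux_iter (f ψ : ℝ → ℂ) (w : ℝ → ℝ) (hw : ∀ t, 0 < w t) (D : ℝ) (hD : 0 < D)
    (hψ : ∀ y t, w (y - t) * ‖ψ t‖ ≤ w y * D * (1 + t ^ 2)⁻¹)
    (hrep : ∀ y, f y = ∫ t, f (y - t) * ψ t) (q : ℝ) (hq : 0 < q)
    (I : ℝ) (hI0 : 0 ≤ I) (hI : ∫⁻ t, ENNReal.ofReal ((‖f t‖ / w t) ^ q) ≤ ENNReal.ofReal I)
    (K : ℝ) (hK : 0 < K) (hKI : 2 * D * I ≤ K ^ q)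
    (G : ℝ) (hG : 0 ≤ G) (hfG : ∀ t, ‖f t‖ ≤ G * w t) (y : ℝ) :
    ‖f y‖ ≤ (2 * D * Real.pi * K) * w y := by
  have key : ∀ k : ℕ, ∀ y, ‖f y‖ ≤ (2 * D * Real.pi * K + G * (1 / 2) ^ k) * w y := by
    intro k
    induction k with
    | zero =>
      intro y
      refine (hfG y).trans ?_
      have := hw y
      have := Real.pi_pos
      gcongr
      simp; positivity
    | succ k ih =>
      intro y
      have := Real.pi_pos
      refine (aux_step f ψ w hw D hD hψ hrep q hq I hI0 hI K hK hKI _ (by positivity) ih y).trans ?_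
      apply le_of_eq; ring
  have hlim : Filter.Tendsto (fun k : ℕ => (2 * D * Real.pi * K + G * (1 / 2 : ℝ) ^ k) * w y)
      Filter.atTop (nhds ((2 * D * Real.pi * K + G * 0) * w y)) :=
    ((tendsto_pow_atTop_nhds_zero_of_lt_one (by norm_num) (by norm_num)).const_mul G |>.const_add _
      |>.mul_const _)
  simpa using ge_of_tendsto' hlim (fun k => key k y)

lemma aux_w (r : ℝ) (hr : 0 < r) (m : ℕ) (ψ : SchwartzMap ℝ ℂ) :
    ∃ D : ℝ, 0 < D ∧ ∀ δ : ℝ, 0 ≤ δ → δ ≤ 1 → ∀ y t : ℝ,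
      ((1 + |y - t|) ^ r * (1 + δ * |y - t|) ^ m) * ‖ψ t‖
        ≤ ((1 + |y|) ^ r * (1 + δ * |y|) ^ m) * D * (1 + t ^ 2)⁻¹ := by
  obtain ⟨D, hD, h⟩ := aux_decay ψ (⌈r⌉₊ + m + 2)
  refine ⟨D, hD, fun δ h0 h1 y t => ?_⟩
  have hb : |y - t| ≤ |y| + |t| := abs_sub y t
  have a1 : (1 + |y - t|) ^ r ≤ (1 + |y|) ^ r * (1 + |t|) ^ ⌈r⌉₊ := by
    calc (1 + |y - t|) ^ r ≤ ((1 + |y|) * (1 + |t|)) ^ r := by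
          gcongr
          nlinarith [abs_nonneg y, abs_nonneg t, mul_nonneg (abs_nonneg y) (abs_nonneg t)]
      _ = (1 + |y|) ^ r * (1 + |t|) ^ r := Real.mul_rpow (by positivity) (by positivity)
      _ ≤ _ := by
          gcongr
          rw [← Real.rpow_natCast]
          exact Real.rpow_le_rpow_of_exponent_le (by linarith [abs_nonneg t]) (Nat.le_ceil r)
  have a2 : (1 + δ * |y - t|) ^ m ≤ (1 + δ * |y|) ^ m * (1 + |t|) ^ m := by
    rw [← mul_pow]
    gcongr
    nlinarith [abs_nonneg y, abs_nonneg t, mul_nonneg h0 (mul_nonneg (abs_nonneg y) (abs_nonneg t)),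
      mul_le_mul_of_nonneg_left hb h0, mul_nonneg (sub_nonneg.2 h1) (abs_nonneg t)]
  have a3 : (1 + |t|) ^ ⌈r⌉₊ * (1 + |t|) ^ m * ‖ψ t‖ ≤ D * (1 + t ^ 2)⁻¹ := by
    rw [← div_eq_mul_inv, le_div_iff₀ (by positivity)]
    refine le_trans ?_ (h t)
    rw [pow_add, pow_add, Real.norm_eq_abs]
    have : 1 + t ^ 2 ≤ (1 + |t|) ^ 2 := by nlinarith [abs_nonneg t, sq_abs t]
    calc _ ≤ (1 + |t|) ^ ⌈r⌉₊ * (1 + |t|) ^ m * ‖ψ t‖ * (1 + |t|) ^ 2 := by gcongr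
      _ = _ := by ring
  calc _ ≤ ((1 + |y|) ^ r * (1 + |t|) ^ ⌈r⌉₊ * ((1 + δ * |y|) ^ m * (1 + |t|) ^ m)) * ‖ψ t‖ := by
        gcongr
    _ = ((1 + |y|) ^ r * (1 + δ * |y|) ^ m) * ((1 + |t|) ^ ⌈r⌉₊ * (1 + |t|) ^ m * ‖ψ t‖) := by ring
    _ ≤ ((1 + |y|) ^ r * (1 + δ * |y|) ^ m) * (D * (1 + t ^ 2)⁻¹) := by gcongr
    _ = _ := by ring

lemma aux_fin (ψ : SchwartzMap ℝ ℂ) (q : ℝ) (hq : 0 < q) (r : ℝ) (hr : 0 < r) :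
    ∃ D : ℝ, 0 < D ∧ ∀ f : ℝ → ℂ, (∃ A : ℝ, ∃ m : ℕ, ∀ t, ‖f t‖ ≤ A * (1 + |t|) ^ m) →
      (∀ y, f y = ∫ t, f (y - t) * ψ t) →
      ∀ I : ℝ, 0 < I → ∫⁻ t, ENNReal.ofReal ((‖f t‖ / (1 + |t|) ^ r) ^ q) ≤ ENNReal.ofReal I →
      ∀ y, ‖f y‖ ≤ (2 * D * Real.pi * (2 * D * I) ^ (1 / q)) * (1 + |y|) ^ r := by
  obtain ⟨D, hD, hDψ⟩ := aux_w r hr 0 ψ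
  refine ⟨D, hD, fun f ⟨A, m, hA⟩ hrep I hI0 hI => ?_⟩
  have hKK : ∀ D' : ℝ, 0 < D' → 0 < (2 * D' * I) ^ (1 / q) ∧
      2 * D' * I ≤ ((2 * D' * I) ^ (1 / q)) ^ q := by
    intro D' hD'
    refine ⟨by positivity, ?_⟩
    rw [← Real.rpow_mul (by positivity), one_div_mul_cancel hq.ne', Real.rpow_one]
  have hA0 : 0 ≤ A := by simpa using (norm_nonneg _).trans (hA 0)
  -- finite a priori bound
  obtain ⟨D', hD', hDψ'⟩ := aux_w r hr m ψ
  have apri : ∀ y, ‖f y‖ ≤ (2 * D' * Real.pi * (2 * D' * I) ^ (1 / q)) * (1 + |y|) ^ r := by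
    intro y
    have hδ : ∀ δ : ℝ, 0 < δ → δ ≤ 1 → ‖f y‖ ≤ (2 * D' * Real.pi * (2 * D' * I) ^ (1 / q)) *
        ((1 + |y|) ^ r * (1 + δ * |y|) ^ m) := by
      intro δ h0 h1
      refine aux_iter f ψ (fun t => (1 + |t|) ^ r * (1 + δ * |t|) ^ m) (fun t => by positivity)
        D' hD' (hDψ' δ h0.le h1) hrep q hq I hI0.le ?_ _ (hKK D' hD').1 (hKK D' hD').2
        (A * (δ⁻¹) ^ m) (by positivity) ?_ y
      · refine le_trans (lintegral_mono fun t => ?_) hI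
        apply ENNReal.ofReal_le_ofReal
        gcongr
        apply le_mul_of_one_le_right (by positivity)
        apply one_le_pow₀
        have : 0 ≤ δ * |t| := by positivity
        linarith
      · intro t
        refine (hA t).trans ?_
        rw [mul_assoc]
        gcongr
        have e1 : (1 + |t|) ≤ δ⁻¹ * (1 + δ * |t|) := by
          rw [mul_add, ← mul_assoc, inv_mul_cancel₀ h0.ne', one_mul, mul_one]
          have : 1 ≤ δ⁻¹ := (one_le_inv₀ h0).2 h1
          linarith
        calc (1 + |t|) ^ m ≤ (δ⁻¹ * (1 + δ * |t|)) ^ m := by gcongr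
          _ = 1 * (δ⁻¹ ^ m * (1 + δ * |t|) ^ m) := by rw [mul_pow, one_mul]
          _ ≤ (1 + |t|) ^ r * (δ⁻¹ ^ m * (1 + δ * |t|) ^ m) := by
              gcongr
              exact Real.one_le_rpow (by linarith [abs_nonneg t]) hr.le
          _ = _ := by ring
    have hcont : Filter.Tendsto (fun δ : ℝ => (2 * D' * Real.pi * (2 * D' * I) ^ (1 / q)) *
        ((1 + |y|) ^ r * (1 + δ * |y|) ^ m)) (nhdsWithin 0 (Set.Ioi 0))
        (nhds ((2 * D' * Real.pi * (2 * D' * I) ^ (1 / q)) *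
        ((1 + |y|) ^ r * (1 + 0 * |y|) ^ m))) := by
      apply tendsto_nhdsWithin_of_tendsto_nhds
      apply Continuous.tendsto (f := fun δ : ℝ => (2 * D' * Real.pi * (2 * D' * I) ^ (1 / q)) *
        ((1 + |y|) ^ r * (1 + δ * |y|) ^ m))
      fun_prop
    have := ge_of_tendsto hcont (b := ‖f y‖) (by
      filter_upwards [Ioc_mem_nhdsGT (show (0:ℝ) < 1 by norm_num)] with δ hδ'
      exact hδ δ hδ'.1 hδ'.2)
    simpa using this
  have hpp := Real.pi_pos
  refine aux_iter f ψ (fun t => (1 + |t|) ^ r) (fun t => by positivity)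
    D hD (fun y t => by simpa using hDψ 1 zero_le_one le_rfl y t) hrep q hq I hI0.le hI _ (hKK D hD).1 (hKK D hD).2
    _ (by positivity) apri

lemma aux_oneD (ψ : SchwartzMap ℝ ℂ) (q : ℝ≥0∞) (hq : 0 < q) (r : ℝ) (hr : 0 < r) :
    ∃ c : ℝ, 0 < c ∧ ∀ f : ℝ → ℂ, Continuous f →
      (∃ A : ℝ, ∃ m : ℕ, ∀ t, ‖f t‖ ≤ A * (1 + |t|) ^ m) →
      (∀ y, f y = ∫ t, f (y - t) * ψ t) → ∀ y,
      ENNReal.ofReal (‖f y‖ / (1 + |y|) ^ r) ≤ ENNReal.ofReal c *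
        (if q = ∞ then essSup (fun t : ℝ => ENNReal.ofReal (‖f t‖ / (1 + |t|) ^ r)) volume
        else (∫⁻ t : ℝ, (ENNReal.ofReal (‖f t‖ / (1 + |t|) ^ r)) ^ q.toReal) ^ (1 / q.toReal)) := by
  by_cases hqt : q = ∞
  · refine ⟨1, one_pos, fun f hf _ _ y => ?_⟩
    rw [if_pos hqt, ENNReal.ofReal_one, one_mul]
    set B := essSup (fun t : ℝ => ENNReal.ofReal (‖f t‖ / (1 + |t|) ^ r)) volume with hB
    have h1 : ∀ᵐ t, ENNReal.ofReal (‖f t‖ / (1 + |t|) ^ r) ≤ B := ENNReal.ae_le_essSup _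
    have hc : Continuous fun t : ℝ => ENNReal.ofReal (‖f t‖ / (1 + |t|) ^ r) := by
      refine ENNReal.continuous_ofReal.comp (hf.norm.div ?_ fun t => by positivity)
      exact Continuous.rpow_const (by fun_prop) (fun t => Or.inr hr.le)
    have h2 : (fun t : ℝ => max (ENNReal.ofReal (‖f t‖ / (1 + |t|) ^ r)) B) = fun _ => B := by
      rw [← Continuous.ae_eq_iff_eq (μ := (volume : Measure ℝ)) (hc.max continuous_const) continuous_const]
      filter_upwards [h1] with t ht
      exact max_eq_right ht
    exact max_eq_right_iff.1 (congrFun h2 y)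
  · obtain ⟨D, hD, h⟩ := aux_fin ψ q.toReal (ENNReal.toReal_pos hq.ne' hqt) r hr
    have hq' := ENNReal.toReal_pos hq.ne' hqt
    have hpp := Real.pi_pos
    refine ⟨2 * D * Real.pi * (2 * D) ^ (1 / q.toReal), by positivity, fun f hf hA hrep y => ?_⟩
    rw [if_neg hqt]
    set J := ∫⁻ t : ℝ, (ENNReal.ofReal (‖f t‖ / (1 + |t|) ^ r)) ^ q.toReal with hJ
    rcases eq_or_ne J ∞ with hJt | hJt
    · rw [hJt, ENNReal.top_rpow_of_pos (by positivity), ENNReal.mul_top]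
      · exact le_top
      · rw [Ne, ENNReal.ofReal_eq_zero, not_le]; positivity
    have hJ' : J = ∫⁻ t : ℝ, ENNReal.ofReal ((‖f t‖ / (1 + |t|) ^ r) ^ q.toReal) := by
      apply lintegral_congr
      intro t
      rw [ENNReal.ofReal_rpow_of_nonneg (by positivity) hq'.le]
    have h1 : ∀ I : ℝ, J.toReal < I → ‖f y‖ / (1 + |y|) ^ r ≤
        2 * D * Real.pi * (2 * D * I) ^ (1 / q.toReal) := by
      intro I hI
      have hI0 : 0 < I := ENNReal.toReal_nonneg.trans_lt hI
      rw [div_le_iff₀ (by positivity)]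
      apply h f hA hrep I hI0
      rw [← hJ', ENNReal.le_ofReal_iff_toReal_le hJt hI0.le]
      exact hI.le
    have hcont : Filter.Tendsto (fun I : ℝ => 2 * D * Real.pi * (2 * D * I) ^ (1 / q.toReal))
        (nhdsWithin J.toReal (Set.Ioi J.toReal))
        (nhds (2 * D * Real.pi * (2 * D * J.toReal) ^ (1 / q.toReal))) := by
      apply tendsto_nhdsWithin_of_tendsto_nhds
      apply Continuous.tendsto (f := fun I : ℝ => 2 * D * Real.pi * (2 * D * I) ^ (1 / q.toReal))
      refine continuous_const.mul (Continuous.rpow_const (by fun_prop) fun _ => Or.inr (by positivity))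
    have h2 := ge_of_tendsto hcont (b := ‖f y‖ / (1 + |y|) ^ r) (by
      filter_upwards [self_mem_nhdsWithin] with I hI
      exact h1 I hI)
    rw [Real.mul_rpow (by positivity) ENNReal.toReal_nonneg, ← mul_assoc] at h2
    refine (ENNReal.ofReal_le_ofReal h2).trans ?_
    rw [ENNReal.ofReal_mul (by positivity), ← ENNReal.ofReal_rpow_of_nonneg ENNReal.toReal_nonneg (by positivity),
      ENNReal.ofReal_toReal hJt]

open FourierTransform in
lemma aux_psi : ∃ ψ : SchwartzMap ℝ ℂ, ∃ χ : ℝ → ℂ, χ.HasTemperateGrowth ∧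
    (∀ s, |s| ≤ 2 → χ s = 1) ∧ ∀ s : ℝ, ∫ t : ℝ, Complex.exp (Complex.I * ((s * t : ℝ) : ℂ)) * ψ t = χ s := by
  let b : ContDiffBump (0 : ℝ) := ⟨1, 2, one_pos, by norm_num⟩
  have hg₁ : HasCompactSupport (Complex.ofRealCLM ∘ b) := b.hasCompactSupport.comp_left rfl
  have hg₂ : ContDiff ℝ (⊤ : ℕ∞) (Complex.ofRealCLM ∘ b) :=
    Complex.ofRealCLM.contDiff.comp b.contDiff
  let g : SchwartzMap ℝ ℂ := hg₁.toSchwartzMap hg₂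
  have hpp := Real.pi_pos
  refine ⟨𝓕 g, fun s => g ((2 * Real.pi)⁻¹ * s), ?_, ?_, ?_⟩
  · exact Function.HasTemperateGrowth.comp (SchwartzMap.hasTemperateGrowth g)
      (((2 * Real.pi)⁻¹ • ContinuousLinearMap.id ℝ ℝ).hasTemperateGrowth)
  · intro s hs
    have : b ((2 * Real.pi)⁻¹ * s) = 1 := by
      apply b.one_of_mem_closedBall
      rw [mem_closedBall_zero_iff, Real.norm_eq_abs, abs_mul, abs_of_pos (by positivity),
        inv_mul_le_iff₀ (by positivity)]
      have := Real.pi_gt_three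
      show _ ≤ 2 * Real.pi * 1
      linarith
    show ((b ((2 * Real.pi)⁻¹ * s) : ℝ) : ℂ) = 1
    rw [this]; simp
  · intro s
    have h : 𝓕⁻ (𝓕 g) = g := fourierInv_fourier_eq g
    have h2 : (𝓕⁻ (𝓕 g) : SchwartzMap ℝ ℂ) ((2 * Real.pi)⁻¹ * s) = g ((2 * Real.pi)⁻¹ * s) := by rw [h]
    rw [SchwartzMap.fourierInv_coe, Real.fourierInv_eq'] at h2
    refine Eq.trans ?_ h2
    congr 1
    ext t
    rw [smul_eq_mul]
    congr 2
    simp only [RCLike.inner_apply, conj_trivial]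
    push_cast
    field_simp

open FourierTransform in
lemma aux_FT (n : ℕ) (g : SchwartzMap (RV n) ℂ) : ∃ φ : SchwartzMap (RV n) ℂ, ∀ ξ, FT n φ ξ = g ξ := by
  have hpp := Real.pi_pos
  let e : EuclideanSpace ℝ (Fin n) ≃L[ℝ] RV n := EuclideanSpace.equiv (Fin n) ℝ
  let e' : EuclideanSpace ℝ (Fin n) ≃L[ℝ] RV n :=
    (ContinuousLinearEquiv.smulLeft (Units.mk0 (2 * Real.pi) (by positivity))).trans e
  let g' : SchwartzMap (EuclideanSpace ℝ (Fin n)) ℂ := SchwartzMap.compCLMOfContinuousLinearEquiv ℂ e' g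
  let φ' : SchwartzMap (EuclideanSpace ℝ (Fin n)) ℂ := 𝓕⁻ g'
  refine ⟨SchwartzMap.compCLMOfContinuousLinearEquiv ℂ e.symm φ', fun ξ => ?_⟩
  have h : 𝓕 φ' = g' := fourier_fourierInv_eq g'
  have h2 : (𝓕 φ' : SchwartzMap _ ℂ) ((2 * Real.pi)⁻¹ • (e.symm ξ)) = g' ((2 * Real.pi)⁻¹ • (e.symm ξ)) := by rw [h]
  have h3 : g' ((2 * Real.pi)⁻¹ • (e.symm ξ)) = g ξ := by
    show g (e ((2 * Real.pi) • ((2 * Real.pi)⁻¹ • (e.symm ξ)))) = g ξ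
    rw [smul_inv_smul₀ (by positivity), e.apply_symm_apply]
  rw [h3, SchwartzMap.fourier_coe, Real.fourier_eq', ← (PiLp.volume_preserving_toLp (Fin n)).integral_comp
    (MeasurableEquiv.toLp 2 (Fin n → ℝ)).measurableEmbedding] at h2
  rw [← h2, FT]
  congr 1
  ext x
  rw [smul_eq_mul]
  refine congrArg₂ (· * ·) (congrArg cexp ?_) rfl
  simp only [inner_smul_right, PiLp.inner_apply, RCLike.inner_apply, conj_trivial]
  rw [show (∑ i, (e.symm ξ) i * x i) = ∑ i, x i * ξ i from
    Finset.sum_congr rfl fun i _ => mul_comm _ _]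
  push_cast
  field_simp

lemma aux_int {V : Type*} [NormedAddCommGroup V] [NormedSpace ℝ V] [MeasureSpace V] [BorelSpace V]
    [SecondCountableTopology V] [(volume : Measure V).HasTemperateGrowth]
    (f : SchwartzMap V ℂ) (k : ℕ) : Integrable (fun x => (1 + ‖x‖) ^ k * ‖f x‖) := by
  have h : (fun x => (1 + ‖x‖) ^ k * ‖f x‖) = fun x => ∑ m ∈ Finset.range (k + 1),
      (k.choose m : ℝ) * (‖x‖ ^ m * ‖f x‖) := by
    ext x
    rw [add_comm, add_pow, Finset.sum_mul]
    refine Finset.sum_congr rfl fun m _ => ?_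
    rw [one_pow]; ring
  rw [h]
  exact integrable_finsetSum _ fun m _ => (f.integrable_pow_mul volume m).const_mul _

lemma aux_tri {V : Type*} [NormedAddCommGroup V] [NormedSpace ℝ V] (x e : V) (t : ℝ) :
    1 + ‖x + t • e‖ ≤ (1 + ‖x‖) * ((1 + ‖e‖) * (1 + |t|)) := by
  have h : ‖x + t • e‖ ≤ ‖x‖ + |t| * ‖e‖ := by
    refine (norm_add_le _ _).trans ?_
    rw [norm_smul, Real.norm_eq_abs]
  have h1 := norm_nonneg x
  have h2 := norm_nonneg e
  have h3 := abs_nonneg t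
  nlinarith [mul_nonneg h1 h2, mul_nonneg h1 h3, mul_nonneg h2 h3, mul_nonneg h1 (mul_nonneg h2 h3)]

lemma aux_growth {n : ℕ} (u : RV n → ℂ) (hu : Function.HasTemperateGrowth u) :
    ∃ C : ℝ, 0 ≤ C ∧ ∃ k : ℕ, ∀ x, ‖u x‖ ≤ C * (1 + ‖x‖) ^ k := by
  obtain ⟨k, C, h⟩ := hu.2 0
  refine ⟨C, ?_, k, fun x => by simpa using h x⟩
  have := (norm_nonneg _).trans (h 0)
  simpa using this

lemma aux_FTint (n : ℕ) (φ : SchwartzMap (RV n) ℂ) (x : RV n) :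
    Integrable fun ξ : RV n => Complex.exp (-Complex.I * ((∑ i, ξ i * x i : ℝ) : ℂ)) * φ ξ := by
  refine φ.integrable.norm.mono' (Continuous.aestronglyMeasurable ?_) ?_
  · have := φ.continuous
    fun_prop
  · refine Filter.Eventually.of_forall fun ξ => ?_
    rw [norm_mul, show (-Complex.I * ((∑ i, ξ i * x i : ℝ) : ℂ)) =
        ((-(∑ i, ξ i * x i) : ℝ) : ℂ) * I by push_cast; ring,
        Complex.norm_exp_ofReal_mul_I, one_mul]

lemma aux_FTshift (n : ℕ) (φ φ' : SchwartzMap (RV n) ℂ) (ψ : SchwartzMap ℝ ℂ) (χ : ℝ → ℂ)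
    (hχ : ∀ s : ℝ, ∫ t : ℝ, Complex.exp (Complex.I * ((s * t : ℝ) : ℂ)) * ψ t = χ s)
    (e : RV n) (hφ' : ∀ ξ : RV n, φ' ξ = χ (∑ i, ξ i * e i) * φ ξ) (x : RV n) :
    ∫ t : ℝ, ψ t * FT n φ (x - t • e) = FT n φ' x := by
  have hint : Integrable (Function.uncurry fun (t : ℝ) (ξ : RV n) =>
      ψ t * (Complex.exp (-Complex.I * ((∑ i, ξ i * (x - t • e) i : ℝ) : ℂ)) * φ ξ))
      (volume.prod volume) := by
    refine ((ψ.integrable (μ := volume)).norm.mul_prod (φ.integrable (μ := volume)).norm).mono'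
      (Continuous.aestronglyMeasurable ?_) ?_
    · have := φ.continuous
      have := ψ.continuous
      simp only [Function.uncurry_def, Pi.sub_apply, Pi.smul_apply]
      fun_prop
    · refine Filter.Eventually.of_forall fun ⟨t, ξ⟩ => ?_
      simp only [Function.uncurry]
      rw [norm_mul, norm_mul, show (-Complex.I * ((∑ i, ξ i * (x - t • e) i : ℝ) : ℂ)) =
        ((-(∑ i, ξ i * (x - t • e) i) : ℝ) : ℂ) * I by push_cast; ring,
        Complex.norm_exp_ofReal_mul_I, one_mul]
  simp only [FT]
  simp_rw [← integral_const_mul]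
  rw [integral_integral_swap hint]
  congr 1
  ext ξ
  rw [hφ', ← hχ, ← integral_mul_const, ← integral_const_mul]
  congr 1
  ext t
  have : (∑ i, ξ i * (x - t • e) i) = (∑ i, ξ i * x i) - (∑ i, ξ i * e i) * t := by
    rw [Finset.sum_mul, ← Finset.sum_sub_distrib]
    refine Finset.sum_congr rfl fun i _ => ?_
    simp only [Pi.sub_apply, Pi.smul_apply, smul_eq_mul]; ring
  rw [this]
  rw [show (-I * (((∑ i, ξ i * x i) - (∑ i, ξ i * e i) * t : ℝ) : ℂ)) =
    (-I * ((∑ i, ξ i * x i : ℝ) : ℂ)) + I * (((∑ i, ξ i * e i) * t : ℝ) : ℂ) by push_cast; ring,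
    Complex.exp_add]
  ring

lemma aux_cont {n : ℕ} (u : RV n → ℂ) (hu : Function.HasTemperateGrowth u) (ψ : SchwartzMap ℝ ℂ)
    (e : RV n) : Continuous fun x => ∫ t : ℝ, u (x + t • e) * ψ t := by
  obtain ⟨C, hC, k, hk⟩ := aux_growth u hu
  have huc : Continuous u := hu.1.continuous
  have hψc := ψ.continuous
  rw [continuous_iff_continuousAt]
  intro x0
  refine continuousAt_of_dominated (bound := fun t => (C * ((1 + (‖x0‖ + 1)) * (1 + ‖e‖)) ^ k) * ((1 + ‖t‖) ^ k * ‖ψ t‖))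
    ?_ ?_ ((aux_int ψ k).const_mul _) ?_
  · exact Filter.Eventually.of_forall fun x => Continuous.aestronglyMeasurable (by fun_prop)
  · filter_upwards [Metric.ball_mem_nhds x0 one_pos] with x hx
    refine Filter.Eventually.of_forall fun t => ?_
    have hx' : ‖x‖ ≤ ‖x0‖ + 1 := by
      have := norm_le_norm_add_norm_sub' x x0
      rw [mem_ball_iff_norm] at hx
      linarith
    rw [norm_mul]
    calc ‖u (x + t • e)‖ * ‖ψ t‖ ≤ (C * (1 + ‖x + t • e‖) ^ k) * ‖ψ t‖ := by gcongr; exact hk _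
      _ ≤ (C * ((1 + ‖x‖) * ((1 + ‖e‖) * (1 + |t|))) ^ k) * ‖ψ t‖ := by gcongr; exact aux_tri x e t
      _ ≤ (C * ((1 + (‖x0‖ + 1)) * ((1 + ‖e‖) * (1 + |t|))) ^ k) * ‖ψ t‖ := by gcongr
      _ = _ := by rw [Real.norm_eq_abs, mul_pow, mul_pow, mul_pow]; ring
  · exact Filter.Eventually.of_forall fun t => by fun_prop

lemma aux_rep {n : ℕ} (u : RV n → ℂ) (hu : Function.HasTemperateGrowth u) (ψ : SchwartzMap ℝ ℂ)
    (χ : ℝ → ℂ) (hχt : χ.HasTemperateGrowth)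
    (hχ : ∀ s : ℝ, ∫ t : ℝ, Complex.exp (Complex.I * ((s * t : ℝ) : ℂ)) * ψ t = χ s)
    (e : RV n)
    (hS : ∀ φ φ' : SchwartzMap (RV n) ℂ, (∀ ξ : RV n, φ' ξ = (1 - χ (∑ i, ξ i * e i)) * φ ξ) →
      ∫ x, u x * FT n φ' x = 0) (y : RV n) :
    u y = ∫ t : ℝ, u (y + t • e) * ψ t := by
  obtain ⟨C, hC, k, hk⟩ := aux_growth u hu
  have huc : Continuous u := hu.1.continuous
  have hψc := ψ.continuous
  have hHc := aux_cont u hu ψ e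
  set H := fun x => ∫ t : ℝ, u (x + t • e) * ψ t with hH
  suffices h : ∀ᵐ x, u x - H x = 0 by
    have h2 : (fun x => u x - H x) = fun _ => 0 := by
      exact (Continuous.ae_eq_iff_eq (volume : Measure (RV n)) (huc.sub hHc) continuous_const).1 h
    exact sub_eq_zero.1 (congrFun h2 y)
  apply ae_eq_zero_of_integral_contDiff_smul_eq_zero
  · exact (huc.sub hHc).locallyIntegrable
  intro g0 hg0 hg0c
  have hg₁ : HasCompactSupport (Complex.ofRealCLM ∘ g0) := hg0c.comp_left rfl
  have hg₂ : ContDiff ℝ (⊤ : ℕ∞) (Complex.ofRealCLM ∘ g0) := Complex.ofRealCLM.contDiff.comp hg0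
  let G : SchwartzMap (RV n) ℂ := hg₁.toSchwartzMap hg₂
  have hGg : ∀ x, G x = (g0 x : ℂ) := fun x => rfl
  have hGc : Continuous G := G.continuous
  obtain ⟨φ, hφ⟩ := aux_FT n G
  let l : RV n →L[ℝ] ℝ := ∑ i, e i • ContinuousLinearMap.proj (R := ℝ) (φ := fun _ : Fin n => ℝ) i
  have hl : ∀ ξ : RV n, l ξ = ∑ i, ξ i * e i := by
    intro ξ
    simp [l, mul_comm]
  have hχl : Function.HasTemperateGrowth fun ξ : RV n => χ (∑ i, ξ i * e i) := by
    have := hχt.comp l.hasTemperateGrowth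
    convert this using 2 with ξ
    simp [hl]
  let φ1 : SchwartzMap (RV n) ℂ := SchwartzMap.smulLeftCLM ℂ (fun ξ : RV n => χ (∑ i, ξ i * e i)) φ
  have hφ1 : ∀ ξ, φ1 ξ = χ (∑ i, ξ i * e i) * φ ξ := fun ξ =>
    SchwartzMap.smulLeftCLM_apply_apply hχl φ ξ
  have hP : Integrable (Function.uncurry fun (x : RV n) (t : ℝ) => u (x + t • e) * ψ t * G x)
      (volume.prod volume) := by
    refine (((aux_int G k).mul_prod (aux_int ψ k)).const_mul (C * (1 + ‖e‖) ^ k)).mono'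
      (Continuous.aestronglyMeasurable ?_) ?_
    · simp only [Function.uncurry_def]; fun_prop
    · refine Filter.Eventually.of_forall fun ⟨x, t⟩ => ?_
      simp only [Function.uncurry, norm_mul]
      calc ‖u (x + t • e)‖ * ‖ψ t‖ * ‖G x‖ ≤ (C * (1 + ‖x + t • e‖) ^ k) * ‖ψ t‖ * ‖G x‖ := by
            gcongr; exact hk _
        _ ≤ (C * ((1 + ‖x‖) * ((1 + ‖e‖) * (1 + |t|))) ^ k) * ‖ψ t‖ * ‖G x‖ := by
            gcongr; exact aux_tri x e t
        _ = _ := by rw [Real.norm_eq_abs, mul_pow, mul_pow]; ring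
  have hQ : Integrable (Function.uncurry fun (x : RV n) (t : ℝ) => u x * (ψ t * G (x - t • e)))
      (volume.prod volume) := by
    obtain ⟨D, hD, hDG⟩ := aux_decay G (k + (n + 1))
    have hi : Integrable (fun x : RV n => ((1 + ‖x‖) ^ (n + 1))⁻¹) := by
      have := integrable_one_add_norm (E := RV n) (μ := volume) (r := ((n + 1 : ℕ) : ℝ)) (by simp)
      convert this using 2 with x
      rw [Real.rpow_neg (by positivity), Real.rpow_natCast]
    refine ((hi.mul_prod (aux_int ψ (k + (n + 1)))).const_mul
      (C * D * (1 + ‖e‖) ^ (k + (n + 1)))).mono' (Continuous.aestronglyMeasurable ?_) ?_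
    · simp only [Function.uncurry_def]; fun_prop
    · refine Filter.Eventually.of_forall fun ⟨x, t⟩ => ?_
      simp only [Function.uncurry, norm_mul]
      have h1 := aux_tri (x - t • e) e t
      rw [sub_add_cancel] at h1
      have h2 : (1 + ‖x‖) ^ (k + (n + 1)) * ‖G (x - t • e)‖ ≤
          D * ((1 + ‖e‖) * (1 + |t|)) ^ (k + (n + 1)) := by
        calc (1 + ‖x‖) ^ (k + (n + 1)) * ‖G (x - t • e)‖ ≤
              ((1 + ‖x - t • e‖) * ((1 + ‖e‖) * (1 + |t|))) ^ (k + (n + 1)) * ‖G (x - t • e)‖ := by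
              gcongr
          _ = ((1 + ‖x - t • e‖) ^ (k + (n + 1)) * ‖G (x - t • e)‖) *
              ((1 + ‖e‖) * (1 + |t|)) ^ (k + (n + 1)) := by rw [mul_pow]; ring
          _ ≤ _ := by gcongr; exact hDG _
      have h3 : (1 + ‖x‖) ^ k * ‖G (x - t • e)‖ ≤
          D * ((1 + ‖e‖) * (1 + |t|)) ^ (k + (n + 1)) * ((1 + ‖x‖) ^ (n + 1))⁻¹ := by
        rw [← div_eq_mul_inv, le_div_iff₀ (by positivity)]
        refine le_trans (le_of_eq ?_) h2
        rw [pow_add]; ring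
      calc ‖u x‖ * (‖ψ t‖ * ‖G (x - t • e)‖) ≤ (C * (1 + ‖x‖) ^ k) * (‖ψ t‖ * ‖G (x - t • e)‖) := by
            gcongr; exact hk _
        _ = C * ‖ψ t‖ * ((1 + ‖x‖) ^ k * ‖G (x - t • e)‖) := by ring
        _ ≤ C * ‖ψ t‖ * (D * ((1 + ‖e‖) * (1 + |t|)) ^ (k + (n + 1)) * ((1 + ‖x‖) ^ (n + 1))⁻¹) := by
            gcongr
        _ = _ := by rw [Real.norm_eq_abs, mul_pow]; ring
  have hsh : ∀ x, u x * ∫ t, ψ t * G (x - t • e) = u x * FT n φ1 x := by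
    intro x
    rw [← aux_FTshift n φ φ1 ψ χ hχ e hφ1 x]
    simp_rw [hφ]
  have e1 : ∫ x, H x * G x = ∫ x, u x * FT n φ1 x := by
    calc ∫ x, H x * G x = ∫ x, ∫ t, u (x + t • e) * ψ t * G x := by
          simp_rw [hH, integral_mul_const]
      _ = ∫ t, ∫ x, u (x + t • e) * ψ t * G x := integral_integral_swap hP
      _ = ∫ t, ∫ x, u x * (ψ t * G (x - t • e)) := by
          congr 1; ext t
          rw [← integral_add_right_eq_self (fun x => u x * (ψ t * G (x - t • e))) (t • e)]
          congr 1; ext x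
          rw [add_sub_cancel_right]; ring
      _ = ∫ x, ∫ t, u x * (ψ t * G (x - t • e)) := (integral_integral_swap hQ).symm
      _ = _ := by
          congr 1; ext x
          rw [integral_const_mul, hsh]
  have i1 : Integrable fun x => u x * FT n φ1 x := by
    have := hQ.integral_prod_left
    simp only [Function.uncurry, integral_const_mul, hsh] at this
    exact this
  have i2 : Integrable fun x => u x * G x := by
    refine ((aux_int G k).const_mul C).mono' (Continuous.aestronglyMeasurable (by fun_prop)) ?_
    refine Filter.Eventually.of_forall fun x => ?_
    rw [norm_mul, ← mul_assoc]
    gcongr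
    exact hk x
  have i3 : Integrable fun x => H x * G x := by
    have := hP.integral_prod_left
    simp only [Function.uncurry, integral_mul_const] at this
    exact this
  calc ∫ x, g0 x • (u x - H x) = ∫ x, (u x * G x - H x * G x) := by
        congr 1; ext x
        rw [hGg, Complex.real_smul]; ring
    _ = (∫ x, u x * G x) - ∫ x, u x * FT n φ1 x := by rw [integral_sub i2 i3, e1]
    _ = ∫ x, u x * FT n (φ - φ1 : SchwartzMap (RV n) ℂ) x := by
        rw [← integral_sub i2 i1]
        congr 1; ext x
        rw [← hφ, ← mul_sub]
        congr 1
        simp only [FT]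
        rw [← integral_sub (aux_FTint n φ x) (aux_FTint n φ1 x)]
        congr 1; ext ξ
        simp only [sub_apply]; ring
    _ = 0 := by
        apply hS φ
        intro ξ
        rw [sub_apply, hφ1]; ring

/-- one-variable quasi-norm appearing in `mixAux` -/
def auxN (p : ℝ≥0∞) (M : ℝ → ℝ≥0∞) : ℝ≥0∞ :=
  if p = ∞ then essSup M volume else (∫⁻ t : ℝ, (M t) ^ p.toReal) ^ (1 / p.toReal)

lemma auxN_le (p : ℝ≥0∞) (hp : 0 < p) (K : ℝ≥0∞) (hK : K ≠ ∞) (M M' : ℝ → ℝ≥0∞)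
    (h : ∀ t, M t ≤ K * M' t) : auxN p M ≤ K * auxN p M' := by
  unfold auxN
  split_ifs with hpt
  · rw [← ENNReal.essSup_const_mul]
    exact essSup_mono_ae (Filter.Eventually.of_forall h)
  · have hp' := ENNReal.toReal_pos hp.ne' hpt
    calc (∫⁻ t : ℝ, (M t) ^ p.toReal) ^ (1 / p.toReal)
        ≤ (∫⁻ t : ℝ, K ^ p.toReal * (M' t) ^ p.toReal) ^ (1 / p.toReal) := by
          gcongr with t
          rw [← ENNReal.mul_rpow_of_nonneg _ _ hp'.le]
          gcongr
          exact h t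
      _ = _ := by
          rw [lintegral_const_mul' _ _ (ENNReal.rpow_ne_top_of_nonneg hp'.le hK),
            ENNReal.mul_rpow_of_nonneg _ _ (by positivity), ← ENNReal.rpow_mul,
            mul_one_div_cancel hp'.ne', ENNReal.rpow_one]

lemma aux_mix_succ (n : ℕ) (p : Fin n → ℝ≥0∞) (l : ℕ) (h : l < n) (F : RV n → ℝ≥0∞) (x : RV n) :
    mixAux n p (l + 1) F x =
      auxN (p ⟨l, h⟩) (fun t => mixAux n p l F (Function.update x ⟨l, h⟩ t)) := by
  simp only [mixAux]
  rw [dif_pos h]; rfl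

lemma aux_mix_congr (n : ℕ) (p : Fin n → ℝ≥0∞) (F : RV n → ℝ≥0∞) (l : ℕ) : l ≤ n → ∀ x x' : RV n,
    (∀ i : Fin n, l ≤ i → x i = x' i) → mixAux n p l F x = mixAux n p l F x' := by
  induction l with
  | zero =>
    intro _ x x' h
    rw [show x = x' from funext fun i => h i (Nat.zero_le _)]
  | succ l ih =>
    intro hl x x' h
    rw [aux_mix_succ n p l hl, aux_mix_succ n p l hl]
    congr 1
    ext t
    apply ih (by omega)
    intro i hi
    by_cases hil : i = ⟨l, hl⟩
    · subst hil; simp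
    · rw [Function.update_of_ne hil, Function.update_of_ne hil]
      apply h
      have : (i : ℕ) ≠ l := fun h => hil (Fin.ext h)
      omega

lemma aux_mix (n : ℕ) (p : Fin n → ℝ≥0∞) (hp : ∀ i, 0 < p i) (F : RV n → ℝ≥0∞) (c : ℝ≥0∞) (hc : c ≠ ∞)
    (hF : ∀ i z, F z ≤ c * auxN (p i) (fun t => F (Function.update z i t))) (l : ℕ) : l ≤ n → ∀ z,
    F z ≤ c ^ l * mixAux n p l F z := by
  induction l with
  | zero => intro _ z; simp [mixAux]
  | succ l ih =>
    intro hl z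
    rw [aux_mix_succ n p l hl]
    refine (hF ⟨l, hl⟩ z).trans ?_
    rw [pow_succ', mul_assoc]
    gcongr
    exact auxN_le _ (hp _) _ (ENNReal.pow_ne_top hc) _ _ fun t => ih (by omega) _

lemma aux_slice {n : ℕ} (q : Fin n → ℝ≥0∞) (r : Fin n → ℝ) 
    (ψ : SchwartzMap ℝ ℂ) (i : Fin n) (c : ℝ)
    (hc : ∀ f : ℝ → ℂ, Continuous f →
      (∃ A : ℝ, ∃ m : ℕ, ∀ t, ‖f t‖ ≤ A * (1 + |t|) ^ m) →
      (∀ y, f y = ∫ t, f (y - t) * ψ t) → ∀ y,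
      ENNReal.ofReal (‖f y‖ / (1 + |y|) ^ r i) ≤ ENNReal.ofReal c *
        auxN (q i) (fun t : ℝ => ENNReal.ofReal (‖f t‖ / (1 + |t|) ^ r i)))
    (L : Fin n → ℝ) (u : RV n → ℂ) (hu : Function.HasTemperateGrowth u)
    (hrep : ∀ y : RV n, u y = ∫ t : ℝ, u (y + t • Pi.single i (L i)) * ψ t) (x z : RV n) :
    ENNReal.ofReal (‖u (fun k => x k - L k * z k)‖ / ∏ l, (1 + |z l|) ^ (r l)) ≤
      ENNReal.ofReal c * auxN (q i) (fun t =>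
        ENNReal.ofReal (‖u (fun k => x k - L k * Function.update z i t k)‖ /
          ∏ l, (1 + |Function.update z i t l|) ^ (r l))) := by
  classical
  set e : RV n := Pi.single i (L i) with he
  set P0 : RV n := fun k => x k - L k * Function.update z i 0 k with hP0
  have hpt : ∀ t : ℝ, (fun k => x k - L k * Function.update z i t k) = P0 + (-t) • e := by
    intro t
    ext k
    by_cases hk : k = i
    · subst hk; simp [hP0, he]; ring
    · simp [hP0, he, hk]
  set W : ℝ := ∏ l ∈ Finset.univ.erase i, (1 + |z l|) ^ (r l) with hW
  have hW0 : 0 < W := Finset.prod_pos fun l _ => by positivity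
  have hprod : ∀ t : ℝ, ∏ l, (1 + |Function.update z i t l|) ^ (r l) = (1 + |t|) ^ r i * W := by
    intro t
    rw [← Finset.mul_prod_erase _ _ (Finset.mem_univ i), Function.update_self]
    congr 1
    refine Finset.prod_congr rfl fun l hl => ?_
    rw [Function.update_of_ne (Finset.ne_of_mem_erase hl)]
  obtain ⟨C, hC, k, hk⟩ := aux_growth u hu
  have huc : Continuous u := hu.1.continuous
  let f : ℝ → ℂ := fun t => ((W⁻¹ : ℝ) : ℂ) * u (P0 + (-t) • e)
  have hfn : ∀ t, ‖f t‖ = W⁻¹ * ‖u (P0 + (-t) • e)‖ := by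
    intro t
    simp only [f, norm_mul, Complex.norm_real, Real.norm_eq_abs, abs_of_pos (inv_pos.2 hW0)]
  have key : ∀ t, ENNReal.ofReal (‖u (fun k => x k - L k * Function.update z i t k)‖ /
          ∏ l, (1 + |Function.update z i t l|) ^ (r l)) =
      ENNReal.ofReal (‖f t‖ / (1 + |t|) ^ r i) := by
    intro t
    rw [hprod, hpt, hfn]
    congr 1
    field_simp
  have h := hc f (by fun_prop) ⟨W⁻¹ * (C * ((1 + ‖P0‖) * (1 + ‖e‖)) ^ k), k, fun t => by
    rw [hfn, mul_assoc]
    gcongr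
    refine (hk _).trans ?_
    rw [mul_assoc, ← mul_pow]
    gcongr
    have := aux_tri P0 e (-t)
    rwa [abs_neg, ← mul_assoc] at this⟩ (fun y => by
      simp only [f]
      rw [hrep (P0 + (-y) • e), ← integral_const_mul]
      congr 1; ext t
      rw [mul_assoc]
      congr 3
      rw [add_assoc, ← add_smul]
      congr 2
      ring) (z i)
  simp_rw [key]
  rw [← key (z i), Function.update_eq_self] at h
  exact h

/-- Proposition 3.1 (pointwise estimate of the maximal function). -/
theorem stmt12 (n : ℕ) (hn : 1 ≤ n) (a : Fin n → ℝ) (ha : ∀ i, 1 ≤ a i)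
    (q : Fin n → ℝ≥0∞) (hq : ∀ i, 0 < q i) (r : Fin n → ℝ) (hr : ∀ l, 0 < r l) :
    ∃ c : ℝ, 0 < c ∧
      ∀ R : ℝ, 0 < R → ∀ j : ℕ, 1 ≤ j →
      ∀ u : RV n → ℂ, Function.HasTemperateGrowth u → SpecCond n a R j u →
      ∀ x : RV n,
        ustar n a r R j u x
          ≤ ENNReal.ofReal c *
            mixedNorm n q
              (fun z =>
                ENNReal.ofReal
                  (‖u (fun i => x i - R⁻¹ * (2:ℝ) ^ (-(j:ℝ) * a i) * z i)‖ /
                    ∏ l, (1 + |z l|) ^ (r l))) := by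
  obtain ⟨ψ, χ, hχt, hχ1, hχ⟩ := aux_psi
  choose c hc0 hc using fun i => aux_oneD ψ (q i) (hq i) (r i) (hr i)
  have hcs : ∀ i, c i ≤ 1 + ∑ k, c k := fun i => by
    have := Finset.single_le_sum (f := c) (fun k _ => (hc0 k).le) (Finset.mem_univ i)
    linarith
  have hcp : 0 < 1 + ∑ k, c k := by
    have := Finset.sum_nonneg (f := c) (s := Finset.univ) (fun k _ => (hc0 k).le)
    linarith
  refine ⟨(1 + ∑ k, c k) ^ n, by positivity, fun R hR j hj u hu hspec x => ?_⟩
  have h2 : ∀ i, 0 < (2:ℝ) ^ ((j:ℝ) * a i) := fun i => by positivity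
  have hinv : ∀ i, R⁻¹ * (2:ℝ) ^ (-(j:ℝ) * a i) = (R * (2:ℝ) ^ ((j:ℝ) * a i))⁻¹ := by
    intro i
    rw [neg_mul, Real.rpow_neg (by norm_num), mul_inv]
  have hrep : ∀ i, ∀ y : RV n,
      u y = ∫ t : ℝ, u (y + t • Pi.single i (R⁻¹ * (2:ℝ) ^ (-(j:ℝ) * a i))) * ψ t := by
    intro i
    refine aux_rep u hu ψ χ hχt hχ _ ?_
    intro φ φ' hφ'
    apply hspec
    have hs : ∀ ξ : RV n, ∑ k, ξ k * (Pi.single i (R⁻¹ * (2:ℝ) ^ (-(j:ℝ) * a i)) : RV n) k =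
        ξ i * (R * (2:ℝ) ^ ((j:ℝ) * a i))⁻¹ := by
      intro ξ
      rw [Finset.sum_eq_single i (fun k _ hk => by simp [hk]) (by simp)]
      rw [Pi.single_eq_same, hinv]
    have hL : 0 < R * (2:ℝ) ^ ((j:ℝ) * a i) := mul_pos hR (h2 i)
    rw [Set.eq_empty_iff_forall_notMem]
    rintro ξ ⟨h1, hbox⟩
    have hb : |ξ i| < 2 * (R * (2:ℝ) ^ ((j:ℝ) * a i)) := by
      have := hbox i
      linarith
    have hopen : IsOpen {η : RV n | |η i| < 2 * (R * (2:ℝ) ^ ((j:ℝ) * a i))} :=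
      isOpen_lt (by fun_prop) continuous_const
    refine (notMem_tsupport_iff_eventuallyEq.2 ?_) h1
    filter_upwards [hopen.mem_nhds hb] with η hη
    rw [hφ', hs, hχ1, sub_self, zero_mul, Pi.zero_apply]
    rw [abs_mul, abs_of_pos (inv_pos.2 hL), ← div_eq_mul_inv, div_le_iff₀ hL]
    exact le_of_lt hη
  set F : RV n → ℝ≥0∞ := fun z => ENNReal.ofReal
                  (‖u (fun i => x i - R⁻¹ * (2:ℝ) ^ (-(j:ℝ) * a i) * z i)‖ /
                    ∏ l, (1 + |z l|) ^ (r l)) with hF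
  have hstep : ∀ i z, F z ≤ ENNReal.ofReal (1 + ∑ k, c k) *
      auxN (q i) (fun t => F (Function.update z i t)) := by
    intro i z
    refine (aux_slice q r ψ i (c i) (fun f h1 h2 h3 => hc i f h1 h2 h3)
      (fun i => R⁻¹ * (2:ℝ) ^ (-(j:ℝ) * a i)) u hu (hrep i) x z).trans ?_
    gcongr
    exact hcs i
  refine iSup_le fun y => ?_
  have hfin := aux_mix n q hq F _ ENNReal.ofReal_ne_top hstep n le_rfl
    (fun l => R * (2:ℝ) ^ ((j:ℝ) * a l) * (x l - y l))
  rw [aux_mix_congr n q F n le_rfl _ (fun _ => 0) (fun i hi => absurd i.2 (not_lt.2 hi)),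
    ← ENNReal.ofReal_pow hcp.le] at hfin
  refine le_trans (le_of_eq ?_) hfin
  simp only [hF]
  congr 2
  · congr 2
    ext i
    rw [hinv, ← mul_assoc, inv_mul_cancel₀ (mul_pos hR (h2 i)).ne']
    ring
  · refine Finset.prod_congr rfl fun l _ => ?_
    rw [abs_mul, abs_of_pos (mul_pos hR (h2 l))]
end
end
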